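/- The second group homology of the pure round twin group Π_6 with coefficients in the trivial module ℤ is a free abelian group of rank 14, i.e. H_2(Π_6; ℤ) ≅ ℤ^14. -/

import Mathlib

/-!
# The second homology of the pure round twin group on six strands

Write a configuration as the image of a real sextuple under the coordinatewise exponential. The
evenly spaced configurations are the centres of *chambers*: labelled cyclic orders of the six
points. Crossing a codimension-one wall exchanges the points at two adjacent places `t`, `t + 1`,
and since triple coincidences are removed, two walls meet only when they belong to disjoint pairs
of places, in which case the two exchanges commute. Lifting to homotopy classes of paths from the
basepoint gives a free `Π₆`-set `Cfg.V` whose elements are pairs of a label `Fin 6 ≃ ZMod 6` and a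
path class, with involutions `s t` for `t : ZMod 6`, commuting when `t`, `t'` are not adjacent, and
a rotation `rot` of the names of the places. The structure `TwinSystem` records exactly what is
used about this set, and everything else is algebra.

*The complex.* Consider the two-dimensional complex whose edges are the chambers, whose vertices
are the orbits of the triples `s 0, s 2, s 4` and `s 1, s 3, s 5` (a chamber joins its two orbits),
and whose squares are the orbits of the commuting pairs `s t, s (t + 3)`, all of this up to the
rotation of names. Its chains are finitely supported functions on the set of chambers with
prescribed behaviour under the symmetries: `TwinSystem.C0`, `C1`, `C2`, with differentials `A3` and
`D`. They form an exact sequence `0 → C2 → C1 → C0 → ℤ → 0`.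

*Exactness.* In the numbers game on a hexagon a state is a function `ZMod 6 → ℤ`; firing the place
`t` negates the number at `t` and adds twice its old value to both neighbours. A state reached from
the all-ones state has no zero entry, no two adjacent negative entries, and positive sum
(`GInv`). Assigning states to chambers so that `s t` fires `t` therefore gives each chamber a
positive integral height, such that every `s t` changes the height and the descents at a chamber
commute. Injectivity of `D` (`inj2`) and exactness in the middle (`exact1`) follow by looking at the
largest height in the support of a chain, in the second case by induction on it.
Exactness at `C0` (`exact0`) is connectedness.

*The states exist.* The states have to be well defined on path classes. The rule that firing
accompanies the exchange of two coinciding points defines transition functions over the cover of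
the space of sextuples by open stars `Cfg.N z` (motions under which no two distinct points meet),
hence a covering space `Cfg.E` (`M_comp` is the cocycle condition). Monodromy lifts a path class
uniquely, and the state at the end of the lift is the state of the chamber (`lev_s`). Connectedness
(`conn`) follows by subdividing a path into pieces contained in stars, all chambers of one star
being joined by exchanges inside it (`hub`).

*The homology.* Each `C_i` is an equivariant retract of the permutation module `ℤ[V]`, since the
symmetry groups of the labels, of orders 24, 6 and 8, have fundamental domains (`dom0`, `dom1`,
`dom2`); hence the `C_i` are acyclic, and their coinvariants embed in the functions on labels.
Comparing with the bar complex (`Bar.homology_equiv`) identifies `H₂(Π₆; ℤ)` with the group `Z2`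
of cellular 2-cycles of the quotient complex, which has 30 vertices, 120 edges and 90 squares.

*The rank.* The squares can be ordered so that every square beyond the first fourteen lies on an
edge whose other two squares come earlier; so a cycle is determined by its values on the first
fourteen, and fourteen explicit cycles dual to these show that the values are arbitrary
(`Z2_equiv`).
-/

open scoped Real

noncomputable section

/-- The configuration space `Q_{n+1}` of `n+1` ordered points on the circle,
no three of which coincide, with the last point fixed at `1`. -/
def QSet (n : ℕ) : Set (Fin (n + 1) → Circle) :=
  {z | z (Fin.last n) = 1 ∧
    ∀ i j k : Fin (n + 1), i ≠ j → i ≠ k → j ≠ k → ¬(z i = z j ∧ z i = z k)}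

/-- The basepoint of `Q_{n+1}`: the `j`-th coordinate is `exp (2 π i j / (n+1))` (`1`-based). -/
def q0 (n : ℕ) : Fin (n + 1) → Circle :=
  fun j => Circle.exp (2 * π * (j.val + 1) / (n + 1))

theorem q0_injective (n : ℕ) : Function.Injective (q0 n) := by
  intro i j h
  simp only [q0] at h; rw [Circle.exp_eq_exp] at h
  obtain ⟨m, hm⟩ := h
  have hn : (0:ℝ) < (n:ℝ) + 1 := by positivity
  have hpi : (0:ℝ) < π := Real.pi_pos
  have h2 : ((i.val : ℝ) + 1) = ((j.val : ℝ) + 1) + m * ((n:ℝ) + 1) := by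
    field_simp at hm
    nlinarith [hm]
  have h3 : ((i.val : ℤ) + 1) = ((j.val : ℤ) + 1) + m * ((n:ℤ) + 1) := by
    exact_mod_cast h2
  have hi := i.isLt
  have hj := j.isLt
  have hb : m * ((n:ℤ) + 1) = (i.val : ℤ) - (j.val : ℤ) := by linarith [h3]
  have hi' : (i.val : ℤ) ≤ n := by exact_mod_cast Nat.lt_succ_iff.mp hi
  have hj' : (j.val : ℤ) ≤ n := by exact_mod_cast Nat.lt_succ_iff.mp hj
  have hi0 : (0:ℤ) ≤ i.val := Int.natCast_nonneg _
  have hj0 : (0:ℤ) ≤ j.val := Int.natCast_nonneg _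
  have hm0 : m = 0 := by
    rcases lt_trichotomy m 0 with hm' | hm' | hm'
    · have h1 : m ≤ -1 := by omega
      nlinarith
    · exact hm'
    · have h1 : 1 ≤ m := hm'
      nlinarith
  subst hm0
  simp only [zero_mul] at hb
  have : (i.val : ℤ) = j.val := by omega
  exact Fin.ext (by exact_mod_cast this)

theorem q0_mem (n : ℕ) : q0 n ∈ QSet n := by
  constructor
  · show Circle.exp _ = 1
    have : 2 * π * ((Fin.last n).val + 1) / (n + 1) = 2 * π := by
      simp [Fin.last]
      field_simp
    rw [this, Circle.exp_two_pi]
  · intro i j k hij _ _ h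
    exact hij (q0_injective n h.1)

/-- The basepoint as an element of `Q_{n+1}`. -/
def Qbase (n : ℕ) : QSet n := ⟨q0 n, q0_mem n⟩

/-- The degree-2 differential `d₂ : ℤ[G²] → ℤ[G]` of the inhomogeneous bar complex of a
group `G` with trivial coefficients `ℤ`: `d₂[g|h] = [h] - [gh] + [g]`. -/
def barD2 (G : Type*) [Group G] : ((G × G) →₀ ℤ) →ₗ[ℤ] (G →₀ ℤ) :=
  Finsupp.lift (G →₀ ℤ) ℤ (G × G)
    (fun p => Finsupp.single p.2 1 - Finsupp.single (p.1 * p.2) 1 + Finsupp.single p.1 1)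

/-- The degree-3 differential `d₃ : ℤ[G³] → ℤ[G²]` of the inhomogeneous bar complex of a
group `G` with trivial coefficients `ℤ`:
`d₃[g|h|k] = [h|k] - [gh|k] + [g|hk] - [g|h]`. -/
def barD3 (G : Type*) [Group G] : ((G × G × G) →₀ ℤ) →ₗ[ℤ] ((G × G) →₀ ℤ) :=
  Finsupp.lift ((G × G) →₀ ℤ) ℤ (G × G × G)
    (fun t => Finsupp.single (t.2.1, t.2.2) 1 - Finsupp.single (t.1 * t.2.1, t.2.2) 1
      + Finsupp.single (t.1, t.2.1 * t.2.2) 1 - Finsupp.single (t.1, t.2.1) 1)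

/-- The second group homology `H₂(G; ℤ)` of `G` with trivial coefficients `ℤ`, computed as
`ker d₂ / im d₃` in the inhomogeneous bar complex. -/
def GroupHomology2 (G : Type*) [Group G] : Type _ :=
  ↥(LinearMap.ker (barD2 G)) ⧸
    (LinearMap.range (barD3 G)).comap (LinearMap.ker (barD2 G)).subtype

instance (G : Type*) [Group G] : AddCommGroup (GroupHomology2 G) :=
  inferInstanceAs (AddCommGroup (_ ⧸ _))

/-! ### Cycles of the quotient square complex -/

/-- Labels: bijections from the six points to the six places `ZMod 6` of a cyclic order. -/
abbrev Lab := Fin 6 ≃ ZMod 6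

namespace Num

/-- A word of six letters, read along the cyclic order. -/
abbrev Word := Fin 6 × Fin 6 × Fin 6 × Fin 6 × Fin 6 × Fin 6

/-- Rotation of a word by one place. -/
def rotW : Word → Word | (a, b, c, d, e, f) => (f, a, b, c, d, e)
/-- Exchange of the letters at places `0, 1`. -/
def swA : Word → Word | (a, b, c, d, e, f) => (b, a, c, d, e, f)
/-- Exchange of the letters at places `3, 4`. -/
def swB : Word → Word | (a, b, c, d, e, f) => (a, b, c, e, d, f)
/-- Rotation of a word by three places. -/
def flipW : Word → Word | (a, b, c, d, e, f) => (d, e, f, a, b, c)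

/-- The code of the representative of the class of a word under `swA`, `swB`, `flipW`. -/
def code : Word → ℕ
  | (a, b, c, d, e, f) =>
    let p := min a.1 b.1
    let q := max a.1 b.1
    let r := min d.1 e.1
    let s := max d.1 e.1
    if p < r then ((((p * 6 + q) * 6 + c) * 6 + r) * 6 + s) * 6 + f
    else ((((r * 6 + s) * 6 + f) * 6 + p) * 6 + q) * 6 + c

/-- The sign relating a word to its representative. -/
def sgn : Word → ℤ
  | (a, b, _, d, e, _) =>
    (if a < b then 1 else -1) * (if d < e then 1 else -1) *
      (if min a.1 b.1 < min d.1 e.1 then 1 else -1)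

/-- The codes of the 90 classes, in an order in which each class beyond the first fourteen lies
on an edge whose two other classes come earlier. -/
def codes : List ℕ :=
  [2470, 7045, 3305, 5505, 22165, 3525, 2475, 2050, 4280, 3730, 6790, 22380, 7225, 2945, 4820,
   14820, 14130, 12630, 5685, 5540, 13100, 15210, 5065, 15000, 13065, 2265, 11770, 14350, 4210,
   2120, 6320, 19615, 6315, 6975, 12840, 5755, 10510, 2510, 6830, 5900, 11370, 2045, 3735,
   6970, 7400, 3310, 5020, 4390, 4385, 3515, 11190, 19830, 14355, 2950, 5675, 13055, 4495,
   21090, 5885, 7435, 2985, 11765, 6795, 7395, 5935, 13710, 12270, 4805, 10545, 3805, 2255,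
   2300, 20875, 11580, 5030, 5495, 7180, 6355, 11840, 1905, 1865, 10505, 4205, 1870, 7190,
   4855, 13530, 14390, 3415, 3595]

/-- The values of the fourteen basis functions on the 90 classes (ordered as in `codes`), packed in
base nine with offset four. -/
def vals : List ℕ :=
  [11438396227481, 11438396227489, 11438396227561, 11438396228209, 11438396234041,
   11438396286529, 11438396758921, 11438401010449, 11438439274201, 11438783647969,
   11441883011881, 11469777287089, 11720825763961, 13980262055809, 11438396234122,
   11438396226752, 11438396221567, 11438439274282, 11407402588360, 11438396292442,
   11155966691000, 11438352649318, 11155971473969, 11438396162517, 11438396227470,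
   11438439280114, 11438395696048, 11438396227552, 11438396758193, 8896487352349,
   11441883076844, 11441883017795, 11434909443807, 11155972005401, 11438391509473,
   11438008806981, 14262729856122, 8896492135319, 11438008742028, 11438401476200,
   14262686277888, 11437965695226, 11437965163866, 11403528384198, 11434478373551,
   11438434556194, 11124590945792, 11469346223475, 11720825763889, 11438401482761,
   8931398242433, 11473264070843, 11438401482770, 8896492070356, 11473302399557,
   11438821976693, 11438826759662, 11720825704840, 11434478380112, 11473307654847,
   13980256741479, 11437965754347, 11752201508440, 11755731876917, 11469771972688,
   11438401547723, 11434478910825, 11124973111000, 8931403562686, 13949306746203,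
   11438778392689, 13980256735566, 11752206757888, 8927485709476, 11752245086602,
   11434483693794, 11755693607252, 11403528384188, 11403485331554, 8927486240189,
   8927911458032, 8927911464602, 11125016164363, 13949306746213, 11124973117561,
   11406972115227, 11124973111729, 11407402647481, 13948880997000, 8927916713322]

/-- The position of a class in the list `codes`. -/
def rk (w : Word) : ℕ := codes.idxOf (code w)

/-- The `i`-th basis function. -/
def bas (i : Fin 14) (w : Word) : ℤ :=
  sgn w * (((vals.getD (rk w) 0 / 9 ^ i.1 % 9 : ℕ) : ℤ) - 4)

/-- One word in each of the first fourteen classes. -/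
def seed (i : Fin 14) : Word :=
  [(0, 1, 5, 2, 3, 4), (0, 5, 2, 3, 4, 1), (0, 2, 3, 1, 4, 5), (0, 4, 1, 2, 5, 3), (2, 5, 0, 3,
   4, 1), (0, 2, 4, 1, 5, 3), (0, 1, 5, 2, 4, 3), (0, 1, 3, 2, 5, 4), (0, 3, 1, 4, 5, 2), (0,
   2, 5, 1, 3, 4), (0, 5, 1, 2, 3, 4), (2, 5, 1, 3, 4, 0), (0, 5, 3, 2, 4, 1), (0, 2, 1, 3, 4,
   5)].getD i.1 (0, 0, 0, 0, 0, 0)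

/-- Decidable check of a property of all words without repeated letters. -/
theorem all_words (P : Word → Prop)
    (h : ∀ a b, a ≠ b → ∀ c, a ≠ c → b ≠ c → ∀ d, a ≠ d → b ≠ d → c ≠ d →
      ∀ e, a ≠ e → b ≠ e → c ≠ e → d ≠ e → ∀ f, a ≠ f → b ≠ f → c ≠ f → d ≠ f → e ≠ f →
        P (a, b, c, d, e, f)) (v : Lab) :
    P (v.symm 0, v.symm 1, v.symm 2, v.symm 3, v.symm 4, v.symm 5) := by
  have inj : ∀ {i j : ZMod 6}, i ≠ j → v.symm i ≠ v.symm j := fun h h' => h (v.symm.injective h')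
  exact h _ _ (inj (by decide)) _ (inj (by decide)) (inj (by decide)) _ (inj (by decide))
    (inj (by decide)) (inj (by decide)) _ (inj (by decide)) (inj (by decide)) (inj (by decide))
    (inj (by decide)) _ (inj (by decide)) (inj (by decide)) (inj (by decide)) (inj (by decide))
    (inj (by decide))

/-- The basis functions satisfy the cycle relations at the word `w`. -/
def BasProp (w : Word) : Prop :=
  ∀ i, bas i (swA w) = - bas i w ∧ bas i (swB w) = - bas i w ∧
    bas i (flipW w) = - bas i w ∧ bas i w - bas i (rotW w) + bas i (rotW (rotW w)) = 0

instance : DecidablePred BasProp := fun w => by unfold BasProp; infer_instance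

/-- The word `w` lies in the class of a seed, or on an edge whose other two squares come earlier. -/
def RkProp (w : Word) : Prop :=
  (∃ i, seed i = w ∨ seed i = swA w ∨ seed i = swB w ∨ seed i = swA (swB w) ∨
    seed i = flipW w ∨ seed i = swA (flipW w) ∨ seed i = swB (flipW w) ∨
    seed i = swA (swB (flipW w))) ∨
  (rk (rotW w) < rk w ∧ rk (rotW (rotW w)) < rk w) ∨
  (rk (rotW (swA w)) < rk w ∧ rk (rotW (rotW (swA w))) < rk w) ∨
  (rk (rotW (swB w)) < rk w ∧ rk (rotW (rotW (swB w))) < rk w) ∨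
  (rk (rotW (swA (swB w))) < rk w ∧ rk (rotW (rotW (swA (swB w)))) < rk w)

set_option synthInstance.maxSize 2000 in
instance : DecidablePred RkProp := fun w => by unfold RkProp; infer_instance

set_option synthInstance.maxSize 2000 in
set_option synthInstance.maxHeartbeats 400000 in
theorem bas_props : ∀ a b, a ≠ b → ∀ c, a ≠ c → b ≠ c → ∀ d, a ≠ d → b ≠ d → c ≠ d →
      ∀ e, a ≠ e → b ≠ e → c ≠ e → d ≠ e → ∀ f, a ≠ f → b ≠ f → c ≠ f → d ≠ f → e ≠ f →
        BasProp (a, b, c, d, e, f) := by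
  decide +kernel

set_option synthInstance.maxSize 2000 in
set_option synthInstance.maxHeartbeats 400000 in
theorem rk_props : ∀ a b, a ≠ b → ∀ c, a ≠ c → b ≠ c → ∀ d, a ≠ d → b ≠ d → c ≠ d →
      ∀ e, a ≠ e → b ≠ e → c ≠ e → d ≠ e → ∀ f, a ≠ f → b ≠ f → c ≠ f → d ≠ f → e ≠ f →
        RkProp (a, b, c, d, e, f) := by
  decide +kernel

theorem bas_seed : ∀ i j, bas i (seed j) = if i = j then 1 else 0 := by decide +kernel

/-- The word read off a label. -/
def wordOf (v : Lab) : Word :=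
  (v.symm 0, v.symm 1, v.symm 2, v.symm 3, v.symm 4, v.symm 5)

theorem wordOf_injective : Function.Injective wordOf := by
  intro v w h
  simp only [wordOf, Prod.mk.injEq] at h
  obtain ⟨h0, h1, h2, h3, h4, h5⟩ := h
  have : v.symm = w.symm := by
    ext1 i
    fin_cases i <;> assumption
  simpa using congrArg Equiv.symm this

end Num

/-- The label obtained by exchanging the places `t` and `t + 1`. -/
def labS (t : ZMod 6) (v : Lab) : Lab := v.trans (Equiv.swap t (t + 1))

/-- The label obtained by rotating all places by one. -/
def labR (v : Lab) : Lab := v.trans (Equiv.addRight 1)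

/-- The group of 2-cycles of the quotient square complex, as functions on labels. -/
def Z2 : AddSubgroup (Lab → ℤ) where
  carrier := {f | ∀ v, f (labS 0 v) = - f v ∧ f (labS 3 v) = - f v ∧
    f (labR (labR (labR v))) = - f v ∧ f v - f (labR v) + f (labR (labR v)) = 0}
  zero_mem' := by intro v; simp
  add_mem' := by
    intro a b ha hb v
    obtain ⟨h1, h2, h3, h4⟩ := ha v
    obtain ⟨k1, k2, k3, k4⟩ := hb v
    simp only [Pi.add_apply]
    refine ⟨?_, ?_, ?_, ?_⟩ <;> linarith
  neg_mem' := by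
    intro a ha v
    obtain ⟨h1, h2, h3, h4⟩ := ha v
    simp only [Pi.neg_apply]
    refine ⟨?_, ?_, ?_, ?_⟩ <;> linarith

namespace Num

theorem wordOf_labR (v : Lab) : wordOf (labR v) = rotW (wordOf v) := by
  simp only [wordOf, labR, rotW, Equiv.symm_trans_apply, Equiv.addRight_symm, Equiv.coe_addRight]
  rfl

theorem wordOf_labS0 (v : Lab) : wordOf (labS 0 v) = swA (wordOf v) := by
  simp only [wordOf, labS, swA, Equiv.symm_trans_apply, Equiv.symm_swap]
  rfl

theorem wordOf_labS3 (v : Lab) : wordOf (labS 3 v) = swB (wordOf v) := by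
  simp only [wordOf, labS, swB, Equiv.symm_trans_apply, Equiv.symm_swap]
  rfl

theorem wordOf_labR3 (v : Lab) : wordOf (labR (labR (labR v))) = flipW (wordOf v) := by
  simp only [wordOf_labR]; rfl

/-- The label of the `i`-th seed word. -/
def seedLab (i : Fin 14) : Lab where
  invFun t := ![(seed i).1, (seed i).2.1, (seed i).2.2.1, (seed i).2.2.2.1, (seed i).2.2.2.2.1,
    (seed i).2.2.2.2.2] t
  toFun a := if a = (seed i).1 then 0 else if a = (seed i).2.1 then 1 else
    if a = (seed i).2.2.1 then 2 else if a = (seed i).2.2.2.1 then 3 else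
    if a = (seed i).2.2.2.2.1 then 4 else 5
  left_inv := by
    revert i; unfold Function.LeftInverse; decide +kernel
  right_inv := by
    revert i; unfold Function.RightInverse Function.LeftInverse; decide +kernel

theorem wordOf_seedLab (i : Fin 14) : wordOf (seedLab i) = seed i := rfl

/-- A cycle vanishing on the seeds vanishes: the seeds determine the other classes one at a time,
in the order given by `rk`. -/
theorem Z2_eq_zero {f : Lab → ℤ} (hf : f ∈ Z2) (h0 : ∀ i, f (seedLab i) = 0) (v : Lab) :
    f v = 0 := by
  have key : ∀ n v, rk (wordOf v) = n → f v = 0 := by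
    intro n
    induction n using Nat.strong_induction_on with
    | _ n ih =>
    intro v hv
    have hA : ∀ v, f (labS 0 v) = 0 → f v = 0 := fun v h => by
      have := (hf v).1; omega
    have hB : ∀ v, f (labS 3 v) = 0 → f v = 0 := fun v h => by
      have := (hf v).2.1; omega
    have hR : ∀ v, f (labR (labR (labR v))) = 0 → f v = 0 := fun v h => by
      have := (hf v).2.2.1; omega
    have sd : ∀ i v, seed i = wordOf v → f v = 0 := by
      intro i v h
      rw [← wordOf_seedLab] at h
      rw [← wordOf_injective h]; exact h0 i
    have st : ∀ u, rk (rotW (wordOf u)) < rk (wordOf v) ∧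
        rk (rotW (rotW (wordOf u))) < rk (wordOf v) → f u = 0 := by
      rintro u ⟨h1, h2⟩
      rw [← wordOf_labR, hv] at h1
      rw [← wordOf_labR, ← wordOf_labR, hv] at h2
      have := (hf u).2.2.2
      rw [ih _ h1 _ rfl, ih _ h2 _ rfl] at this
      omega
    have := all_words RkProp rk_props v
    rw [RkProp, show (v.symm 0, v.symm 1, v.symm 2, v.symm 3, v.symm 4, v.symm 5) = wordOf v from rfl]
      at this
    simp only [← wordOf_labS0, ← wordOf_labS3, ← wordOf_labR3] at this
    rcases this with ⟨i, h | h | h | h | h | h | h | h⟩ | h | h | h | h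
    · exact sd i _ h
    · exact hA _ (sd i _ h)
    · exact hB _ (sd i _ h)
    · exact hB _ (hA _ (sd i _ h))
    · exact hR _ (sd i _ h)
    · exact hR _ (hA _ (sd i _ h))
    · exact hR _ (hB _ (sd i _ h))
    · exact hR _ (hB _ (hA _ (sd i _ h)))
    · exact st _ h
    · exact hA _ (st _ h)
    · exact hB _ (st _ h)
    · exact hB _ (hA _ (st _ h))
  exact key _ v rfl

theorem bas_mem (i : Fin 14) : (fun v => bas i (wordOf v)) ∈ Z2 := by
  intro v
  have := all_words BasProp bas_props v i
  simp only [wordOf_labS0, wordOf_labS3, wordOf_labR3]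
  simp only [wordOf_labR]
  exact this

end Num

/-- Evaluation at the seeds identifies the group of 2-cycles with `ℤ¹⁴`. -/
theorem Z2_equiv : Nonempty (Z2 ≃+ (Fin 14 → ℤ)) := by
  let φ : Z2 →+ (Fin 14 → ℤ) :=
    { toFun := fun f i => f.1 (Num.seedLab i)
      map_zero' := rfl
      map_add' := fun _ _ => rfl }
  refine ⟨AddEquiv.ofBijective φ ⟨?_, ?_⟩⟩
  · rw [injective_iff_map_eq_zero]
    intro f hf
    ext v
    exact Num.Z2_eq_zero f.2 (fun i => congrFun hf i) v
  · intro c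
    refine ⟨∑ i, c i • ⟨_, Num.bas_mem i⟩, ?_⟩
    ext j
    show (∑ i, c i • (⟨_, Num.bas_mem i⟩ : Z2)).1 (Num.seedLab j) = c j
    rw [AddSubgroup.val_finsetSum, Finset.sum_apply]
    simp [Num.wordOf_seedLab, Num.bas_seed]

/-! ### Low-degree bar chains with coefficients -/

namespace Bar

variable {G : Type} [Group G]
variable {M N L : Type} [AddCommGroup M] [AddCommGroup N] [AddCommGroup L]

/-- The differential `d₁ : M[G] → M` of the inhomogeneous chains with coefficients in `M`. -/
def d1 (ρ : Representation ℤ G M) : (G →₀ M) →ₗ[ℤ] M :=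
  Finsupp.lsum ℤ fun g => ρ g⁻¹ - LinearMap.id

/-- The differential `d₂ : M[G²] → M[G]`. -/
def d2 (ρ : Representation ℤ G M) : (G × G →₀ M) →ₗ[ℤ] (G →₀ M) :=
  Finsupp.lsum ℤ fun p =>
    Finsupp.lsingle p.2 ∘ₗ ρ p.1⁻¹ - Finsupp.lsingle (p.1 * p.2) + Finsupp.lsingle p.1

/-- The differential `d₃ : M[G³] → M[G²]`. -/
def d3 (ρ : Representation ℤ G M) : (G × G × G →₀ M) →ₗ[ℤ] (G × G →₀ M) :=
  Finsupp.lsum ℤ fun t =>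
    Finsupp.lsingle (t.2.1, t.2.2) ∘ₗ ρ t.1⁻¹ - Finsupp.lsingle (t.1 * t.2.1, t.2.2)
      + Finsupp.lsingle (t.1, t.2.1 * t.2.2) - Finsupp.lsingle (t.1, t.2.1)

@[simp] theorem d1_single (ρ : Representation ℤ G M) (g : G) (m : M) :
    d1 ρ (Finsupp.single g m) = ρ g⁻¹ m - m := by
  simp [d1]

@[simp] theorem d2_single (ρ : Representation ℤ G M) (g h : G) (m : M) :
    d2 ρ (Finsupp.single (g, h) m) =
      Finsupp.single h (ρ g⁻¹ m) - Finsupp.single (g * h) m + Finsupp.single g m := by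
  simp [d2]

@[simp] theorem d3_single (ρ : Representation ℤ G M) (g h k : G) (m : M) :
    d3 ρ (Finsupp.single (g, h, k) m) =
      Finsupp.single (h, k) (ρ g⁻¹ m) - Finsupp.single (g * h, k) m
        + Finsupp.single (g, h * k) m - Finsupp.single (g, h) m := by
  simp [d3]

theorem d1_d2 (ρ : Representation ℤ G M) (x : G × G →₀ M) : d1 ρ (d2 ρ x) = 0 := by
  induction x using Finsupp.induction_linear with
  | zero => simp
  | add x y hx hy => simp [hx, hy]
  | single p m =>
    obtain ⟨g, h⟩ := p
    simp [map_sub, map_add, mul_inv_rev, map_mul]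

theorem d2_d3 (ρ : Representation ℤ G M) (x : G × G × G →₀ M) : d2 ρ (d3 ρ x) = 0 := by
  induction x using Finsupp.induction_linear with
  | zero => simp
  | add x y hx hy => simp [hx, hy]
  | single p m =>
    obtain ⟨g, h, k⟩ := p
    simp only [d3_single, map_sub, map_add, d2_single, mul_inv_rev, map_mul, Module.End.mul_apply,
      mul_assoc]
    abel

/-- Application of a coefficient homomorphism to chains. -/
abbrev mp (α : Type) (φ : M →ₗ[ℤ] N) : (α →₀ M) →ₗ[ℤ] (α →₀ N) := Finsupp.mapRange.linearMap φ

/-- A homomorphism commuting with the two actions of `G`. -/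
def Equivar (ρ : Representation ℤ G M) (σ : Representation ℤ G N) (φ : M →ₗ[ℤ] N) : Prop :=
  ∀ g m, φ (ρ g m) = σ g (φ m)

variable {ρ : Representation ℤ G M} {σ : Representation ℤ G N} {φ : M →ₗ[ℤ] N}

theorem d1_mp (h : Equivar ρ σ φ) (x : G →₀ M) : d1 σ (mp G φ x) = φ (d1 ρ x) := by
  induction x using Finsupp.induction_linear with
  | zero => simp
  | add x y hx hy => simp only [map_add, hx, hy]
  | single g m => simp [h _ _]

theorem d2_mp (h : Equivar ρ σ φ) (x : G × G →₀ M) :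
    d2 σ (mp (G × G) φ x) = mp G φ (d2 ρ x) := by
  induction x using Finsupp.induction_linear with
  | zero => simp
  | add x y hx hy => simp only [map_add, hx, hy]
  | single p m => obtain ⟨g, k⟩ := p; simp [map_sub, map_add, h _ _]

theorem d3_mp (h : Equivar ρ σ φ) (x : G × G × G →₀ M) :
    d3 σ (mp (G × G × G) φ x) = mp (G × G) φ (d3 ρ x) := by
  induction x using Finsupp.induction_linear with
  | zero => simp
  | add x y hx hy => simp only [map_add, hx, hy]
  | single p m => obtain ⟨g, k, l⟩ := p; simp [map_sub, map_add, h _ _]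

theorem mp_exact {α : Type} {ψ : L →ₗ[ℤ] M} (h : ∀ m, φ m = 0 → ∃ l, ψ l = m) (x : α →₀ M)
    (hx : mp α φ x = 0) : ∃ y, mp α ψ y = x := by
  classical
  have h' : ∀ m, ∃ l, (m = 0 → l = 0) ∧ (φ m = 0 → ψ l = m) := fun m => by
    by_cases hm : m = 0
    · exact ⟨0, fun _ => rfl, fun _ => by simp [hm]⟩
    · by_cases hm' : φ m = 0
      · obtain ⟨l, hl⟩ := h m hm'
        exact ⟨l, fun h => absurd h hm, fun _ => hl⟩
      · exact ⟨0, fun _ => rfl, fun h => absurd h hm'⟩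
  choose c hc0 hc using h'
  refine ⟨x.mapRange c (hc0 0 rfl), ?_⟩
  ext a
  have := DFunLike.congr_fun hx a
  simp only [Finsupp.mapRange.linearMap_apply, Finsupp.mapRange_apply, Finsupp.zero_apply] at this ⊢
  exact hc _ this

theorem mp_comp_zero {α : Type} {ψ : L →ₗ[ℤ] M} (h : ∀ l, φ (ψ l) = 0) (x : α →₀ L) :
    mp α φ (mp α ψ x) = 0 := by
  ext a; simp [h]

/-! ### Comparison of the bar complex with a resolution of length two -/

theorem barD2_mp {ε : M →ₗ[ℤ] ℤ} (h : ∀ g m, ε (ρ g m) = ε m) (x : G × G →₀ M) :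
    barD2 G (mp (G × G) ε x) = mp G ε (d2 ρ x) := by
  induction x using Finsupp.induction_linear with
  | zero => simp
  | add x y hx hy => simp only [map_add, hx, hy]
  | single p m => obtain ⟨g, k⟩ := p; simp [map_sub, map_add, h, barD2, smul_sub, smul_add]

theorem barD3_mp {ε : M →ₗ[ℤ] ℤ} (h : ∀ g m, ε (ρ g m) = ε m) (x : G × G × G →₀ M) :
    barD3 G (mp (G × G × G) ε x) = mp (G × G) ε (d3 ρ x) := by
  induction x using Finsupp.induction_linear with
  | zero => simp
  | add x y hx hy => simp only [map_add, hx, hy]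
  | single p m => obtain ⟨g, k, l⟩ := p; simp [map_sub, map_add, h, barD3, smul_sub, smul_add]

/-- Two surjective homomorphisms with the same kernel have isomorphic targets. -/
theorem equiv_of_ker_eq {T A B : Type} [AddCommGroup T] [AddCommGroup A] [AddCommGroup B]
    (f : T →+ A) (g : T →+ B) (hf : Function.Surjective f) (hg : Function.Surjective g)
    (h : ∀ t, f t = 0 ↔ g t = 0) : Nonempty (A ≃+ B) := by
  have hk : f.ker = g.ker := by ext t; exact h t
  exact ⟨(QuotientAddGroup.quotientKerEquivOfSurjective f hf).symm.trans
    ((QuotientAddGroup.quotientAddEquivOfEq hk).trans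
      (QuotientAddGroup.quotientKerEquivOfSurjective g hg))⟩

/-- Let `0 → P₂ → P₁ → P₀ → ℤ → 0` be exact and `G`-equivariant, with the homology of `G` in `P₀`
(degrees 1, 2) and in `P₁` (degree 1) vanishing. If `q : P₂ → A` is a model of the coinvariants of
`P₂`, and `Z` is the subgroup of `q`-classes mapping to zero in the coinvariants of `P₁`, then
`H₂(G; ℤ) ≅ Z`. Both sides are quotients, with the same kernel, of the group of triples
`(y, z, w) ∈ P₀[G²] × P₁[G] × P₂` with `d₂ y = ∂₁ z` and `d₁ z = ∂₂ w`. -/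
theorem homology_equiv {P0 P1 P2 A : Type} [AddCommGroup P0] [AddCommGroup P1] [AddCommGroup P2]
    [AddCommGroup A] (ρ0 : Representation ℤ G P0) (ρ1 : Representation ℤ G P1)
    (ρ2 : Representation ℤ G P2) (ε : P0 →ₗ[ℤ] ℤ) (p1 : P1 →ₗ[ℤ] P0) (p2 : P2 →ₗ[ℤ] P1)
    (hε : ∀ g m, ε (ρ0 g m) = ε m) (hp1 : Equivar ρ1 ρ0 p1) (hp2 : Equivar ρ2 ρ1 p2)
    (surj : Function.Surjective ε) (zero0 : ∀ m, ε (p1 m) = 0)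
    (ex0 : ∀ m, ε m = 0 → ∃ l, p1 l = m) (zero1 : ∀ m, p1 (p2 m) = 0)
    (ex1 : ∀ m, p1 m = 0 → ∃ l, p2 l = m) (inj : ∀ m, p2 m = 0 → m = 0)
    (ac01 : ∀ x, d1 ρ0 x = 0 → ∃ y, d2 ρ0 y = x) (ac02 : ∀ x, d2 ρ0 x = 0 → ∃ y, d3 ρ0 y = x)
    (ac11 : ∀ x, d1 ρ1 x = 0 → ∃ y, d2 ρ1 y = x)
    (q : P2 →ₗ[ℤ] A) (Z : AddSubgroup A) (hq : ∀ w, q w = 0 ↔ ∃ x, d1 ρ2 x = w)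
    (hZ : ∀ w, q w ∈ Z ↔ ∃ x, d1 ρ1 x = p2 w) (hs : ∀ z ∈ Z, ∃ w, q w = z) :
    Nonempty (GroupHomology2 G ≃+ Z) := by
  let T : AddSubgroup ((G × G →₀ P0) × (G →₀ P1) × P2) :=
    { carrier := {t | d2 ρ0 t.1 = mp G p1 t.2.1 ∧ d1 ρ1 t.2.1 = p2 t.2.2}
      zero_mem' := by simp
      add_mem' := by
        rintro a b ⟨h1, h2⟩ ⟨h3, h4⟩
        exact ⟨by simp only [Prod.fst_add, Prod.snd_add, map_add, h1, h3],
          by simp only [Prod.fst_add, Prod.snd_add, map_add, h2, h4]⟩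
      neg_mem' := by
        rintro a ⟨h1, h2⟩
        exact ⟨by simp only [Prod.fst_neg, Prod.snd_neg, map_neg, h1],
          by simp only [Prod.fst_neg, Prod.snd_neg, map_neg, h2]⟩ }
  have hcyc : ∀ t : T, mp (G × G) ε t.1.1 ∈ LinearMap.ker (barD2 G) := fun t => by
    rw [LinearMap.mem_ker, barD2_mp hε, t.2.1]
    exact mp_comp_zero zero0 _
  let cyc : T →+ LinearMap.ker (barD2 G) :=
    { toFun := fun t => ⟨mp (G × G) ε t.1.1, hcyc t⟩
      map_zero' := by ext1; simp
      map_add' := fun a b => Subtype.ext (map_add (mp (G × G) ε) a.1.1 b.1.1) }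
  let f : T →+ GroupHomology2 G :=
    (Submodule.mkQ ((LinearMap.range (barD3 G)).comap
      (LinearMap.ker (barD2 G)).subtype)).toAddMonoidHom.comp cyc
  have hf0 : ∀ t : T, f t = 0 ↔ ∃ x, barD3 G x = mp (G × G) ε t.1.1 := fun t =>
    Submodule.Quotient.mk_eq_zero _
  let g : T →+ Z :=
    { toFun := fun t => ⟨q t.1.2.2, (hZ _).2 ⟨_, t.2.2⟩⟩
      map_zero' := by ext1; simp
      map_add' := fun a b => by ext1; simp }
  have hg0 : ∀ t : T, g t = 0 ↔ q t.1.2.2 = 0 := fun t => by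
    rw [← Subtype.coe_inj]; rfl
  refine equiv_of_ker_eq f g ?_ ?_ ?_
  · intro c
    obtain ⟨⟨x, hx⟩, rfl⟩ := Submodule.Quotient.mk_surjective _ c
    obtain ⟨y, hy⟩ : ∃ y, mp (G × G) ε y = x :=
      Finsupp.mapRange_surjective _ (map_zero ε) surj x
    have h1 : mp G ε (d2 ρ0 y) = 0 := by rw [← barD2_mp hε, hy]; exact hx
    obtain ⟨z, hz⟩ := mp_exact ex0 _ h1
    have h2 : p1 (d1 ρ1 z) = 0 := by rw [← d1_mp hp1, hz, d1_d2]
    obtain ⟨w, hw⟩ := ex1 _ h2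
    refine ⟨⟨(y, z, w), hz.symm, hw.symm⟩, ?_⟩
    subst hy
    rfl
  · rintro ⟨a, ha⟩
    obtain ⟨w, rfl⟩ := hs a ha
    obtain ⟨z, hz⟩ := (hZ w).1 ha
    obtain ⟨y, hy⟩ := ac01 (mp G p1 z) (by rw [d1_mp hp1, hz, zero1])
    exact ⟨⟨(y, z, w), hy, hz⟩, rfl⟩
  · rintro ⟨⟨y, z, w⟩, h1, h2⟩
    rw [hf0, hg0]
    simp only at h1 h2 ⊢
    rw [hq]
    constructor
    · rintro ⟨x, hx⟩
      obtain ⟨y', rfl⟩ : ∃ y, mp (G × G × G) ε y = x :=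
        Finsupp.mapRange_surjective _ (map_zero ε) surj x
      rw [barD3_mp hε] at hx
      obtain ⟨z', hz'⟩ := mp_exact ex0 (y - d3 ρ0 y') (by rw [map_sub, hx, sub_self])
      have h3 : mp G p1 (z - d2 ρ1 z') = 0 := by
        rw [map_sub, ← d2_mp hp1, hz', map_sub, d2_d3, h1]; simp
      obtain ⟨w', hw'⟩ := mp_exact ex1 _ h3
      refine ⟨w', ?_⟩
      have h4 : p2 (w - d1 ρ2 w') = 0 := by
        rw [map_sub, ← d1_mp hp2, hw', map_sub, d1_d2, h2]; simp
      exact (sub_eq_zero.1 (inj _ h4)).symm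
    · rintro ⟨w', rfl⟩
      obtain ⟨z', hz'⟩ := ac11 (z - mp G p2 w') (by rw [map_sub, d1_mp hp2, h2, sub_self])
      obtain ⟨y', hy'⟩ := ac02 (y - mp (G × G) p1 z') (by
        rw [map_sub, d2_mp hp1, hz', map_sub, mp_comp_zero zero1, h1]; simp)
      refine ⟨mp _ ε y', ?_⟩
      rw [barD3_mp hε, hy', map_sub, mp_comp_zero zero0, sub_zero]

end Bar

/-! ### Chains on a free `G`-set -/

namespace Bar

variable {G V : Type} [Group G] [MulAction G V]

section
variable (r : V → G) (hr : ∀ (g : G) v, r (g • v) = g * r v)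

/-- Degree-zero part of the contraction of the chains of a free `G`-set `V` given by an equivariant
map `r : V → G`. -/
def h0 : (V →₀ ℤ) →ₗ[ℤ] (G →₀ (V →₀ ℤ)) :=
  Finsupp.lsum ℤ fun v => (Finsupp.lsingle (r v)⁻¹) ∘ₗ (Finsupp.lsingle ((r v)⁻¹ • v))

/-- Degree-one part of the contraction. -/
def h1 : (G →₀ (V →₀ ℤ)) →ₗ[ℤ] (G × G →₀ (V →₀ ℤ)) :=
  Finsupp.lsum ℤ fun g => Finsupp.lsum ℤ fun v =>
    (Finsupp.lsingle ((r v)⁻¹, g)) ∘ₗ (Finsupp.lsingle ((r v)⁻¹ • v))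

/-- Degree-two part of the contraction. -/
def h2 : (G × G →₀ (V →₀ ℤ)) →ₗ[ℤ] (G × G × G →₀ (V →₀ ℤ)) :=
  Finsupp.lsum ℤ fun p => Finsupp.lsum ℤ fun v =>
    (Finsupp.lsingle ((r v)⁻¹, p.1, p.2)) ∘ₗ (Finsupp.lsingle ((r v)⁻¹ • v))

@[simp] theorem h0_single (v : V) (n : ℤ) : h0 r (Finsupp.single v n) =
    Finsupp.single (r v)⁻¹ (Finsupp.single ((r v)⁻¹ • v) n) := by
  simp only [h0, Finsupp.lsum_single, LinearMap.comp_apply, Finsupp.lsingle_apply]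

@[simp] theorem h1_single (g : G) (v : V) (n : ℤ) :
    h1 r (Finsupp.single g (Finsupp.single v n)) =
      Finsupp.single ((r v)⁻¹, g) (Finsupp.single ((r v)⁻¹ • v) n) := by
  simp only [h1, Finsupp.lsum_single, LinearMap.comp_apply, Finsupp.lsingle_apply]

@[simp] theorem h2_single (g k : G) (v : V) (n : ℤ) :
    h2 r (Finsupp.single (g, k) (Finsupp.single v n)) =
      Finsupp.single ((r v)⁻¹, g, k) (Finsupp.single ((r v)⁻¹ • v) n) := by
  simp only [h2, Finsupp.lsum_single, LinearMap.comp_apply, Finsupp.lsingle_apply]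

/-- The permutation representation of `G` on `ℤ[V]`. -/
def perm (G V : Type) [Group G] [MulAction G V] : Representation ℤ G (V →₀ ℤ) where
  toFun g := Finsupp.lmapDomain ℤ ℤ (g • ·)
  map_one' := by
    apply Finsupp.lhom_ext
    intro v n
    simp [Finsupp.mapDomain_single]
  map_mul' g h := by
    apply Finsupp.lhom_ext
    intro v n
    simp [mul_smul, Finsupp.mapDomain_single]

@[simp] theorem perm_single (g : G) (v : V) (n : ℤ) :
    perm G V g (Finsupp.single v n) = Finsupp.single (g • v) n :=
  Finsupp.mapDomain_single

theorem perm_apply (g : G) (F : V →₀ ℤ) (v : V) : perm G V g F v = F (g⁻¹ • v) := by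
  have := Finsupp.mapDomain_apply (MulAction.injective g) F (g⁻¹ • v)
  rwa [smul_inv_smul] at this

include hr

theorem contract1 (x : G →₀ (V →₀ ℤ)) :
    d2 (perm G V) (h1 r x) + h0 r (d1 (perm G V) x) = x := by
  induction x using Finsupp.induction_linear with
  | zero => simp
  | add x y hx hy => 
    simp only [map_add]; nth_rw 3 [← hx]; nth_rw 3 [← hy]; abel
  | single g m =>
    induction m using Finsupp.induction_linear with
    | zero => simp
    | add x y hx hy =>
      simp only [Finsupp.single_add, map_add]; nth_rw 3 [← hx]; nth_rw 3 [← hy]; abel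
    | single v n =>
      simp only [h1_single, d2_single, d1_single, perm_single, map_sub,
        h0_single, mul_smul, smul_inv_smul, hr, mul_inv_rev, inv_inv]
      abel

theorem contract2 (x : G × G →₀ (V →₀ ℤ)) :
    d3 (perm G V) (h2 r x) + h1 r (d2 (perm G V) x) = x := by
  induction x using Finsupp.induction_linear with
  | zero => simp
  | add x y hx hy => 
    simp only [map_add]; nth_rw 3 [← hx]; nth_rw 3 [← hy]; abel
  | single p m =>
    obtain ⟨g, k⟩ := p
    induction m using Finsupp.induction_linear with
    | zero => simp
    | add x y hx hy =>
      simp only [Finsupp.single_add, map_add]; nth_rw 3 [← hx]; nth_rw 3 [← hy]; abel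
    | single v n =>
      simp only [h2_single, h1_single, d2_single, d3_single, perm_single,
        map_sub, map_add, mul_smul, smul_inv_smul, hr, mul_inv_rev, inv_inv]
      abel

theorem perm_ac1 (x : G →₀ (V →₀ ℤ)) (hx : d1 (perm G V) x = 0) : ∃ y, d2 (perm G V) y = x :=
  ⟨h1 r x, by have := contract1 r hr x; rwa [hx, map_zero, add_zero] at this⟩

theorem perm_ac2 (x : G × G →₀ (V →₀ ℤ)) (hx : d2 (perm G V) x = 0) : ∃ y, d3 (perm G V) y = x :=
  ⟨h2 r x, by have := contract2 r hr x; rwa [hx, map_zero, add_zero] at this⟩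

end

/-- The kernel of the push-forward along the orbit map is the augmentation part of `ℤ[V]`. -/
theorem perm_ac0 (r : V → G) {X : Type} (lab : V → X) (sec : X → V)
    (hsec : ∀ v, (r v)⁻¹ • v = sec (lab v))
    (x : V →₀ ℤ) (hx : Finsupp.mapDomain lab x = 0) : ∃ y, d1 (perm G V) y = x := by
  refine ⟨h0 r x, ?_⟩
  have key : d1 (perm G V) (h0 r x) = x - Finsupp.mapDomain sec (Finsupp.mapDomain lab x) := by
    clear hx
    induction x using Finsupp.induction_linear with
    | zero => simp
    | add x y hx hy => simp only [map_add, hx, hy, Finsupp.mapDomain_add]; abel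
    | single v n =>
      simp only [h0_single, d1_single, perm_single, inv_inv, Finsupp.mapDomain_single,
        smul_inv_smul, ← hsec]
  rw [key, hx]; simp

section Retract

variable {M P : Type} [AddCommGroup M] [AddCommGroup P] {ρ : Representation ℤ G M}
  {σ : Representation ℤ G P} {i : P →ₗ[ℤ] M} {p : M →ₗ[ℤ] P}

theorem retract_ac1 (hi : Equivar σ ρ i) (hp : Equivar ρ σ p) (hpi : ∀ m, p (i m) = m)
    (h : ∀ x, d1 ρ x = 0 → ∃ y, d2 ρ y = x) (x : G →₀ P) (hx : d1 σ x = 0) :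
    ∃ y, d2 σ y = x := by
  obtain ⟨y, hy⟩ := h (mp G i x) (by rw [d1_mp hi, hx, map_zero])
  exact ⟨mp _ p y, by rw [d2_mp hp, hy]; ext1 a; simp [hpi]⟩

theorem retract_ac2 (hi : Equivar σ ρ i) (hp : Equivar ρ σ p) (hpi : ∀ m, p (i m) = m)
    (h : ∀ x, d2 ρ x = 0 → ∃ y, d3 ρ y = x) (x : G × G →₀ P) (hx : d2 σ x = 0) :
    ∃ y, d3 σ y = x := by
  obtain ⟨y, hy⟩ := h (mp _ i x) (by rw [d2_mp hi, hx, map_zero])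
  exact ⟨mp _ p y, by rw [d3_mp hp, hy]; ext1 a; simp [hpi]⟩

theorem retract_ac0 (hp : Equivar ρ σ p) (hpi : ∀ m, p (i m) = m) {x : P}
    (h : ∃ y, d1 ρ y = i x) : ∃ y, d1 σ y = x := by
  obtain ⟨y, hy⟩ := h
  exact ⟨mp _ p y, by rw [d1_mp hp, hy, hpi]⟩

end Retract

end Bar

/-! ### The numbers game on a hexagon -/

/-- Firing the place `t` of a hexagon: the number at `t` changes sign and twice its old value is
added to both neighbours. -/
def fire (t : ZMod 6) (l : ZMod 6 → ℤ) (u : ZMod 6) : ℤ :=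
  if u = t then - l t else if u = t + 1 ∨ u + 1 = t then l u + 2 * l t else l u

/-- The properties of the all-ones state that persist in the numbers game. -/
def GInv (l : ZMod 6 → ℤ) : Prop :=
  ∀ t, Odd (l t) ∧ 0 < l t + l (t + 1) ∧ l t + l (t + 1) = l (t + 3) + l (t + 4) ∧
    2 * (l t + l (t + 1)) * (l (t + 2) + l (t + 3)) = 6 + l t ^ 2 + l (t + 3) ^ 2

theorem GInv.shift {l l' : ZMod 6 → ℤ} (h : GInv l) (k : ZMod 6) (hl : ∀ t, l' t = l (t + k)) :
    GInv l' := by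
  intro t
  obtain ⟨h1, h2, h3, h4⟩ := h (t + k)
  simp only [hl]
  rw [show t + 1 + k = t + k + 1 by ring, show t + 2 + k = t + k + 2 by ring,
    show t + 3 + k = t + k + 3 by ring, show t + 4 + k = t + k + 4 by ring]
  exact ⟨h1, h2, h3, h4⟩

theorem fire_shift (t k u : ZMod 6) (l : ZMod 6 → ℤ) :
    fire t l (u + k) = fire (t - k) (fun v => l (v + k)) u := by
  have h1 : u + k = t ↔ u = t - k := by rw [eq_sub_iff_add_eq]
  have h2 : u + k = t + 1 ↔ u = t - k + 1 := by
    rw [← eq_sub_iff_add_eq, show t + 1 - k = t - k + 1 by ring]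
  have h3 : u + k + 1 = t ↔ u + 1 = t - k := by rw [eq_sub_iff_add_eq, add_right_comm]
  simp only [fire, h1, h2, h3, sub_add_cancel]

theorem forall_zmod6 {P : ZMod 6 → Prop} :
    (∀ t, P t) ↔ P 0 ∧ P 1 ∧ P 2 ∧ P 3 ∧ P 4 ∧ P 5 :=
  ⟨fun h => ⟨h _, h _, h _, h _, h _, h _⟩, fun ⟨h0, h1, h2, h3, h4, h5⟩ t => by
    fin_cases t
    exacts [h0, h1, h2, h3, h4, h5]⟩

theorem GInv.fire0 {l : ZMod 6 → ℤ} (h : GInv l) : GInv (fire 0 l) := by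
  unfold GInv at h ⊢
  rw [forall_zmod6] at h ⊢
  have e0 : fire 0 l 0 = - l 0 := rfl
  have e1 : fire 0 l 1 = l 1 + 2 * l 0 := rfl
  have e2 : fire 0 l 2 = l 2 := rfl
  have e3 : fire 0 l 3 = l 3 := rfl
  have e4 : fire 0 l 4 = l 4 := rfl
  have e5 : fire 0 l 5 = l 5 + 2 * l 0 := rfl
  simp only [show (0:ZMod 6) + 1 = 1 from rfl, show (0:ZMod 6) + 2 = 2 from rfl,
    show (0:ZMod 6) + 3 = 3 from rfl, show (0:ZMod 6) + 4 = 4 from rfl,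
    show (1:ZMod 6) + 1 = 2 from rfl, show (1:ZMod 6) + 2 = 3 from rfl,
    show (1:ZMod 6) + 3 = 4 from rfl, show (1:ZMod 6) + 4 = 5 from rfl,
    show (2:ZMod 6) + 1 = 3 from rfl, show (2:ZMod 6) + 2 = 4 from rfl,
    show (2:ZMod 6) + 3 = 5 from rfl, show (2:ZMod 6) + 4 = 0 from rfl,
    show (3:ZMod 6) + 1 = 4 from rfl, show (3:ZMod 6) + 2 = 5 from rfl,
    show (3:ZMod 6) + 3 = 0 from rfl, show (3:ZMod 6) + 4 = 1 from rfl,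
    show (4:ZMod 6) + 1 = 5 from rfl, show (4:ZMod 6) + 2 = 0 from rfl,
    show (4:ZMod 6) + 3 = 1 from rfl, show (4:ZMod 6) + 4 = 2 from rfl,
    show (5:ZMod 6) + 1 = 0 from rfl, show (5:ZMod 6) + 2 = 1 from rfl,
    show (5:ZMod 6) + 3 = 2 from rfl, show (5:ZMod 6) + 4 = 3 from rfl, e0, e1, e2, e3, e4, e5]
    at h ⊢
  generalize l 0 = a, l 1 = b, l 2 = c, l 3 = d, l 4 = e, l 5 = f at h
  clear e0 e1 e2 e3 e4 e5
  obtain ⟨⟨o0, p0, q0, r0⟩, ⟨o1, p1, q1, r1⟩, ⟨o2, p2, q2, r2⟩, ⟨o3, p3, q3, r3⟩, ⟨o4, p4, q4, r4⟩,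
    ⟨o5, p5, q5, r5⟩⟩ := h
  have key : 0 < b + 2 * a + c := by
    have h1 : 2 * (b + 2 * a + c) * (d + e) = 6 + (b + 2 * a) ^ 2 + e ^ 2 := by
      linear_combination r1 - 4 * a * q0
    by_contra hc
    nlinarith [sq_nonneg (b + 2 * a), sq_nonneg e]
  have ev : Even (2 * a) := even_two_mul a
  refine ⟨⟨o0.neg, by linarith, by linarith, ?_⟩, ⟨o1.add_even ev, by linarith, by linarith, ?_⟩,
    ⟨o2, by linarith, by linarith, ?_⟩, ⟨o3, by linarith, by linarith, ?_⟩,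
    ⟨o4, by linarith, by linarith, ?_⟩, ⟨o5.add_even ev, by linarith, by linarith, ?_⟩⟩
  · linear_combination r0
  · linear_combination r1 - 4 * a * q0
  · linear_combination r2 + 4 * a * q2
  · linear_combination r3
  · linear_combination r4
  · linear_combination r5

theorem GInv.fire {l : ZMod 6 → ℤ} (h : GInv l) (t : ZMod 6) : GInv (fire t l) := by
  have h1 : GInv (fun v => l (v + t)) := h.shift t fun _ => rfl
  refine (h1.fire0).shift (-t) fun u => ?_
  have := fire_shift t t (u + -t) l
  rwa [sub_self, add_assoc, neg_add_cancel, add_zero] at this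

theorem ginv_one : GInv (fun _ => 1) := by
  intro t; exact ⟨odd_one, by norm_num, rfl, by norm_num⟩

/-- Adjacent places are never both negative. -/
theorem GInv.not_adj {l : ZMod 6 → ℤ} (h : GInv l) (t : ZMod 6) : ¬ (l t < 0 ∧ l (t + 1) < 0) := by
  have := (h t).2.1; omega

theorem GInv.ne_zero {l : ZMod 6 → ℤ} (h : GInv l) (t : ZMod 6) : l t ≠ 0 := by
  have := (h t).1; rintro h0; rw [h0] at this; exact absurd this (by decide)

/-- The height of a state. -/
def height (l : ZMod 6 → ℤ) : ℤ := l 0 + l 1 + l 2 + l 3 + l 4 + l 5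

theorem GInv.height_pos {l : ZMod 6 → ℤ} (h : GInv l) : 0 < height l := by
  have h1 : 0 < l 0 + l 1 := (h 0).2.1
  have h2 : 0 < l 2 + l 3 := (h 2).2.1
  have h3 : 0 < l 4 + l 5 := (h 4).2.1
  unfold height; linarith

theorem height_fire (t : ZMod 6) (l : ZMod 6 → ℤ) : height (fire t l) = height l + 2 * l t := by
  revert t
  rw [forall_zmod6]
  refine ⟨?_, ?_, ?_, ?_, ?_, ?_⟩
  · show (- l 0) + (l 1 + 2 * l 0) + l 2 + l 3 + l 4 + (l 5 + 2 * l 0) = _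
    unfold height; ring
  · show (l 0 + 2 * l 1) + - l 1 + (l 2 + 2 * l 1) + l 3 + l 4 + l 5 = _
    unfold height; ring
  · show l 0 + (l 1 + 2 * l 2) + - l 2 + (l 3 + 2 * l 2) + l 4 + l 5 = _
    unfold height; ring
  · show l 0 + l 1 + (l 2 + 2 * l 3) + - l 3 + (l 4 + 2 * l 3) + l 5 = _
    unfold height; ring
  · show l 0 + l 1 + l 2 + (l 3 + 2 * l 4) + - l 4 + (l 5 + 2 * l 4) = _
    unfold height; ring
  · show (l 0 + 2 * l 5) + l 1 + l 2 + l 3 + (l 4 + 2 * l 5) + - l 5 = _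
    unfold height; ring

/-! ### Twin systems -/

/-- The structure carried by a free `G`-set `V` of chambers: adjacent swaps `s t`,
the rotation `rot` of the place names, the label `lab`, and the numbers-game level `lev`. -/
structure TwinSystem (G V : Type) [Group G] [MulAction G V] where
  s : ZMod 6 → V → V
  rot : V → V
  lab : V → Lab
  lev : V → ZMod 6 → ℤ
  base : V
  s_s : ∀ t w, s t (s t w) = w
  s_comm2 : ∀ t w, s t (s (t + 2) w) = s (t + 2) (s t w)
  s_comm3 : ∀ t w, s t (s (t + 3) w) = s (t + 3) (s t w)
  rot_s : ∀ t w, rot (s t w) = s (t + 1) (rot w)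
  rot6 : ∀ w, rot (rot (rot (rot (rot (rot w))))) = w
  s_smul : ∀ t (g : G) w, s t (g • w) = g • s t w
  rot_smul : ∀ (g : G) w, rot (g • w) = g • rot w
  lab_smul : ∀ (g : G) w, lab (g • w) = lab w
  lab_s : ∀ t w, lab (s t w) = labS t (lab w)
  lab_rot : ∀ w, lab (rot w) = labR (lab w)
  free : ∀ w w', lab w = lab w' → ∃! g : G, g • w = w'
  lev_s : ∀ t w, lev (s t w) = fire t (lev w)
  lev_rot : ∀ t w, lev (rot w) (t + 1) = lev w t
  lev_base : lev base = fun _ => 1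
  conn : ∀ S : Set V, base ∈ S → (∀ t, ∀ w ∈ S, s t w ∈ S) → (∀ w ∈ S, rot w ∈ S) → ∀ w, w ∈ S

namespace TwinSystem

variable {G V : Type} [Group G] [MulAction G V] (X : TwinSystem G V)

theorem c20 (w) : X.s 2 (X.s 0 w) = X.s 0 (X.s 2 w) := (X.s_comm2 0 w).symm
theorem c42 (w) : X.s 4 (X.s 2 w) = X.s 2 (X.s 4 w) := (X.s_comm2 2 w).symm
theorem c40 (w) : X.s 4 (X.s 0 w) = X.s 0 (X.s 4 w) := X.s_comm2 4 w
theorem c30 (w) : X.s 3 (X.s 0 w) = X.s 0 (X.s 3 w) := (X.s_comm3 0 w).symm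
theorem c31 (w) : X.s 3 (X.s 1 w) = X.s 1 (X.s 3 w) := (X.s_comm2 1 w).symm
theorem c53 (w) : X.s 5 (X.s 3 w) = X.s 3 (X.s 5 w) := (X.s_comm2 3 w).symm
theorem c51 (w) : X.s 5 (X.s 1 w) = X.s 1 (X.s 5 w) := X.s_comm2 5 w
theorem r0 (w) : X.s 0 (X.rot w) = X.rot (X.s 5 w) := (X.rot_s 5 w).symm
theorem r1 (w) : X.s 1 (X.rot w) = X.rot (X.s 0 w) := (X.rot_s 0 w).symm
theorem r2 (w) : X.s 2 (X.rot w) = X.rot (X.s 1 w) := (X.rot_s 1 w).symm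
theorem r3 (w) : X.s 3 (X.rot w) = X.rot (X.s 2 w) := (X.rot_s 2 w).symm
theorem r4 (w) : X.s 4 (X.rot w) = X.rot (X.s 3 w) := (X.rot_s 3 w).symm
theorem r5 (w) : X.s 5 (X.rot w) = X.rot (X.s 4 w) := (X.rot_s 4 w).symm

/-- The swap `s t` as a permutation. -/
def sE (t : ZMod 6) : Equiv.Perm V := ⟨X.s t, X.s t, X.s_s t, X.s_s t⟩

/-- The rotation as a permutation. -/
def rE : Equiv.Perm V :=
  ⟨X.rot, fun w => X.rot (X.rot (X.rot (X.rot (X.rot w)))), X.rot6, X.rot6⟩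

/-- Precomposition with a permutation. -/
def pull (e : Equiv.Perm V) : (V →₀ ℤ) →ₗ[ℤ] (V →₀ ℤ) := (Finsupp.domLCongr e.symm).toLinearMap

@[simp] theorem pull_apply (e : Equiv.Perm V) (F : V →₀ ℤ) (w : V) : pull e F w = F (e w) := by
  simp [pull, Finsupp.domLCongr_apply, Finsupp.domCongr_apply, Finsupp.equivMapDomain_apply]

/-- Precomposition with the swap `s t`. -/
def S (t : ZMod 6) : (V →₀ ℤ) →ₗ[ℤ] (V →₀ ℤ) := pull (X.sE t)

/-- Precomposition with the rotation. -/
def R : (V →₀ ℤ) →ₗ[ℤ] (V →₀ ℤ) := pull X.rE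

@[simp] theorem S_apply (t : ZMod 6) (F : V →₀ ℤ) (w : V) : X.S t F w = F (X.s t w) :=
  pull_apply _ _ _

@[simp] theorem R_apply (F : V →₀ ℤ) (w : V) : X.R F w = F (X.rot w) := pull_apply _ _ _

/-- Multiplication by a function of the label. -/
def cut (χ : Lab → ℤ) : (V →₀ ℤ) →ₗ[ℤ] (V →₀ ℤ) where
  toFun F := Finsupp.onFinset F.support (fun w => χ (X.lab w) * F w) fun w h =>
    Finsupp.mem_support_iff.2 (right_ne_zero_of_mul h)
  map_add' F F' := by ext w; simp [mul_add]
  map_smul' n F := by ext w; simp; ring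

@[simp] theorem cut_apply (χ : Lab → ℤ) (F : V →₀ ℤ) (w : V) : X.cut χ F w = χ (X.lab w) * F w :=
  rfl

/-- The total mass of a finitely supported function. -/
def T : (V →₀ ℤ) →ₗ[ℤ] ℤ := Finsupp.linearCombination ℤ fun _ => 1

@[simp] theorem T_single (w : V) (n : ℤ) : T (Finsupp.single w n) = n := by simp [T]

theorem pull_single (e : Equiv.Perm V) (w : V) (n : ℤ) :
    pull e (Finsupp.single w n) = Finsupp.single (e.symm w) n := by
  simp [pull, Finsupp.domLCongr_apply]

theorem T_pull (e : Equiv.Perm V) (F : V →₀ ℤ) : T (pull e F) = T F := by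
  induction F using Finsupp.induction_linear with
  | zero => simp
  | add F F' h h' => rw [map_add, map_add, h, h', map_add]
  | single w n => rw [pull_single, T_single, T_single]

theorem T_S (t : ZMod 6) (F : V →₀ ℤ) : T (X.S t F) = T F := T_pull _ _

theorem T_R (F : V →₀ ℤ) : T (X.R F) = T F := T_pull _ _

theorem T_perm (g : G) (F : V →₀ ℤ) : T (Bar.perm G V g F) = T F := by
  induction F using Finsupp.induction_linear with
  | zero => simp
  | add F F' h h' => rw [map_add, map_add, h, h', map_add]
  | single w n => rw [Bar.perm_single, T_single, T_single]

/-- Summation over the swap `s t`. -/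
def A (t : ZMod 6) : (V →₀ ℤ) →ₗ[ℤ] (V →₀ ℤ) := LinearMap.id + X.S t

@[simp] theorem A_apply (t : ZMod 6) (F : V →₀ ℤ) (w : V) : X.A t F w = F w + F (X.s t w) := by
  simp [A]

theorem T_A (t : ZMod 6) (F : V →₀ ℤ) : T (X.A t F) = 2 * T F := by
  simp [A, T_S]; ring

/-- The pushforward to labels. -/
def push : (V →₀ ℤ) →ₗ[ℤ] (Lab →₀ ℤ) := Finsupp.lmapDomain ℤ ℤ X.lab

@[simp] theorem push_single (w : V) (n : ℤ) :
    X.push (Finsupp.single w n) = Finsupp.single (X.lab w) n := by simp [push]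

theorem push_pull (e : Equiv.Perm V) (e' : Equiv.Perm Lab) (h : ∀ w, X.lab (e w) = e' (X.lab w))
    (F : V →₀ ℤ) (v : Lab) : X.push (pull e F) v = X.push F (e' v) := by
  induction F using Finsupp.induction_linear with
  | zero => simp
  | add F F' h h' => simp only [map_add, Finsupp.add_apply, h, h']
  | single w n =>
    rw [pull_single, push_single, push_single, Finsupp.single_apply, Finsupp.single_apply]
    refine if_congr ?_ rfl rfl
    have := h (e.symm w)
    rw [Equiv.apply_symm_apply] at this
    rw [this, Equiv.apply_eq_iff_eq]

theorem push_cut (χ : Lab → ℤ) (F : V →₀ ℤ) (v : Lab) : X.push (X.cut χ F) v = χ v * X.push F v := by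
  induction F using Finsupp.induction_linear with
  | zero => simp
  | add F F' h h' => simp only [map_add, Finsupp.add_apply, h, h', mul_add]
  | single w n =>
    have : X.cut χ (Finsupp.single w n) = Finsupp.single w (χ (X.lab w) * n) := by
      ext w'
      classical
      rw [cut_apply, Finsupp.single_apply, Finsupp.single_apply]
      split_ifs with h
      · rw [h]
      · simp
    rw [this, push_single, push_single, Finsupp.single_apply, Finsupp.single_apply]
    split_ifs with h
    · rw [h]
    · simp

theorem push_perm (g : G) (F : V →₀ ℤ) : X.push (Bar.perm G V g F) = X.push F := by
  induction F using Finsupp.induction_linear with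
  | zero => simp
  | add F F' h h' => rw [map_add, map_add, h, h', map_add]
  | single w n => rw [Bar.perm_single, push_single, push_single, X.lab_smul]

theorem labS_labS (t : ZMod 6) (v : Lab) : labS t (labS t v) = v := by
  show (v.trans _).trans _ = v
  rw [Equiv.trans_assoc, Equiv.swap_swap, Equiv.trans_refl]

theorem push_S (t : ZMod 6) (F : V →₀ ℤ) (v : Lab) : X.push (X.S t F) v = X.push F (labS t v) :=
  X.push_pull _ ⟨labS t, labS t, labS_labS t, labS_labS t⟩ (X.lab_s t) F v

theorem labR_bij : Function.Bijective labR := by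
  constructor
  · intro v v' h
    refine Equiv.ext fun i => ?_
    have : v i + 1 = v' i + 1 := congrArg (fun u : Lab => u i) h
    exact add_right_cancel this
  · intro v
    exact ⟨v.trans (Equiv.addRight (-1)), Equiv.ext fun i => neg_add_cancel_right (v i) 1⟩

theorem push_R (F : V →₀ ℤ) (v : Lab) : X.push (X.R F) v = X.push F (labR v) :=
  X.push_pull _ (Equiv.ofBijective _ labR_bij) X.lab_rot F v

theorem lab_surj : Function.Surjective X.lab := by
  have key : ∀ σ : Equiv.Perm (ZMod 6), ∀ v ∈ Set.range X.lab, v.trans σ ∈ Set.range X.lab := by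
    intro σ
    have hσ : σ ∈ Submonoid.closure
        (Set.range fun i : Fin 5 => Equiv.swap (i.castSucc : ZMod 6) (i.succ : ZMod 6)) := by
      have := Equiv.Perm.mclosure_swap_castSucc_succ 5
      exact this ▸ Submonoid.mem_top σ
    induction hσ using Submonoid.closure_induction with
    | mem x hx =>
      obtain ⟨i, rfl⟩ := hx
      rintro v ⟨w, rfl⟩
      refine ⟨X.s (show ZMod 6 from i.castSucc) w, (X.lab_s _ _).trans ?_⟩
      fin_cases i <;> rfl
    | one => intro v hv; exact hv
    | mul x y _ _ hx hy => intro v hv; exact hx _ (hy _ hv)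
  intro v
  have := key ((X.lab X.base).symm.trans v) (X.lab X.base) ⟨_, rfl⟩
  rwa [← Equiv.trans_assoc, Equiv.self_trans_symm, Equiv.refl_trans] at this

/-- A section of the labelling. -/
def sec (v : Lab) : V := (X.lab_surj v).choose

theorem lab_sec (v : Lab) : X.lab (X.sec v) = v := (X.lab_surj v).choose_spec

/-- The group element carrying the chosen section to a given element. -/
def rr (w : V) : G := (X.free (X.sec (X.lab w)) w (X.lab_sec _)).choose

theorem rr_smul (w : V) : X.rr w • X.sec (X.lab w) = w :=
  (X.free (X.sec (X.lab w)) w (X.lab_sec _)).choose_spec.1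

theorem rr_mul (g : G) (w : V) : X.rr (g • w) = g * X.rr w := by
  refine (X.free (X.sec (X.lab w)) (g • w) ((X.lab_sec _).trans (X.lab_smul _ _).symm)).unique ?_ ?_
  · have := X.rr_smul (g • w)
    rwa [X.lab_smul] at this
  · rw [mul_smul, X.rr_smul]

theorem rr_inv (w : V) : (X.rr w)⁻¹ • w = X.sec (X.lab w) := by
  rw [inv_smul_eq_iff, X.rr_smul]

end TwinSystem

/-! ### Fundamental domains for the finite stabilisers -/

namespace Num

/-- Exchanging the third and fourth letters. -/
def swC : Word → Word | (a, b, c, d, e, f) => (a, b, d, c, e, f)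
/-- Exchanging the last two letters. -/
def swD : Word → Word | (a, b, c, d, e, f) => (a, b, c, d, f, e)

theorem wordOf_labS2 (v : Lab) : wordOf (labS 2 v) = swC (wordOf v) := by
  simp only [wordOf, labS, swC, Equiv.symm_trans_apply, Equiv.symm_swap]
  rfl

theorem wordOf_labS4 (v : Lab) : wordOf (labS 4 v) = swD (wordOf v) := by
  simp only [wordOf, labS, swD, Equiv.symm_trans_apply, Equiv.symm_swap]
  rfl

/-- Fundamental domain for the stabiliser of a vertex (order 24). -/
def dom0 : Word → ℤ
  | (a, b, c, d, e, f) => if a < b ∧ c < d ∧ e < f ∧ b = 5 then 1 else 0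

/-- Fundamental domain for the stabiliser of an edge (order 6). -/
def dom1 : Word → ℤ
  | (a, _, _, _, _, _) => if a = 5 then 1 else 0

/-- Fundamental domain for the stabiliser of a square (order 8). -/
def dom2 : Word → ℤ
  | (a, b, c, d, e, f) => if a < b ∧ d < e ∧ c < f then 1 else 0

/-- Sum over the three even rotations. -/
def sumB (h : Word → ℤ) (w : Word) : ℤ := h w + h (rotW (rotW w)) + h (rotW (rotW (rotW (rotW w))))

/-- The three domains meet every orbit exactly once. -/
def DomProp (w : Word) : Prop :=
  (sumB dom0 w + sumB dom0 (swD w) + (sumB dom0 (swC w) + sumB dom0 (swD (swC w)))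
    + (sumB dom0 (swA w) + sumB dom0 (swD (swA w)) +
      (sumB dom0 (swC (swA w)) + sumB dom0 (swD (swC (swA w))))) = 1) ∧
  sumB dom1 w + sumB dom1 (rotW w) = 1 ∧
  dom2 w + dom2 (swA w) + dom2 (swB w) + dom2 (swB (swA w)) +
    (dom2 (flipW w) + dom2 (flipW (swA w)) + dom2 (flipW (swB w))
      + dom2 (flipW (swB (swA w)))) = 1

instance : DecidablePred DomProp := fun w => by unfold DomProp; infer_instance

set_option synthInstance.maxSize 2000 in
set_option synthInstance.maxHeartbeats 400000 in
theorem dom_props : ∀ a b, a ≠ b → ∀ c, a ≠ c → b ≠ c → ∀ d, a ≠ d → b ≠ d → c ≠ d →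
      ∀ e, a ≠ e → b ≠ e → c ≠ e → d ≠ e → ∀ f, a ≠ f → b ≠ f → c ≠ f → d ≠ f → e ≠ f →
        DomProp (a, b, c, d, e, f) := by
  decide +kernel

theorem domProp (v : Lab) : DomProp (wordOf v) := all_words _ dom_props v

end Num

namespace TwinSystem

variable {G V : Type} [Group G] [MulAction G V] (X : TwinSystem G V)

/-- Sum over the even rotations. -/
def B : (V →₀ ℤ) →ₗ[ℤ] (V →₀ ℤ) := LinearMap.id + X.R ∘ₗ X.R + X.R ∘ₗ X.R ∘ₗ X.R ∘ₗ X.R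

@[simp] theorem B_apply (F : V →₀ ℤ) (w : V) : X.B F w =
    F w + F (X.rot (X.rot w)) + F (X.rot (X.rot (X.rot (X.rot w)))) := by simp [B]

/-- The norm of the group generated by the three even swaps. -/
def A3 : (V →₀ ℤ) →ₗ[ℤ] (V →₀ ℤ) := X.A 0 ∘ₗ X.A 2 ∘ₗ X.A 4

@[simp] theorem A3_apply (F : V →₀ ℤ) (w : V) : X.A3 F w =
    F w + F (X.s 4 w) + (F (X.s 2 w) + F (X.s 4 (X.s 2 w))) + (F (X.s 0 w) + F (X.s 4 (X.s 0 w)) +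
    (F (X.s 2 (X.s 0 w)) + F (X.s 4 (X.s 2 (X.s 0 w))))) := by simp [A3]

/-- The norm onto vertex chains. -/
def pi0 : (V →₀ ℤ) →ₗ[ℤ] (V →₀ ℤ) := X.A3 ∘ₗ X.B

/-- The norm onto edge chains. -/
def pi1 : (V →₀ ℤ) →ₗ[ℤ] (V →₀ ℤ) := (LinearMap.id - X.R) ∘ₗ X.B

/-- Signed norm of the group generated by the swaps `0` and `3`. -/
def E3 : (V →₀ ℤ) →ₗ[ℤ] (V →₀ ℤ) := (LinearMap.id - X.S 0) ∘ₗ (LinearMap.id - X.S 3)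

/-- The norm onto square chains. -/
def pi2 : (V →₀ ℤ) →ₗ[ℤ] (V →₀ ℤ) := X.E3 ∘ₗ (LinearMap.id - X.R ∘ₗ X.R ∘ₗ X.R)

theorem E3_apply (F : V →₀ ℤ) (w : V) : X.E3 F w =
    F w - F (X.s 3 w) - (F (X.s 0 w) - F (X.s 3 (X.s 0 w))) := by simp [E3]

theorem pi1_apply (F : V →₀ ℤ) (w : V) : X.pi1 F w = X.B F w - X.B F (X.rot w) := by simp [pi1]

theorem pi0_apply (F : V →₀ ℤ) (w : V) : X.pi0 F w = X.A3 (X.B F) w := rfl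

theorem pi2_apply (F : V →₀ ℤ) (w : V) : X.pi2 F w =
    F w - F (X.rot (X.rot (X.rot w))) - (F (X.s 3 w) - F (X.rot (X.rot (X.rot (X.s 3 w)))))
    - (F (X.s 0 w) - F (X.rot (X.rot (X.rot (X.s 0 w)))) -
      (F (X.s 3 (X.s 0 w)) - F (X.rot (X.rot (X.rot (X.s 3 (X.s 0 w))))))) := by
  simp only [pi2, LinearMap.comp_apply, E3_apply, LinearMap.sub_apply, LinearMap.id_apply,
    Finsupp.sub_apply, R_apply]

/-- Vertex chains. -/
def C0 : Submodule ℤ (V →₀ ℤ) where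
  carrier := {F | ∀ w, F (X.s 0 w) = F w ∧ F (X.s 2 w) = F w ∧ F (X.s 4 w) = F w ∧
    F (X.rot (X.rot w)) = F w}
  zero_mem' := by intro w; simp
  add_mem' := by
    intro a b ha hb w
    obtain ⟨h1, h2, h3, h4⟩ := ha w
    obtain ⟨k1, k2, k3, k4⟩ := hb w
    simp only [Finsupp.add_apply, *, and_self]
  smul_mem' := by
    intro n a ha w
    obtain ⟨h1, h2, h3, h4⟩ := ha w
    simp only [Finsupp.smul_apply, *, and_self]

/-- Edge chains. -/
def C1 : Submodule ℤ (V →₀ ℤ) where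
  carrier := {F | ∀ w, F (X.rot w) = - F w}
  zero_mem' := by intro w; simp
  add_mem' := by
    intro a b ha hb w
    simp only [Finsupp.add_apply, ha w, hb w]; ring
  smul_mem' := by
    intro n a ha w
    simp only [Finsupp.smul_apply, ha w, smul_neg]

/-- Square chains. -/
def C2 : Submodule ℤ (V →₀ ℤ) where
  carrier := {F | ∀ w, F (X.s 0 w) = - F w ∧ F (X.s 3 w) = - F w ∧
    F (X.rot (X.rot (X.rot w))) = - F w}
  zero_mem' := by intro w; simp
  add_mem' := by
    intro a b ha hb w
    obtain ⟨h1, h2, h3⟩ := ha w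
    obtain ⟨k1, k2, k3⟩ := hb w
    simp only [Finsupp.add_apply, *]
    refine ⟨?_, ?_, ?_⟩ <;> ring
  smul_mem' := by
    intro n a ha w
    obtain ⟨h1, h2, h3⟩ := ha w
    simp only [Finsupp.smul_apply, *, smul_neg, and_self]

theorem pi0_mem (F : V →₀ ℤ) : X.pi0 F ∈ X.C0 := by
  intro w
  simp only [pi0_apply, A3_apply, B_apply, X.c20, X.c42, X.c40, X.r0, X.r1, X.r2, X.r3, X.r4, X.r5,
    X.rot6, X.s_s]
  refine ⟨?_, ?_, ?_, ?_⟩ <;> ring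

theorem pi1_mem (F : V →₀ ℤ) : X.pi1 F ∈ X.C1 := by
  intro w
  simp only [pi1_apply, B_apply, X.rot6]
  ring

theorem pi2_mem (F : V →₀ ℤ) : X.pi2 F ∈ X.C2 := by
  intro w
  simp only [pi2_apply, X.c30, X.r0, X.r1, X.r2, X.r3, X.r4, X.r5, X.rot6, X.s_s]
  refine ⟨?_, ?_, ?_⟩ <;> ring

/-- Cutting down to the fundamental domain of vertices. -/
def m0 : (V →₀ ℤ) →ₗ[ℤ] (V →₀ ℤ) := X.cut fun v => Num.dom0 (Num.wordOf v)
/-- Cutting down to the fundamental domain of edges. -/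
def m1 : (V →₀ ℤ) →ₗ[ℤ] (V →₀ ℤ) := X.cut fun v => Num.dom1 (Num.wordOf v)
/-- Cutting down to the fundamental domain of squares. -/
def m2 : (V →₀ ℤ) →ₗ[ℤ] (V →₀ ℤ) := X.cut fun v => Num.dom2 (Num.wordOf v)

theorem pi0_m0 {F : V →₀ ℤ} (hF : F ∈ X.C0) : X.pi0 (X.m0 F) = F := by
  ext w
  have f0 := fun w => (hF w).1
  have f2 := fun w => (hF w).2.1
  have f4 := fun w => (hF w).2.2.1
  have fr := fun w => (hF w).2.2.2
  have key := (Num.domProp (X.lab w)).1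
  simp only [pi0_apply, A3_apply, B_apply, m0, cut_apply, X.lab_s, X.lab_rot, f0, f2, f4, fr,
    Num.wordOf_labR, Num.wordOf_labS0, Num.wordOf_labS2, Num.wordOf_labS4]
  simp only [Num.sumB] at key
  linear_combination F w * key

theorem pi1_m1 {F : V →₀ ℤ} (hF : F ∈ X.C1) : X.pi1 (X.m1 F) = F := by
  ext w
  have f1 : ∀ w, F (X.rot w) = - F w := hF
  have key := (Num.domProp (X.lab w)).2.1
  simp only [pi1_apply, B_apply, m1, cut_apply, X.lab_rot, f1, Num.wordOf_labR]
  simp only [Num.sumB] at key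
  linear_combination F w * key

theorem pi2_m2 {F : V →₀ ℤ} (hF : F ∈ X.C2) : X.pi2 (X.m2 F) = F := by
  ext w
  have f0 := fun w => (hF w).1
  have f3 := fun w => (hF w).2.1
  have fr := fun w => (hF w).2.2
  have key := (Num.domProp (X.lab w)).2.2
  simp only [pi2_apply, m2, cut_apply, X.lab_s, X.lab_rot, f0, f3, fr,
    Num.wordOf_labR3, Num.wordOf_labS0, Num.wordOf_labS3]
  linear_combination F w * key

theorem A3_mem {F : V →₀ ℤ} (hF : F ∈ X.C1) : X.A3 F ∈ X.C0 := by
  intro w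
  have f1 : ∀ w, F (X.rot w) = - F w := hF
  simp only [A3_apply, X.c20, X.c42, X.c40, X.r0, X.r1, X.r2, X.r3, X.r4, X.r5, X.s_s, f1]
  refine ⟨?_, ?_, ?_, ?_⟩ <;> ring

/-- The boundary of a square chain. -/
def D : (V →₀ ℤ) →ₗ[ℤ] (V →₀ ℤ) := LinearMap.id - X.R + X.R ∘ₗ X.R

@[simp] theorem D_apply (F : V →₀ ℤ) (w : V) :
    X.D F w = F w - F (X.rot w) + F (X.rot (X.rot w)) := by simp [D]

theorem D_mem {F : V →₀ ℤ} (hF : F ∈ X.C2) : X.D F ∈ X.C1 := by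
  intro w
  simp only [D_apply, (hF w).2.2]
  ring

theorem A3_D {F : V →₀ ℤ} (hF : F ∈ X.C2) : X.A3 (X.D F) = 0 := by
  ext w
  have f0 := fun w => (hF w).1
  have f3 := fun w => (hF w).2.1
  simp only [A3_apply, D_apply, X.rot_s, Finsupp.zero_apply]
  simp only [show (0 : ZMod 6) + 1 = 1 from rfl, show (2 : ZMod 6) + 1 = 3 from rfl,
    show (4 : ZMod 6) + 1 = 5 from rfl, show (1 : ZMod 6) + 1 = 2 from rfl,
    show (3 : ZMod 6) + 1 = 4 from rfl, show (5 : ZMod 6) + 1 = 0 from rfl,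
    X.c20, X.c40, X.c53, f0, f3]
  ring

end TwinSystem

/-! ### Exactness of the complex of vertex, edge and square chains -/

namespace TwinSystem

variable {G V : Type} [Group G] [MulAction G V] (X : TwinSystem G V)

theorem T_B (F : V →₀ ℤ) : T (X.B F) = 3 * T F := by
  simp [B, T_R]; ring

theorem T_A3 (F : V →₀ ℤ) : T (X.A3 F) = 8 * T F := by
  simp [A3, T_A]; ring

theorem T_pi0 (F : V →₀ ℤ) : T (X.pi0 F) = 24 * T F := by
  simp only [pi0, LinearMap.comp_apply, T_A3, T_B]; ring

/-- The augmentation of vertex chains. -/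
def eps : (V →₀ ℤ) →ₗ[ℤ] ℤ := T ∘ₗ X.m0

theorem eps_eq {F : V →₀ ℤ} (hF : F ∈ X.C0) : 24 * X.eps F = T F := by
  conv_rhs => rw [← X.pi0_m0 hF]
  rw [T_pi0]; rfl

theorem eps_A3 {F : V →₀ ℤ} (hF : F ∈ X.C1) : X.eps (X.A3 F) = 0 := by
  have h1 := X.eps_eq (X.A3_mem hF)
  have h2 : X.R F = - F := by
    ext w; rw [R_apply]; exact hF w
  have h3 := X.T_R F
  rw [h2, map_neg] at h3
  rw [T_A3] at h1
  omega

theorem eps_pi0_single (w : V) : X.eps (X.pi0 (Finsupp.single w 1)) = 1 := by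
  have h1 := X.eps_eq (X.pi0_mem (Finsupp.single w 1))
  rw [T_pi0, T_single] at h1
  omega

theorem pi0_S (t : ZMod 6) (ht : t = 0 ∨ t = 2 ∨ t = 4) (F : V →₀ ℤ) :
    X.pi0 (X.S t F) = X.pi0 F := by
  ext w
  rcases ht with rfl | rfl | rfl <;>
  · simp only [pi0_apply, A3_apply, B_apply, S_apply, X.c20, X.c42, X.c40, X.r0, X.r1, X.r2, X.r3,
      X.r4, X.r5, X.s_s]
    ring

/-- Boundaries of edge chains. -/
def bd : Submodule ℤ (V →₀ ℤ) := X.C1.map X.A3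

theorem pi0_R (F : V →₀ ℤ) : X.pi0 F - X.pi0 (X.R F) ∈ X.bd := by
  refine ⟨X.pi1 F, X.pi1_mem F, ?_⟩
  rw [← map_sub]
  show X.A3 _ = X.A3 _
  congr 1
  ext w
  simp only [pi1_apply, B_apply, Finsupp.sub_apply, R_apply]
  ring

theorem R_S (t : ZMod 6) (F : V →₀ ℤ) : X.S t (X.R F) = X.R (X.S (t + 1) F) := by
  ext w; simp [X.rot_s]

theorem pi0_S_odd (t : ZMod 6) (ht : t = 1 ∨ t = 3 ∨ t = 5) (F : V →₀ ℤ) :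
    X.pi0 F - X.pi0 (X.S t F) ∈ X.bd := by
  have h1 := X.pi0_R F
  have h2 := X.pi0_R (X.S t F)
  have h3 := X.R_S (t - 1) F
  rw [sub_add_cancel] at h3
  rw [← h3, X.pi0_S (t - 1) (by rcases ht with rfl | rfl | rfl <;> decide)] at h2
  have := X.bd.sub_mem h1 h2
  rwa [sub_sub_sub_cancel_right] at this

theorem pi0_single (w : V) :
    X.pi0 (Finsupp.single w 1) - X.pi0 (Finsupp.single X.base 1) ∈ X.bd := by
  revert w
  refine X.conn {w | X.pi0 (Finsupp.single w 1) - X.pi0 (Finsupp.single X.base 1) ∈ X.bd} ?_ ?_ ?_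
  · simp
  · intro t w hw
    have hs : X.S t (Finsupp.single w 1) = Finsupp.single (X.s t w) 1 := pull_single _ _ _
    have key : X.pi0 (Finsupp.single w 1) - X.pi0 (Finsupp.single (X.s t w) 1) ∈ X.bd := by
      rw [← hs]
      have : ∀ t : ZMod 6, (t = 0 ∨ t = 2 ∨ t = 4) ∨ (t = 1 ∨ t = 3 ∨ t = 5) := by decide
      rcases this t with h | h
      · rw [X.pi0_S t h, sub_self]; exact X.bd.zero_mem
      · exact X.pi0_S_odd t h _
    have := X.bd.sub_mem hw key
    show _ ∈ X.bd
    convert this using 1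
    abel
  · intro w hw
    have hs : X.R (Finsupp.single (X.rot w) 1) = Finsupp.single w 1 := by
      have : X.rE.symm (X.rot w) = w := X.rE.symm_apply_apply w
      exact (pull_single _ _ _).trans (by rw [this])
    have key := X.pi0_R (Finsupp.single (X.rot w) 1)
    rw [hs] at key
    have := X.bd.add_mem hw key
    show _ ∈ X.bd
    convert this using 1
    abel

theorem pi0_mod (F : V →₀ ℤ) : X.pi0 F - T F • X.pi0 (Finsupp.single X.base 1) ∈ X.bd := by
  induction F using Finsupp.induction_linear with
  | zero => simp
  | add F F' h h' =>
    have := X.bd.add_mem h h'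
    convert this using 1
    rw [map_add, map_add, add_smul]; abel
  | single w n =>
    have := X.bd.smul_mem n (X.pi0_single w)
    rw [T_single, ← mul_one n, ← smul_eq_mul, ← Finsupp.smul_single, map_smul, smul_eq_mul, mul_one,
      ← smul_sub]
    exact this

theorem exact0 {F : V →₀ ℤ} (hF : F ∈ X.C0) (h : X.eps F = 0) : ∃ H ∈ X.C1, X.A3 H = F := by
  have h1 := X.pi0_mod (X.m0 F)
  have h2 : T (X.m0 F) = 0 := h
  rw [X.pi0_m0 hF, h2, zero_smul, sub_zero] at h1
  exact h1

theorem lev_rot' (t : ZMod 6) (w : V) : X.lev (X.rot w) t = X.lev w (t - 1) := by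
  have := X.lev_rot (t - 1) w
  rwa [sub_add_cancel] at this

theorem ginv (w : V) : GInv (X.lev w) := by
  refine X.conn {w | GInv (X.lev w)} ?_ ?_ ?_ w
  · show GInv _
    rw [X.lev_base]; exact ginv_one
  · intro t w h
    show GInv _
    rw [X.lev_s]; exact GInv.fire h t
  · intro w h
    exact GInv.shift h (-1) fun t => (X.lev_rot' t w).trans (by rw [sub_eq_add_neg])

/-- The height of an element. -/
def ht (w : V) : ℤ := height (X.lev w)

theorem ht_pos (w : V) : 0 < X.ht w := (X.ginv w).height_pos

theorem ht_s (t : ZMod 6) (w : V) : X.ht (X.s t w) = X.ht w + 2 * X.lev w t := by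
  rw [ht, X.lev_s, height_fire]; rfl

theorem lev_rot_0 (w : V) : X.lev (X.rot w) 0 = X.lev w 5 := X.lev_rot 5 w
theorem lev_rot_1 (w : V) : X.lev (X.rot w) 1 = X.lev w 0 := X.lev_rot 0 w
theorem lev_rot_2 (w : V) : X.lev (X.rot w) 2 = X.lev w 1 := X.lev_rot 1 w
theorem lev_rot_3 (w : V) : X.lev (X.rot w) 3 = X.lev w 2 := X.lev_rot 2 w
theorem lev_rot_4 (w : V) : X.lev (X.rot w) 4 = X.lev w 3 := X.lev_rot 3 w
theorem lev_rot_5 (w : V) : X.lev (X.rot w) 5 = X.lev w 4 := X.lev_rot 4 w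

theorem ht_rot (w : V) : X.ht (X.rot w) = X.ht w := by
  simp only [ht, height, X.lev_rot_0, X.lev_rot_1, X.lev_rot_2, X.lev_rot_3, X.lev_rot_4,
    X.lev_rot_5]
  ring

theorem adj (w : V) :
    ¬ (X.lev w 0 < 0 ∧ X.lev w 1 < 0) ∧ ¬ (X.lev w 1 < 0 ∧ X.lev w 2 < 0) ∧
    ¬ (X.lev w 2 < 0 ∧ X.lev w 3 < 0) ∧ ¬ (X.lev w 3 < 0 ∧ X.lev w 4 < 0) ∧
    ¬ (X.lev w 4 < 0 ∧ X.lev w 5 < 0) ∧ ¬ (X.lev w 5 < 0 ∧ X.lev w 0 < 0) :=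
  ⟨(X.ginv w).not_adj 0, (X.ginv w).not_adj 1, (X.ginv w).not_adj 2, (X.ginv w).not_adj 3,
    (X.ginv w).not_adj 4, (X.ginv w).not_adj 5⟩

theorem inj2 {F : V →₀ ℤ} (hF : F ∈ X.C2) (h : X.D F = 0) : F = 0 := by
  by_contra hne
  obtain ⟨w, hw, hmax⟩ := F.support.exists_max_image X.ht (Finsupp.support_nonempty_iff.2 hne)
  rw [Finsupp.mem_support_iff] at hw
  -- at a support point of maximal height both swaps of the square descend
  have key : ∀ w', F w' ≠ 0 → X.ht w' = X.ht w → X.lev w' 0 < 0 ∧ X.lev w' 3 < 0 := by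
    intro w' h0 hh
    have a1 := hmax (X.s 0 w') (by rw [Finsupp.mem_support_iff, (hF w').1]; simpa using h0)
    have a2 := hmax (X.s 3 w') (by rw [Finsupp.mem_support_iff, (hF w').2.1]; simpa using h0)
    rw [X.ht_s] at a1 a2
    have b1 := (X.ginv w').ne_zero 0
    have b2 := (X.ginv w').ne_zero 3
    omega
  have k0 := key w hw rfl
  have hD : X.D F w = 0 := by rw [h]; rfl
  rw [D_apply] at hD
  have ad := X.adj w
  by_cases h1 : F (X.rot w) = 0
  · have h2 : F (X.rot (X.rot w)) ≠ 0 := by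
      intro h2; rw [h1, h2] at hD; simp at hD; exact hw hD
    have := key _ h2 (by rw [X.ht_rot, X.ht_rot])
    simp only [X.lev_rot_0, X.lev_rot_3, X.lev_rot_5, X.lev_rot_2] at this
    omega
  · have := key _ h1 (X.ht_rot w)
    simp only [X.lev_rot_0, X.lev_rot_3] at this
    omega

/-- Exactness at edge chains, by induction on a bound for the height: the part of a cycle of top
height is cancelled by squares all of whose other chambers are lower. -/
theorem exact1_aux (n : ℕ) : ∀ F ∈ X.C1, X.A3 F = 0 → (∀ w, F w ≠ 0 → X.ht w < n) →
    ∃ H ∈ X.C2, X.D H = F := by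
  induction n with
  | zero =>
    intro F _ _ h
    have : F = 0 := by
      ext w
      by_contra hw
      have := h w hw
      have := X.ht_pos w
      push_cast at *
      omega
    exact ⟨0, X.C2.zero_mem, by rw [this, map_zero]⟩
  | succ n ih =>
    intro F hF hA hn
    have fr : ∀ w, F (X.rot w) = - F w := hF
    classical
    set K : V →₀ ℤ := F.filter fun w => X.ht w = n ∧ X.lev w 0 < 0 ∧ X.lev w 3 < 0 with hK
    have Kap : ∀ w, K w = if X.ht w = n ∧ X.lev w 0 < 0 ∧ X.lev w 3 < 0 then F w else 0 :=
      fun w => Finsupp.filter_apply _ _ _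
    have Kr : ∀ w, K (X.rot (X.rot (X.rot w))) = - K w := by
      intro w
      simp only [Kap, X.ht_rot, X.lev_rot_0, X.lev_rot_3, X.lev_rot_5, X.lev_rot_2, X.lev_rot_4,
        X.lev_rot_1, fr]
      split_ifs <;> omega
    have hH : X.E3 K ∈ X.C2 := by
      intro w
      simp only [E3_apply, X.c30, X.s_s, X.r0, X.r1, X.r2, X.r3, X.r4, X.r5, Kr]
      refine ⟨?_, ?_, ?_⟩ <;> ring
    have Htop : ∀ w, n ≤ X.ht w → X.E3 K w = K w := by
      intro w hw
      have e00 : X.lev (X.s 0 w) 0 = - X.lev w 0 := by rw [X.lev_s]; rfl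
      have e03 : X.lev (X.s 0 w) 3 = X.lev w 3 := by rw [X.lev_s]; rfl
      have e33 : X.lev (X.s 3 w) 3 = - X.lev w 3 := by rw [X.lev_s]; rfl
      have e33' : X.lev (X.s 3 (X.s 0 w)) 3 = - X.lev w 3 := by rw [X.lev_s, ← e03]; rfl
      have e30' : X.lev (X.s 3 (X.s 0 w)) 0 = - X.lev w 0 := by rw [X.lev_s, ← e00]; rfl
      have k3 : K (X.s 3 w) = 0 := by
        rw [Kap, X.ht_s, e33, if_neg]; omega
      have k0 : K (X.s 0 w) = 0 := by
        rw [Kap, X.ht_s, e00, if_neg]; omega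
      have k30 : K (X.s 3 (X.s 0 w)) = 0 := by
        rw [Kap, X.ht_s, X.ht_s, e33', e30', e03, if_neg]; omega
      rw [E3_apply, k3, k0, k30]; ring
    -- a support point of top height has a descent among the even swaps
    have even : ∀ w, F w ≠ 0 → X.ht w = n → X.lev w 0 < 0 ∨ X.lev w 2 < 0 ∨ X.lev w 4 < 0 := by
      intro w hw hh
      by_contra hc
      have a0 := (X.ginv w).ne_zero 0
      have a2 := (X.ginv w).ne_zero 2
      have a4 := (X.ginv w).ne_zero 4
      have z : ∀ w', X.ht w < X.ht w' → F w' = 0 := by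
        intro w' h'
        by_contra h0
        have := hn w' h0
        push_cast at this
        omega
      have e1 : X.lev (X.s 2 w) 4 = X.lev w 4 := by rw [X.lev_s]; rfl
      have e2 : X.lev (X.s 0 w) 4 = X.lev w 4 := by rw [X.lev_s]; rfl
      have e3 : X.lev (X.s 0 w) 2 = X.lev w 2 := by rw [X.lev_s]; rfl
      have e4 : X.lev (X.s 2 (X.s 0 w)) 4 = X.lev w 4 := by rw [X.lev_s, ← e2]; rfl
      have h0 : X.A3 F w = 0 := by rw [hA]; rfl
      rw [A3_apply, z (X.s 4 w), z (X.s 2 w), z (X.s 4 (X.s 2 w)), z (X.s 0 w),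
        z (X.s 4 (X.s 0 w)), z (X.s 2 (X.s 0 w)), z (X.s 4 (X.s 2 (X.s 0 w)))] at h0
      · exact hw (by simpa using h0)
      all_goals simp only [X.ht_s, e1, e2, e3, e4]; omega
    obtain ⟨H', hH', hD⟩ := ih (F - X.D (X.E3 K)) (X.C1.sub_mem hF (X.D_mem hH))
      (by rw [map_sub, hA, X.A3_D hH, sub_self]) (by
        intro w
        contrapose!
        intro hw
        have t1 : n ≤ X.ht (X.rot w) := by rwa [X.ht_rot]
        have t2 : n ≤ X.ht (X.rot (X.rot w)) := by rwa [X.ht_rot, X.ht_rot]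
        rw [Finsupp.sub_apply, D_apply, Htop w hw, Htop _ t1, Htop _ t2]
        simp only [Kap, X.ht_rot, X.lev_rot_0, X.lev_rot_3, X.lev_rot_5, X.lev_rot_2, fr]
        by_cases h0 : F w = 0
        · simp [h0]
        have hh : X.ht w = n := by have := hn w h0; push_cast at this; omega
        have ev := even w h0 hh
        have od := even (X.rot w) (by rw [fr]; simpa using h0) (by rw [X.ht_rot, hh])
        rw [X.lev_rot_0, X.lev_rot_2, X.lev_rot_4] at od
        have ad := X.adj w
        simp only [hh, true_and]
        split_ifs <;> omega)
    exact ⟨H' + X.E3 K, X.C2.add_mem hH' hH, by rw [map_add, hD, sub_add_cancel]⟩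

theorem exact1 {F : V →₀ ℤ} (hF : F ∈ X.C1) (h : X.A3 F = 0) : ∃ H ∈ X.C2, X.D H = F := by
  obtain ⟨n, hn⟩ : ∃ n : ℕ, ∀ w ∈ F.support, X.ht w < n := by
    refine ⟨∑ w ∈ F.support, (X.ht w).toNat + 1, fun w hw => ?_⟩
    have := Finset.single_le_sum (f := fun w => (X.ht w).toNat) (fun _ _ => Nat.zero_le _) hw
    omega
  exact X.exact1_aux n F hF h fun w hw => hn w (Finsupp.mem_support_iff.2 hw)

end TwinSystem

/-! ### The homology of a group with a twin system -/

namespace TwinSystem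

variable {G V : Type} [Group G] [MulAction G V] (X : TwinSystem G V)

/-- The restriction of the permutation representation to an invariant submodule. -/
def sub (C : Submodule ℤ (V →₀ ℤ)) (hC : ∀ g : G, ∀ F ∈ C, Bar.perm G V g F ∈ C) :
    Representation ℤ G C where
  toFun g := (Bar.perm G V g).restrict (hC g)
  map_one' := by ext F : 2; simp
  map_mul' g h := by ext F : 2; simp

theorem sub_apply (C : Submodule ℤ (V →₀ ℤ)) (hC : ∀ g : G, ∀ F ∈ C, Bar.perm G V g F ∈ C) (g : G)
    (F : C) : (sub C hC g F : V →₀ ℤ) = Bar.perm G V g F := rfl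

theorem perm_C0 (g : G) (F : V →₀ ℤ) (hF : F ∈ X.C0) : Bar.perm G V g F ∈ X.C0 := by
  intro w
  simp only [Bar.perm_apply, ← X.s_smul, ← X.rot_smul]
  exact hF _

theorem perm_C1 (g : G) (F : V →₀ ℤ) (hF : F ∈ X.C1) : Bar.perm G V g F ∈ X.C1 := by
  intro w
  simp only [Bar.perm_apply, ← X.rot_smul]
  exact hF _

theorem perm_C2 (g : G) (F : V →₀ ℤ) (hF : F ∈ X.C2) : Bar.perm G V g F ∈ X.C2 := by
  intro w
  simp only [Bar.perm_apply, ← X.s_smul, ← X.rot_smul]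
  exact hF _

theorem S_perm (t : ZMod 6) (g : G) (F : V →₀ ℤ) :
    X.S t (Bar.perm G V g F) = Bar.perm G V g (X.S t F) := by
  ext w; simp [Bar.perm_apply, X.s_smul]

theorem R_perm (g : G) (F : V →₀ ℤ) : X.R (Bar.perm G V g F) = Bar.perm G V g (X.R F) := by
  ext w; simp [Bar.perm_apply, X.rot_smul]

theorem cut_perm (χ : Lab → ℤ) (g : G) (F : V →₀ ℤ) :
    X.cut χ (Bar.perm G V g F) = Bar.perm G V g (X.cut χ F) := by
  ext w; simp [Bar.perm_apply, X.lab_smul]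

theorem A_perm (t : ZMod 6) (g : G) (F : V →₀ ℤ) :
    X.A t (Bar.perm G V g F) = Bar.perm G V g (X.A t F) := by
  simp [A, S_perm]

theorem A3_perm (g : G) (F : V →₀ ℤ) : X.A3 (Bar.perm G V g F) = Bar.perm G V g (X.A3 F) := by
  simp [A3, A_perm]

theorem D_perm (g : G) (F : V →₀ ℤ) : X.D (Bar.perm G V g F) = Bar.perm G V g (X.D F) := by
  simp [D, R_perm]

theorem B_perm (g : G) (F : V →₀ ℤ) : X.B (Bar.perm G V g F) = Bar.perm G V g (X.B F) := by
  simp [B, R_perm]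

theorem pi0_perm (g : G) (F : V →₀ ℤ) : X.pi0 (Bar.perm G V g F) = Bar.perm G V g (X.pi0 F) := by
  simp [pi0, A3_perm, B_perm]

theorem pi1_perm (g : G) (F : V →₀ ℤ) : X.pi1 (Bar.perm G V g F) = Bar.perm G V g (X.pi1 F) := by
  simp [pi1, B_perm, R_perm]

theorem pi2_perm (g : G) (F : V →₀ ℤ) : X.pi2 (Bar.perm G V g F) = Bar.perm G V g (X.pi2 F) := by
  simp [pi2, E3, S_perm, R_perm]

/-- A function of mass zero on every fibre of the labelling is a boundary of chains. -/
theorem ac0_perm {F : V →₀ ℤ} (h : X.push F = 0) : ∃ y, Bar.d1 (Bar.perm G V) y = F :=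
  Bar.perm_ac0 X.rr X.lab X.sec X.rr_inv F h

theorem push_d1 (y : G →₀ (V →₀ ℤ)) : X.push (Bar.d1 (Bar.perm G V) y) = 0 := by
  induction y using Finsupp.induction_linear with
  | zero => simp
  | add x y hx hy => rw [map_add, map_add, hx, hy, add_zero]
  | single g F => rw [Bar.d1_single, map_sub, X.push_perm, sub_self]

/-- Coinvariants of an invariant submodule with an equivariant retraction are detected by the
pushforward to labels. -/
theorem ac0_sub (C : Submodule ℤ (V →₀ ℤ)) (hC : ∀ g : G, ∀ F ∈ C, Bar.perm G V g F ∈ C)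
    (χ : Lab → ℤ) (p : (V →₀ ℤ) →ₗ[ℤ] (V →₀ ℤ)) (hp : ∀ F, p F ∈ C)
    (hpe : ∀ (g : G) F, p (Bar.perm G V g F) = Bar.perm G V g (p F))
    (hpi : ∀ F ∈ C, p (X.cut χ F) = F) (F : C) :
    X.push F = 0 ↔ ∃ y, Bar.d1 (sub C hC) y = F := by
  constructor
  · intro h
    refine Bar.retract_ac0 (ρ := Bar.perm G V) (i := X.cut χ ∘ₗ C.subtype) (p := p.codRestrict C hp)
      ?_ ?_ (X.ac0_perm ?_)
    · intro g m; apply Subtype.ext; exact hpe g m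
    · intro m; apply Subtype.ext; exact hpi m m.2
    · ext v
      show X.push (X.cut χ F) v = 0
      rw [push_cut, h]; simp
  · rintro ⟨y, rfl⟩
    have : (C.subtype (Bar.d1 (sub C hC) y)) = Bar.d1 (Bar.perm G V) (Bar.mp G C.subtype y) :=
      (Bar.d1_mp (φ := C.subtype) (fun g m => rfl) y).symm
    show X.push (C.subtype _) = 0
    rw [this, push_d1]

theorem ac_sub (C : Submodule ℤ (V →₀ ℤ)) (hC : ∀ g : G, ∀ F ∈ C, Bar.perm G V g F ∈ C)
    (χ : Lab → ℤ) (p : (V →₀ ℤ) →ₗ[ℤ] (V →₀ ℤ)) (hp : ∀ F, p F ∈ C)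
    (hpe : ∀ (g : G) F, p (Bar.perm G V g F) = Bar.perm G V g (p F))
    (hpi : ∀ F ∈ C, p (X.cut χ F) = F) :
    (∀ x, Bar.d1 (sub C hC) x = 0 → ∃ y, Bar.d2 (sub C hC) y = x) ∧
    (∀ x, Bar.d2 (sub C hC) x = 0 → ∃ y, Bar.d3 (sub C hC) y = x) := by
  have h1 : Bar.Equivar (sub C hC) (Bar.perm G V) (X.cut χ ∘ₗ C.subtype) := by
    intro g m; exact X.cut_perm χ g m
  have h2 : Bar.Equivar (Bar.perm G V) (sub C hC) (p.codRestrict C hp) := by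
    intro g m; apply Subtype.ext; exact hpe g m
  have h3 : ∀ m, (p.codRestrict C hp) ((X.cut χ ∘ₗ C.subtype) m) = m := by
    intro m; apply Subtype.ext; exact hpi m m.2
  exact ⟨Bar.retract_ac1 h1 h2 h3 (Bar.perm_ac1 X.rr X.rr_mul),
    Bar.retract_ac2 h1 h2 h3 (Bar.perm_ac2 X.rr X.rr_mul)⟩

/-- The pushforward of square chains to functions on labels. -/
def q : X.C2 →ₗ[ℤ] (Lab → ℤ) := Finsupp.lcoeFun ∘ₗ X.push ∘ₗ X.C2.subtype

theorem q_apply (F : X.C2) (v : Lab) : X.q F v = X.push F v := rfl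

theorem q_rel (F : X.C2) (v : Lab) : X.q F (labS 0 v) = - X.q F v ∧ X.q F (labS 3 v) = - X.q F v ∧
    X.q F (labR (labR (labR v))) = - X.q F v := by
  have h0 : X.S 0 F = - (F : V →₀ ℤ) := by ext w; simpa using (F.2 w).1
  have h3 : X.S 3 F = - (F : V →₀ ℤ) := by ext w; simpa using (F.2 w).2.1
  have hr : X.R (X.R (X.R F)) = - (F : V →₀ ℤ) := by ext w; simpa using (F.2 w).2.2
  simp only [q_apply, ← push_S, ← push_R, h0, h3, hr, map_neg, Finsupp.neg_apply, and_self]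

theorem q_mem (F : X.C2) : X.q F ∈ Z2 ↔ X.push (X.D F) = 0 := by
  have h : ∀ v, X.push (X.D F) v = X.q F v - X.q F (labR v) + X.q F (labR (labR v)) := by
    intro v
    simp only [D, q_apply, ← push_R, map_add, map_sub, LinearMap.add_apply, LinearMap.sub_apply,
      Finsupp.add_apply, Finsupp.sub_apply, LinearMap.comp_apply, LinearMap.id_apply]
  constructor
  · intro hm
    ext v
    rw [h]; exact (hm v).2.2.2
  · intro hz v
    obtain ⟨h1, h2, h3⟩ := X.q_rel F v
    exact ⟨h1, h2, h3, by rw [← h, hz]; rfl⟩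

theorem q_surj {z : Lab → ℤ} (hz : z ∈ Z2) : ∃ F, X.q F = z := by
  let x : V →₀ ℤ := ∑ v : Lab, Finsupp.single (X.sec v) (Num.dom2 (Num.wordOf v) * z v)
  have hx : ∀ v, X.push x v = Num.dom2 (Num.wordOf v) * z v := by
    intro v
    simp only [x, map_sum, push_single, lab_sec]
    rw [Finsupp.finsetSum_apply]
    simp [Finsupp.single_apply]
  refine ⟨⟨X.pi2 x, X.pi2_mem x⟩, ?_⟩
  ext v
  have key := (Num.domProp v).2.2
  have z0 := fun v => (hz v).1
  have z3 := fun v => (hz v).2.1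
  have zr := fun v => (hz v).2.2.1
  rw [q_apply]
  simp only [pi2, E3, map_sub, LinearMap.sub_apply,
      Finsupp.sub_apply, LinearMap.comp_apply, LinearMap.id_apply, push_S,
      push_R, hx, z0, z3, zr, Num.wordOf_labR3, Num.wordOf_labS0, Num.wordOf_labS3]
  linear_combination z v * key

/-- The second homology of a group with a twin system: `C2 → C1 → C0` is a resolution of `ℤ` by
acyclic modules, and the kernel of `D` on coinvariants is `Z2`. -/
theorem homology (X : TwinSystem G V) : Nonempty (GroupHomology2 G ≃+ Z2) := by
  have a0 := X.ac_sub X.C0 X.perm_C0 _ X.pi0 X.pi0_mem X.pi0_perm fun F hF => X.pi0_m0 hF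
  have a1 := X.ac_sub X.C1 X.perm_C1 _ X.pi1 X.pi1_mem X.pi1_perm fun F hF => X.pi1_m1 hF
  refine Bar.homology_equiv (sub X.C0 X.perm_C0) (sub X.C1 X.perm_C1) (sub X.C2 X.perm_C2)
    (X.eps ∘ₗ X.C0.subtype) (X.A3.restrict fun F hF => X.A3_mem hF)
    (X.D.restrict fun F hF => X.D_mem hF) ?_ ?_ ?_ ?_ ?_ ?_ ?_ ?_ ?_ a0.1 a0.2 a1.1 X.q Z2 ?_ ?_ ?_
  · intro g F
    show T (X.m0 (Bar.perm G V g F)) = T (X.m0 F)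
    rw [m0, X.cut_perm, T_perm]
  · intro g F; apply Subtype.ext; exact X.A3_perm g F
  · intro g F; apply Subtype.ext; exact X.D_perm g F
  · intro n
    refine ⟨n • ⟨_, X.pi0_mem (Finsupp.single X.base 1)⟩, ?_⟩
    rw [map_smul]
    show n • X.eps (X.pi0 _) = n
    rw [X.eps_pi0_single]; simp
  · intro F; exact X.eps_A3 F.2
  · intro F hF
    obtain ⟨H, hH, h⟩ := X.exact0 F.2 hF
    exact ⟨⟨H, hH⟩, Subtype.ext h⟩
  · intro F; apply Subtype.ext; exact X.A3_D F.2
  · intro F hF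
    obtain ⟨H, hH, h⟩ := X.exact1 F.2 (congrArg Subtype.val hF)
    exact ⟨⟨H, hH⟩, Subtype.ext h⟩
  · intro F hF
    exact Subtype.ext (X.inj2 F.2 (congrArg Subtype.val hF))
  · intro F
    rw [← X.ac0_sub X.C2 X.perm_C2 _ X.pi2 X.pi2_mem X.pi2_perm fun F hF => X.pi2_m2 hF]
    constructor
    · intro h; ext v; exact congrFun h v
    · intro h; ext v; rw [q_apply, h]; rfl
  · intro F
    rw [X.q_mem]
    exact X.ac0_sub X.C1 X.perm_C1 _ X.pi1 X.pi1_mem X.pi1_perm (fun F hF => X.pi1_m1 hF)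
      ⟨X.D F, X.D_mem F.2⟩
  · intro z hz; exact X.q_surj hz

end TwinSystem

/-! ### Combinatorics of real sextuples modulo integers -/

namespace Cfg

/-- Real sextuples, regarded as lifts of six points on a circle. -/
abbrev Pt := Fin 6 → ℝ

/-- No three coordinates agree modulo `ℤ`. -/
def No3 (y : Pt) : Prop :=
  ∀ i j k : Fin 6, i ≠ j → i ≠ k → j ≠ k →
    ¬((∃ m : ℤ, y i - y j = m) ∧ ∃ m : ℤ, y i - y k = m)

/-- The open star of `z`: sextuples obtained from `z` by a motion along which no two points of the
circle that are distinct at `z` meet. -/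
def N (z : Pt) : Set Pt := {y | ∀ i j, y i - y j < ⌊z i - z j⌋ + 1}

theorem mem_N {z y : Pt} : y ∈ N z ↔ ∀ i j, y i - y j < ⌊z i - z j⌋ + 1 := Iff.rfl

theorem self_mem_N (z : Pt) : z ∈ N z := fun _ _ => Int.lt_floor_add_one _

theorem isOpen_N (z : Pt) : IsOpen (N z) := by
  have : N z = ⋂ i, ⋂ j, {y : Pt | y i - y j < ⌊z i - z j⌋ + 1} := by
    ext y; simp [mem_N]
  rw [this]
  refine isOpen_iInter_of_finite fun i => isOpen_iInter_of_finite fun j => ?_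
  exact isOpen_lt (by fun_prop) continuous_const

theorem convex_N (z : Pt) : Convex ℝ (N z) := by
  intro x hx y hy a b ha hb hab i j
  have h1 := hx i j
  have h2 := hy i j
  simp only [Pi.add_apply, Pi.smul_apply, smul_eq_mul]
  rcases eq_or_lt_of_le ha with h | h
  · obtain rfl : b = 1 := by linarith
    subst h
    linarith
  · have h3 := mul_lt_mul_of_pos_left h1 h
    have h4 := mul_le_mul_of_nonneg_left h2.le hb
    have : (⌊z i - z j⌋ + 1 : ℝ) = a * (⌊z i - z j⌋ + 1) + b * (⌊z i - z j⌋ + 1) := by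
      rw [← add_mul, hab, one_mul]
    linarith

/-- A tie of a point in the open star of `z` is a tie of `z`. -/
theorem tie_of_mem {z y : Pt} (h : y ∈ N z) {i j : Fin 6} {m : ℤ} (hm : y i - y j = m) :
    z i - z j = m := by
  have h1 := h i j
  have h2 := h j i
  have h3 : y j - y i = ((-m : ℤ) : ℝ) := by push_cast; linarith
  rw [hm] at h1
  rw [h3] at h2
  have h4 : m ≤ ⌊z i - z j⌋ := by exact_mod_cast Int.lt_add_one_iff.mp (by exact_mod_cast h1)
  have h5 : -m ≤ ⌊z j - z i⌋ := by exact_mod_cast Int.lt_add_one_iff.mp (by exact_mod_cast h2)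
  rw [Int.le_floor] at h4 h5
  push_cast at h5
  linarith

theorem No3.of_mem {z y : Pt} (hz : No3 z) (h : y ∈ N z) : No3 y := by
  rintro i j k h1 h2 h3 ⟨⟨m, hm⟩, ⟨l, hl⟩⟩
  exact hz i j k h1 h2 h3 ⟨⟨m, tie_of_mem h hm⟩, ⟨l, tie_of_mem h hl⟩⟩

theorem N_subset {z y : Pt} (h : y ∈ N z) : N y ⊆ N z := by
  intro x hx i j
  have h1 : ⌊y i - y j⌋ < ⌊z i - z j⌋ + 1 := by
    rw [Int.floor_lt]; exact_mod_cast h i j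
  have h2 : (⌊y i - y j⌋ : ℝ) ≤ ⌊z i - z j⌋ := by exact_mod_cast Int.lt_add_one_iff.mp h1
  linarith [hx i j]

theorem mem_N_add {z y d : Pt} (h : y ∈ N z) (hd : ∀ i, ∃ m : ℤ, d i - d 5 = m) :
    y + d ∈ N (z + d) := by
  intro i j
  obtain ⟨a, ha⟩ := hd i
  obtain ⟨b, hb⟩ := hd j
  have e : (z + d) i - (z + d) j = (z i - z j) + ((a - b : ℤ) : ℝ) := by
    push_cast [Pi.add_apply]; linarith
  rw [e, Int.floor_add_intCast]
  push_cast [Pi.add_apply]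
  linarith [h i j]

theorem mem_N_const {z y : Pt} (h : y ∈ N z) (c : ℝ) : (fun i => y i + c) ∈ N z := by
  intro i j
  have := h i j
  linarith

theorem No3.add {z d : Pt} (h : No3 z) (hd : ∀ i, ∃ m : ℤ, d i - d 5 = m) : No3 (z + d) := by
  rintro i j k h1 h2 h3 ⟨⟨m, hm⟩, ⟨l, hl⟩⟩
  obtain ⟨a, ha⟩ := hd i
  obtain ⟨b, hb⟩ := hd j
  obtain ⟨c, hc⟩ := hd k
  simp only [Pi.add_apply] at hm hl
  refine h i j k h1 h2 h3 ⟨⟨m - a + b, ?_⟩, ⟨l - a + c, ?_⟩⟩ <;> push_cast <;> linarith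

/-- The integer part of `y i - y j`, ties being broken by regarding the point with the smaller
index as lying slightly further along the circle. -/
def kk (y : Pt) (i j : Fin 6) : ℤ := if i ≤ j then ⌊y i - y j⌋ else ⌈y i - y j⌉ - 1

theorem le_kk {y : Pt} {i j : Fin 6} {m : ℤ} :
    m ≤ kk y i j ↔ (i ≤ j ∧ (m : ℝ) ≤ y i - y j) ∨ (j < i ∧ (m : ℝ) < y i - y j) := by
  unfold kk
  split_ifs with h
  · simp [Int.le_floor, h, not_lt.mpr h]
  · have h' := not_le.mp h
    rw [Int.le_sub_one_iff, Int.lt_ceil]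
    simp [h, h']

theorem kk_lt {y : Pt} {i j : Fin 6} {m : ℤ} :
    kk y i j < m ↔ (i ≤ j ∧ y i - y j < m) ∨ (j < i ∧ y i - y j ≤ m) := by
  rw [← not_le, le_kk]
  rcases le_or_gt i j with h | h
  · simp [h, not_lt.mpr h]
  · simp [h, not_le.mpr h]

theorem kk_self (y : Pt) (i : Fin 6) : kk y i i = 0 := by simp [kk]

theorem kk_symm (y : Pt) {i j : Fin 6} (h : i ≠ j) : kk y j i = -1 - kk y i j := by
  apply le_antisymm
  · rw [← Int.lt_add_one_iff, kk_lt]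
    have := (le_kk (y := y) (i := i) (j := j)).mp le_rfl
    push_cast
    rcases this with ⟨h1, h2⟩ | ⟨h1, h2⟩
    · exact .inr ⟨lt_of_le_of_ne h1 h, by linarith⟩
    · exact .inl ⟨h1.le, by linarith⟩
  · rw [le_kk]
    have := (kk_lt (y := y) (i := i) (j := j)).mp (Int.lt_succ _)
    push_cast at this ⊢
    rcases this with ⟨h1, h2⟩ | ⟨h1, h2⟩
    · exact .inr ⟨lt_of_le_of_ne h1 h, by linarith⟩
    · exact .inl ⟨h1.le, by linarith⟩

theorem kk_add_le (y : Pt) (i j l : Fin 6) : kk y i j + kk y j l ≤ kk y i l := by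
  rw [le_kk]
  have h1 := (le_kk (y := y) (i := i) (j := j)).mp le_rfl
  have h2 := (le_kk (y := y) (i := j) (j := l)).mp le_rfl
  push_cast
  rcases h1 with ⟨h1, h1'⟩ | ⟨h1, h1'⟩ <;> rcases h2 with ⟨h2, h2'⟩ | ⟨h2, h2'⟩
  · exact .inl ⟨h1.trans h2, by linarith⟩
  · rcases le_or_gt i l with h | h
    · exact .inl ⟨h, by linarith⟩
    · exact .inr ⟨h, by linarith⟩
  · rcases le_or_gt i l with h | h
    · exact .inl ⟨h, by linarith⟩
    · exact .inr ⟨h, by linarith⟩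
  · exact .inr ⟨h2.trans h1, by linarith⟩

theorem kk_le_add (y : Pt) (i j l : Fin 6) : kk y i l ≤ kk y i j + kk y j l + 1 := by
  rcases eq_or_ne j l with rfl | h
  · simp [kk_self]
  · have h1 := kk_add_le y i l j
    have h2 := kk_symm y h
    omega

/-- The position of point `i`: a lift to `ℤ` of its rank in the cyclic order of the six points. -/
def nn (y : Pt) (i : Fin 6) : ℤ := ∑ l, kk y i l

theorem nn_sub (y : Pt) {i j : Fin 6} (h : i ≠ j) :
    6 * kk y i j + 1 ≤ nn y i - nn y j ∧ nn y i - nn y j ≤ 6 * kk y i j + 5 := by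
  have e : nn y i - nn y j = ∑ l, (kk y i l - kk y j l) := by
    rw [Finset.sum_sub_distrib]; rfl
  have e2 : nn y i - nn y j - 6 * kk y i j = ∑ l, (kk y i l - kk y j l - kk y i j) := by
    rw [Finset.sum_sub_distrib, ← e]; simp
  have b0 : ∀ l, 0 ≤ kk y i l - kk y j l - kk y i j := fun l => by
    have := kk_add_le y i j l; omega
  have b1 : ∀ l, kk y i l - kk y j l - kk y i j ≤ 1 := fun l => by
    have := kk_le_add y i j l; omega
  have ei : kk y i i - kk y j i - kk y i j = 1 := by
    rw [kk_self, kk_symm y h]; ring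
  have ej : kk y i j - kk y j j - kk y i j = 0 := by
    rw [kk_self]; ring
  constructor
  · have := Finset.single_le_sum (fun l _ => b0 l) (Finset.mem_univ i)
    rw [ei, ← e2] at this
    linarith
  · have : ∑ l, (kk y i l - kk y j l - kk y i j) ≤ ∑ l, (if l = j then 0 else 1 : ℤ) :=
      Finset.sum_le_sum fun l _ => by
        split_ifs with hl
        · subst hl; rw [ej]
        · exact b1 l
    rw [← e2] at this
    have h5 : ∀ j : Fin 6, ∑ l, (if l = j then 0 else 1 : ℤ) = 5 := by decide
    linarith [h5 j]

/-- Six integers with distinct residues modulo six. -/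
def Dist (n : Fin 6 → ℤ) : Prop := Function.Injective fun i => (n i : ZMod 6)

theorem Dist.ne {n : Fin 6 → ℤ} (h : Dist n) {i j : Fin 6} (hij : i ≠ j) (k : ℤ) :
    n i - n j ≠ 6 * k := by
  intro e
  apply hij
  apply h
  simp only
  rw [← sub_eq_zero, ← Int.cast_sub, e]
  exact (ZMod.intCast_zmod_eq_zero_iff_dvd _ 6).mpr ⟨k, by push_cast; ring⟩

theorem dist_of {n : Fin 6 → ℤ} (h : ∀ i j, i ≠ j → ∀ k : ℤ, n i - n j ≠ 6 * k) : Dist n := by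
  intro i j e
  by_contra hij
  simp only at e
  rw [← sub_eq_zero, ← Int.cast_sub, ZMod.intCast_zmod_eq_zero_iff_dvd] at e
  obtain ⟨k, hk⟩ := e
  exact h i j hij k (by push_cast at hk; exact hk)

theorem nn_dist (y : Pt) : Dist (nn y) := dist_of fun i j h k e => by
  have := nn_sub y h
  omega

theorem sum_nn (y : Pt) : ∑ i, nn y i = -15 := by
  simp only [nn, Fin.sum_univ_six, kk_self]
  have h (i j : Fin 6) (hij : i ≠ j) := kk_symm y hij
  rw [h 0 1 (by decide), h 0 2 (by decide), h 0 3 (by decide), h 0 4 (by decide),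
    h 0 5 (by decide), h 1 2 (by decide), h 1 3 (by decide), h 1 4 (by decide), h 1 5 (by decide),
    h 2 3 (by decide), h 2 4 (by decide), h 2 5 (by decide), h 3 4 (by decide), h 3 5 (by decide),
    h 4 5 (by decide)]
  ring

/-- The lattice point with sixth-integral coordinates `n i / 6`. -/
def six (n : Fin 6 → ℤ) : Pt := fun i => (n i : ℝ) / 6

theorem floor_six (n : Fin 6 → ℤ) (i j : Fin 6) : ⌊six n i - six n j⌋ = (n i - n j) / 6 := by
  rw [Int.floor_eq_iff]
  have h1 := Int.mul_ediv_add_emod (n i - n j) 6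
  have h2 := Int.emod_nonneg (n i - n j) (by norm_num : (6 : ℤ) ≠ 0)
  have h3 := Int.emod_lt_of_pos (n i - n j) (by norm_num : (0 : ℤ) < 6)
  have h1' : (6 : ℝ) * ((n i - n j) / 6 : ℤ) + ((n i - n j) % 6 : ℤ) = n i - n j := by
    exact_mod_cast h1
  have h2' : (0 : ℝ) ≤ ((n i - n j) % 6 : ℤ) := by exact_mod_cast h2
  have h3' : (((n i - n j) % 6 : ℤ) : ℝ) < 6 := by exact_mod_cast h3
  simp only [six]
  constructor <;> linarith

theorem six_no_tie {n : Fin 6 → ℤ} (h : Dist n) {i j : Fin 6} (hij : i ≠ j) (m : ℤ) :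
    six n i - six n j ≠ m := by
  intro e
  apply h.ne hij m
  simp only [six] at e
  have : (n i : ℝ) - n j = 6 * m := by linarith
  exact_mod_cast this

theorem no3_six {n : Fin 6 → ℤ} (h : Dist n) : No3 (six n) := by
  rintro i j k h1 h2 h3 ⟨⟨m, hm⟩, -⟩
  exact six_no_tie h h1 m hm

theorem kk_six {n : Fin 6 → ℤ} (h : Dist n) (i j : Fin 6) : kk (six n) i j = (n i - n j) / 6 := by
  unfold kk
  split_ifs with hij
  · exact floor_six n i j
  · rw [← floor_six]
    have hne : i ≠ j := fun e => hij e.le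
    have h1 : ⌈six n i - six n j⌉ = ⌊six n i - six n j⌋ + 1 := by
      rw [Int.ceil_eq_iff]
      constructor
      · push_cast
        have : (⌊six n i - six n j⌋ : ℝ) ≤ six n i - six n j := Int.floor_le _
        rcases eq_or_lt_of_le this with e | e
        · exact absurd e.symm (six_no_tie h hne _)
        · linarith
      · push_cast; exact (Int.lt_floor_add_one _).le
    omega

theorem nn_six {n : Fin 6 → ℤ} (h : Dist n) (hs : ∑ i, n i = -15) : nn (six n) = n := by
  funext i
  have e1 : ∀ l, 6 * kk (six n) i l = n i - n l - (n i - n l) % 6 := fun l => by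
    rw [kk_six h]
    have := Int.mul_ediv_add_emod (n i - n l) 6
    linarith
  have e2 : ∑ l, (n i - n l) % 6 = 15 := by
    have h1 : ∀ l, (n i - n l) % 6 = (((n i : ZMod 6) - (n l : ZMod 6)).val : ℤ) := fun l => by
      rw [← Int.cast_sub, ZMod.val_intCast]; rfl
    simp only [h1]
    have hb : Function.Bijective fun l => (n i : ZMod 6) - (n l : ZMod 6) := by
      rw [Fintype.bijective_iff_injective_and_card]
      refine ⟨fun a b e => h (sub_right_injective e), by simp⟩
    rw [hb.sum_comp fun t : ZMod 6 => (t.val : ℤ)]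
    rfl
  have e3 : 6 * nn (six n) i = 6 * n i := by
    rw [nn, Finset.mul_sum]
    simp only [e1, Finset.sum_sub_distrib]
    rw [e2, hs]
    simp
  omega

theorem six_nn_mem (y : Pt) : six (nn y) ∈ N y := by
  intro i j
  rcases eq_or_ne i j with rfl | h
  · simp
  · have h1 := (nn_sub y h).2
    have h2 : kk y i j ≤ ⌊y i - y j⌋ := by
      rw [Int.le_floor]
      rcases le_kk.mp (le_refl (kk y i j)) with h | h
      exacts [h.2, h.2.le]
    have h3 : (nn y i : ℝ) - nn y j ≤ 6 * ⌊y i - y j⌋ + 5 := by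
      have : nn y i - nn y j ≤ 6 * ⌊y i - y j⌋ + 5 := by omega
      exact_mod_cast this
    simp only [six]
    linarith

theorem kk_congr {y y' : Pt} {i j : Fin 6} (h : y' i - y' j = y i - y j) : kk y' i j = kk y i j := by
  simp only [kk, h]

theorem nn_congr {y y' : Pt} (h : ∀ i j, y' i - y' j = y i - y j) : nn y' = nn y :=
  funext fun i => Finset.sum_congr rfl fun j _ => kk_congr (h i j)

/-- At a generic sextuple with all differences sixth-integral and distinct residues, the positions
recover the sextuple up to a translation. -/
theorem nn_lattice {y : Pt} {n : Fin 6 → ℤ} (hn : Dist n)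
    (h : ∀ i j, y i - y j = six n i - six n j) (i j : Fin 6) :
    nn y i - nn y j = n i - n j := by
  obtain ⟨s, hs⟩ : ∃ s : ℤ, ∑ i, n i = 6 * s + 15 := by
    have hb : Function.Bijective fun l => (n l : ZMod 6) := by
      rw [Fintype.bijective_iff_injective_and_card]
      exact ⟨hn, by simp⟩
    have h2 : ((∑ i, n i - 15 : ℤ) : ZMod 6) = 0 := by
      push_cast
      rw [hb.sum_comp fun t : ZMod 6 => t]
      rfl
    rw [ZMod.intCast_zmod_eq_zero_iff_dvd] at h2
    obtain ⟨k, hk⟩ := h2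
    exact ⟨k, by push_cast at hk; linarith⟩
  have hn' : Dist fun i => n i - (s + 5) := dist_of fun a b hab k e =>
    hn.ne hab k (by linarith)
  have h3 := nn_six hn' (by rw [Finset.sum_sub_distrib, hs]; simp; ring)
  have h4 : nn y = nn (six fun i => n i - (s + 5)) := nn_congr fun a b => by
    rw [h]; simp only [six]; push_cast; ring
  rw [h4, h3]
  ring

/-- The points `i < j` coincide at `z` and have changed their order at `y`. -/
def Cr (z y : Pt) (i j : Fin 6) : Prop := i < j ∧ ∃ m : ℤ, z i - z j = m ∧ y i - y j < m

theorem Cr.unique {z y y' : Pt} (hz : No3 z) {i j a b : Fin 6} (h : Cr z y i j) (h' : Cr z y' a b)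
    (hm : a = i ∨ a = j ∨ b = i ∨ b = j) : a = i ∧ b = j := by
  obtain ⟨h1, m, hm1, -⟩ := h
  obtain ⟨h2, m', hm2, -⟩ := h'
  have hm1' : z j - z i = ((-m : ℤ) : ℝ) := by push_cast; linarith
  have hm2' : z b - z a = ((-m' : ℤ) : ℝ) := by push_cast; linarith
  rcases hm with rfl | rfl | rfl | rfl
  · refine ⟨rfl, ?_⟩
    by_contra hb
    exact hz a j b h1.ne h2.ne (Ne.symm hb) ⟨⟨_, hm1⟩, ⟨_, hm2⟩⟩
  · exact (hz a i b h1.ne' h2.ne (h1.trans h2).ne ⟨⟨_, hm1'⟩, ⟨_, hm2⟩⟩).elim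
  · exact (hz b j a h1.ne h2.ne' (h2.trans h1).ne' ⟨⟨_, hm1⟩, ⟨_, hm2'⟩⟩).elim
  · refine ⟨?_, rfl⟩
    by_contra ha
    exact hz b i a h1.ne' h2.ne' (Ne.symm ha) ⟨⟨_, hm1'⟩, ⟨_, hm2'⟩⟩

theorem kk_mem {z y : Pt} (h : y ∈ N z) {i j : Fin 6} (hij : i < j) (hc : ¬Cr z y i j) :
    kk y i j = kk z i j := by
  have h1 : kk z i j = ⌊z i - z j⌋ := if_pos hij.le
  have h2 : kk y i j = ⌊y i - y j⌋ := if_pos hij.le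
  rw [h1, h2, Int.floor_eq_iff]
  refine ⟨?_, h i j⟩
  by_contra hlt
  rw [not_le] at hlt
  have h3 := h j i
  have h4 : ⌊z i - z j⌋ < ⌊z j - z i⌋ + 1 + 2 * ⌊z i - z j⌋ := by
    have : (⌊z i - z j⌋ : ℝ) < ⌊z j - z i⌋ + 1 + 2 * ⌊z i - z j⌋ := by linarith
    exact_mod_cast this
  have h5 : (-⌊z i - z j⌋ : ℤ) ≤ ⌊z j - z i⌋ := by omega
  rw [Int.le_floor] at h5
  push_cast at h5
  have h6 := Int.floor_le (z i - z j)
  exact hc ⟨hij, ⌊z i - z j⌋, by linarith, hlt⟩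

theorem kk_cr {z y : Pt} (h : y ∈ N z) {i j : Fin 6} (hc : Cr z y i j) :
    kk y i j = kk z i j - 1 := by
  obtain ⟨hij, m, hm, hy⟩ := hc
  have h1 : kk z i j = m := by rw [kk, if_pos hij.le, hm, Int.floor_intCast]
  have h2 : kk y i j = ⌊y i - y j⌋ := if_pos hij.le
  rw [h1, h2, Int.floor_eq_iff]
  have h3 := h j i
  have h4 : z j - z i = ((-m : ℤ) : ℝ) := by push_cast; linarith
  rw [h4, Int.floor_intCast] at h3
  push_cast at h3 ⊢
  constructor <;> linarith

theorem nn_fix {z y : Pt} (h : y ∈ N z) {a : Fin 6} (h1 : ∀ b, ¬Cr z y a b)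
    (h2 : ∀ b, ¬Cr z y b a) : nn y a = nn z a := by
  refine Finset.sum_congr rfl fun l _ => ?_
  rcases lt_trichotomy a l with hl | rfl | hl
  · exact kk_mem h hl (h1 l)
  · rw [kk_self, kk_self]
  · rw [kk_symm y hl.ne, kk_symm z hl.ne, kk_mem h hl (h2 l)]

theorem nn_cr {z y : Pt} (hz : No3 z) (h : y ∈ N z) {i j : Fin 6} (hc : Cr z y i j) :
    nn y i = nn z i - 1 ∧ nn y j = nn z j + 1 := by
  have key : ∀ (a b : Fin 6) (ε : ℤ), a ≠ b → kk y a b = kk z a b + ε →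
      (∀ l, l ≠ a → l ≠ b → kk y a l = kk z a l) → nn y a = nn z a + ε := by
    intro a b ε hab e1 e2
    have : ∀ l, kk y a l = kk z a l + if l = b then ε else 0 := fun l => by
      split_ifs with hl
      · subst hl; exact e1
      · rcases eq_or_ne l a with rfl | hla
        · simp [kk_self]
        · rw [e2 l hla hl, add_zero]
    simp only [nn, this, Finset.sum_add_distrib, Finset.sum_ite_eq', Finset.mem_univ, if_true]
  have hij := hc.1
  constructor
  · refine key i j (-1) hij.ne (by rw [kk_cr h hc]; ring) fun l hl1 hl2 => ?_
    rcases lt_or_gt_of_ne hl1 with hl | hl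
    · rw [kk_symm y hl.ne, kk_symm z hl.ne, kk_mem h hl]
      exact fun hc' => hl1 (hc.unique hz hc' (by tauto)).1
    · exact kk_mem h hl fun hc' => hl2 (hc.unique hz hc' (by tauto)).2
  · refine key j i 1 hij.ne' (by rw [kk_symm y hij.ne, kk_symm z hij.ne, kk_cr h hc]; ring)
      fun l hl1 hl2 => ?_
    rcases lt_or_gt_of_ne hl1 with hl | hl
    · rw [kk_symm y hl.ne, kk_symm z hl.ne, kk_mem h hl]
      exact fun hc' => hl2 (hc.unique hz hc' (by tauto)).1
    · exact kk_mem h hl fun hc' => hl1 (hc.unique hz hc' (by tauto)).2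

/-- Two coinciding points occupy consecutive positions. -/
theorem nn_tie {z : Pt} (hz : No3 z) {i j : Fin 6} (hij : i < j) {m : ℤ} (hm : z i - z j = m) :
    nn z i = nn z j + 6 * m + 1 := by
  have k1 : kk z i j = m := by rw [kk, if_pos hij.le, hm, Int.floor_intCast]
  have key : ∀ l, kk z i l = kk z j l + m + if l = i then 1 else 0 := fun l => by
    split_ifs with hl
    · subst hl; rw [kk_self, kk_symm z hij.ne, k1]; ring
    · rcases eq_or_ne l j with rfl | hl2
      · rw [kk_self, k1]; ring
      · have h1 := kk_add_le z i j l
        have h2 := kk_le_add z i j l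
        rw [k1] at h1 h2
        by_contra hne
        have h3 : kk z i l = kk z j l + m + 1 := by omega
        have h4 : kk z j l + m + 1 ≤ kk z i l := h3.ge
        have h5 : kk z j l < kk z j l + 1 := by omega
        rw [le_kk] at h4
        rw [kk_lt] at h5
        push_cast at h4 h5
        have h6 : z i - z l = ((kk z j l + m + 1 : ℤ) : ℝ) := by
          push_cast
          rcases h4 with h4 | h4 <;> rcases h5 with h5 | h5 <;> linarith [h4.2, h5.2]
        exact hz i j l hij.ne (Ne.symm hl) (Ne.symm hl2) ⟨⟨m, hm⟩, ⟨_, h6⟩⟩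
  have : nn z i = ∑ l, (kk z j l + m + if l = i then 1 else 0) :=
    Finset.sum_congr rfl fun l _ => key l
  rw [this]
  simp only [Finset.sum_add_distrib, Finset.sum_ite_eq', Finset.mem_univ, if_true, nn]
  simp

theorem cr_split {z x y : Pt} (hx : x ∈ N z) (hy : y ∈ N x) {i j : Fin 6} :
    Cr z y i j ↔ Cr z x i j ∨ Cr x y i j := by
  constructor
  · rintro ⟨hij, m, hm, hlt⟩
    rcases lt_trichotomy (x i - x j) m with h | h | h
    · exact .inl ⟨hij, m, hm, h⟩
    · exact .inr ⟨hij, m, h, hlt⟩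
    · have h1 := hy j i
      have h2 : ⌊x j - x i⌋ < -m := by rw [Int.floor_lt]; push_cast; linarith
      have h3 : (⌊x j - x i⌋ : ℝ) + 1 ≤ -m := by exact_mod_cast h2
      linarith
  · rintro (⟨hij, m, hm, hlt⟩ | ⟨hij, m, hm, hlt⟩)
    · refine ⟨hij, m, hm, ?_⟩
      have h1 := hy i j
      have h2 : ⌊x i - x j⌋ < m := by rw [Int.floor_lt]; exact hlt
      have h3 : (⌊x i - x j⌋ : ℝ) + 1 ≤ m := by exact_mod_cast h2
      linarith
    · exact ⟨hij, m, tie_of_mem hx hm, hlt⟩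

theorem cr_congr {z z' y y' : Pt} (hz : ∀ i j, z' i - z' j = z i - z j)
    (hy : ∀ i j, y' i - y' j = y i - y j) (i j : Fin 6) : Cr z' y' i j ↔ Cr z y i j := by
  simp only [Cr, hz, hy]

end Cfg

/-! ### Moving configurations along short segments -/

namespace Cfg

open Path.Homotopic (Quotient)

/-- The configuration on the circle, rotated so that its last point is `1`, with lift `y`. -/
def EE (y : Pt) : Fin 6 → Circle := fun j => Circle.exp (2 * π * (y j - y 5))

theorem exp_eq_iff (a b : ℝ) :
    Circle.exp (2 * π * a) = Circle.exp (2 * π * b) ↔ ∃ m : ℤ, a - b = m := by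
  rw [Circle.exp_eq_exp]
  have hpi : (2 * π) ≠ 0 := by positivity
  refine exists_congr fun m => ?_
  rw [show 2 * π * b + m * (2 * π) = 2 * π * (b + m) by ring, mul_right_inj' hpi]
  constructor <;> intro h <;> linarith

theorem EE_mem {y : Pt} (h : No3 y) : EE y ∈ QSet 5 := by
  constructor
  · show Circle.exp (2 * π * (y 5 - y 5)) = 1
    simp
  · rintro i j k hij hik hjk ⟨h1, h2⟩
    simp only [EE, exp_eq_iff] at h1 h2
    obtain ⟨m, hm⟩ := h1
    obtain ⟨l, hl⟩ := h2
    exact h i j k hij hik hjk ⟨⟨m, by linarith⟩, ⟨l, by linarith⟩⟩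

open Classical in
/-- `EE y` as a point of the configuration space, the basepoint being a dummy value when three
coordinates of `y` coincide. -/
def Ept (y : Pt) : QSet 5 := if h : No3 y then ⟨EE y, EE_mem h⟩ else Qbase 5

theorem Ept_val {y : Pt} (h : No3 y) : (Ept y : Fin 6 → Circle) = EE y := by
  rw [Ept, dif_pos h]

theorem EE_congr {y y' : Pt} (h : ∀ i, ∃ m : ℤ, (y' i - y i) - (y' 5 - y 5) = m) :
    EE y' = EE y := by
  funext i
  obtain ⟨m, hm⟩ := h i
  simp only [EE, exp_eq_iff]
  exact ⟨m, by linarith⟩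

theorem continuous_EE : Continuous EE := by
  unfold EE
  fun_prop

/-- The image in the configuration space of a path of sextuples. -/
def epath {y y' : Pt} (f : Path y y') (hf : ∀ t, No3 (f t)) : Path (Ept y) (Ept y') where
  toFun t := Ept (f t)
  continuous_toFun := by
    rw [continuous_induced_rng]
    have : (Subtype.val ∘ fun t => Ept (f t)) = fun t => EE (f t) :=
      funext fun t => Ept_val (hf t)
    rw [this]
    exact continuous_EE.comp f.continuous
  source' := by simp
  target' := by simp

theorem epath_apply {y y' : Pt} (f : Path y y') (hf : ∀ t, No3 (f t)) (t : unitInterval) :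
    epath f hf t = Ept (f t) := rfl

theorem epath_homotopic {z : Pt} (hz : No3 z) {y y' : Pt} (f g : Path y y') (hf : ∀ t, f t ∈ N z)
    (hg : ∀ t, g t ∈ N z) (hf' : ∀ t, No3 (f t)) (hg' : ∀ t, No3 (g t)) :
    (epath f hf').Homotopic (epath g hg') := by
  have hne : (N z).Nonempty := ⟨z, self_mem_N z⟩
  have : ContractibleSpace (N z) := (convex_N z).contractibleSpace hne
  have h0 : y ∈ N z := by simpa using hf 0
  have h1 : y' ∈ N z := by simpa using hf 1
  let lift (f : Path y y') (hf : ∀ t, f t ∈ N z) : Path (⟨y, h0⟩ : N z) ⟨y', h1⟩ :=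
    { toFun := fun t => ⟨f t, hf t⟩
      continuous_toFun := by fun_prop
      source' := by simp
      target' := by simp }
  let F : C(N z, QSet 5) :=
    { toFun := fun x => Ept x
      continuous_toFun := by
        rw [continuous_induced_rng]
        have : (Subtype.val ∘ fun x : N z => Ept x) = fun x : N z => EE x :=
          funext fun x => Ept_val (hz.of_mem x.2)
        rw [this]
        exact continuous_EE.comp continuous_subtype_val }
  exact (SimplyConnectedSpace.paths_homotopic (lift f hf) (lift g hg)).map F

/-- Homotopy classes of paths in the configuration space that start at the basepoint. -/
structure U : Type where
  /-- The endpoint. -/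
  fst : QSet 5
  /-- The path class. -/
  snd : Quotient (Qbase 5) fst

/-- Continuing a path class by another one. -/
def cat (u : U) {a b : QSet 5} (h : u.1 = a) (γ : Quotient a b) : U :=
  ⟨b, u.2.trans (γ.cast h rfl)⟩

theorem cat_cat (u : U) {a b c : QSet 5} (h : u.1 = a) (γ : Quotient a b) {b' : QSet 5}
    (h' : (cat u h γ).1 = b') (γ' : Quotient b' c) :
    cat (cat u h γ) h' γ' = cat u h (γ.trans (γ'.cast h' rfl)) := by
  subst h
  have : b = b' := h'
  subst this
  simp only [cat, Quotient.cast_rfl_rfl, Quotient.trans_assoc]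

theorem cat_congr (u : U) {a b a' b' : QSet 5} (h : u.1 = a) (h' : u.1 = a') (γ : Path a b)
    (γ' : Path a' b') (hγ : ∀ t, γ t = γ' t) : cat u h (.mk γ) = cat u h' (.mk γ') := by
  have e1 : a = a' := h.symm.trans h'
  have e2 : b = b' := by simpa using hγ 1
  subst e1 e2
  congr 2
  ext1
  exact funext hγ

theorem cat_refl (u : U) {a : QSet 5} (h : u.1 = a) : cat u h (.refl a) = u := by
  subst h
  obtain ⟨x, p⟩ := u
  simp [cat]

/-- The straight segment between two points of `N z` stays in `N z`. -/
theorem segment_mem {z y y' : Pt} (h : y ∈ N z) (h' : y' ∈ N z) (t : unitInterval) :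
    Path.segment y y' t ∈ N z := by
  rw [Path.segment_apply]
  exact (convex_N z).lineMap_mem h h' t.2

/-- Two sextuples lying in a common star. -/
def Near (y y' : Pt) : Prop := ∃ z, No3 z ∧ y ∈ N z ∧ y' ∈ N z

theorem Near.no3 {y y' : Pt} (h : Near y y') (t : unitInterval) : No3 (Path.segment y y' t) := by
  obtain ⟨z, hz, h1, h2⟩ := h
  exact hz.of_mem (segment_mem h1 h2 t)

open Classical in
/-- Prolonging a path class ending at `y` by the straight segment from `y` to `y'`, when the two
sextuples lie in a common star; otherwise nothing is done. -/
def mv (y y' : Pt) (u : U) : U :=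
  if h : u.1 = Ept y ∧ Near y y' then cat u h.1 (.mk (epath (Path.segment y y') h.2.no3)) else u

theorem mv_path {z : Pt} (hz : No3 z) {y y' : Pt} (f : Path y y') (hf : ∀ t, f t ∈ N z)
    (hf' : ∀ t, No3 (f t)) (u : U) (h : u.1 = Ept y) : mv y y' u = cat u h (.mk (epath f hf')) := by
  have h0 : y ∈ N z := by simpa using hf 0
  have h1 : y' ∈ N z := by simpa using hf 1
  rw [mv, dif_pos ⟨h, z, hz, h0, h1⟩]
  congr 1
  apply Path.Homotopic.Quotient.eq.mpr
  exact epath_homotopic hz _ _ (segment_mem h0 h1) hf _ _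

theorem mv_fst {y y' : Pt} {u : U} (h : u.1 = Ept y) (hn : Near y y') :
    (mv y y' u).1 = Ept y' := by
  rw [mv, dif_pos ⟨h, hn⟩]; rfl

theorem mv_mv {z y y' y'' : Pt} (hz : No3 z) (h : y ∈ N z) (h' : y' ∈ N z) (h'' : y'' ∈ N z)
    {u : U} (hu : u.1 = Ept y) : mv y' y'' (mv y y' u) = mv y y'' u := by
  have e1 := mv_path hz (Path.segment y y') (segment_mem h h')
    (fun t => hz.of_mem (segment_mem h h' t)) u hu
  have hu' : (mv y y' u).1 = Ept y' := mv_fst hu ⟨z, hz, h, h'⟩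
  have e2 := mv_path hz (Path.segment y' y'') (segment_mem h' h'')
    (fun t => hz.of_mem (segment_mem h' h'' t)) (mv y y' u) hu'
  have ht : ∀ t, (Path.segment y y').trans (Path.segment y' y'') t ∈ N z := fun t => by
    rw [Path.trans_apply]
    split_ifs
    exacts [segment_mem h h' _, segment_mem h' h'' _]
  rw [e2, mv_path hz ((Path.segment y y').trans (Path.segment y' y'')) ht
    (fun t => hz.of_mem (ht t)) u hu]
  have hu'' : (cat u hu (.mk (epath (Path.segment y y')
    (fun t => hz.of_mem (segment_mem h h' t))))).1 = Ept y' := rfl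
  have e3 : ∀ (w w' : U) (hw : w.1 = Ept y') (hw' : w'.1 = Ept y') (γ : Quotient (Ept y') (Ept y'')),
      w = w' → cat w hw γ = cat w' hw' γ := by
    rintro w _ hw hw' γ rfl; rfl
  rw [e3 _ _ hu' hu'' _ e1, cat_cat, Quotient.cast_rfl_rfl, ← Quotient.mk_trans]
  refine cat_congr _ _ _ _ _ fun t => ?_
  simp only [Path.trans_apply, epath_apply]
  split_ifs <;> rfl

theorem mv_eq {y y' x x' : Pt} (h : Near y y') (h' : Near x x')
    (hE : ∀ t : ℝ, EE (AffineMap.lineMap y y' t) = EE (AffineMap.lineMap x x' t)) (u : U) :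
    mv y y' u = mv x x' u := by
  have key : ∀ t : unitInterval, Ept (Path.segment y y' t) = Ept (Path.segment x x' t) := fun t => by
    apply Subtype.ext
    rw [Ept_val (h.no3 t), Ept_val (h'.no3 t)]
    exact hE t
  have k0 : Ept y = Ept x := by simpa using key 0
  by_cases hu : u.1 = Ept y
  · rw [mv, dif_pos ⟨hu, h⟩, mv, dif_pos ⟨hu.trans k0, h'⟩]
    exact cat_congr _ _ _ _ _ key
  · rw [mv, dif_neg (fun h => hu h.1), mv, dif_neg (fun h => hu (h.1.trans k0.symm))]

theorem mv_shift {y y' d d' : Pt} (h : Near y y') (hd : ∀ i, ∃ m : ℤ, d i - d 5 = m) (c : ℝ)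
    (hd' : ∀ i, d' i = d i + c) (u : U) : mv (y + d) (y' + d') u = mv y y' u := by
  obtain ⟨z, hz, h1, h2⟩ := h
  have e : y' + d' = fun i => (y' + d) i + c := by
    funext i; simp only [Pi.add_apply, hd']; ring
  refine mv_eq ⟨z + d, hz.add hd, mem_N_add h1 hd, ?_⟩ ⟨z, hz, h1, h2⟩ (fun t => ?_) u
  · rw [e]; exact mem_N_const (mem_N_add h2 hd) c
  · refine EE_congr fun i => ?_
    obtain ⟨m, hm⟩ := hd i
    refine ⟨m, ?_⟩
    simp only [AffineMap.lineMap_apply, vsub_eq_sub, vadd_eq_add, Pi.add_apply, Pi.smul_apply,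
      Pi.sub_apply, smul_eq_mul, hd']
    linear_combination hm

theorem mv_const {z y y' : Pt} (hz : No3 z) (h : y ∈ N z) (c : ℝ) (hc : ∀ i, y' i = y i + c)
    (u : U) : mv y y' u = u := by
  obtain rfl : y' = fun i => y i + c := funext hc
  by_cases hu : u.1 = Ept y
  · rw [mv, dif_pos ⟨hu, z, hz, h, mem_N_const h c⟩]
    conv_rhs => rw [← cat_refl u hu]
    rw [← Quotient.mk_refl]
    refine cat_congr _ _ _ _ _ fun t => ?_
    apply Subtype.ext
    rw [Path.refl_apply, Ept_val (hz.of_mem h)]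
    rw [epath_apply, Ept_val (hz.of_mem (segment_mem h (mem_N_const h c) t)), Path.segment_apply]
    refine EE_congr fun i => ⟨0, ?_⟩
    simp only [AffineMap.lineMap_apply, vsub_eq_sub, vadd_eq_add, Pi.add_apply, Pi.smul_apply,
      Pi.sub_apply, smul_eq_mul]
    push_cast
    ring
  · rw [mv, dif_neg (fun h => hu h.1)]

/-- Precomposition of path classes with loops. -/
instance : MulAction (FundamentalGroup (QSet 5) (Qbase 5)) U where
  smul g u := ⟨u.1, Quotient.trans (Quotient.symm (FundamentalGroup.toPath g)) u.2⟩
  one_smul u := by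
    obtain ⟨x, p⟩ := u
    show (⟨x, _⟩ : U) = ⟨x, p⟩
    congr 1
    have : Quotient.symm (Quotient.refl (Qbase 5)) = Quotient.refl (Qbase 5) := by
      rw [← Quotient.mk_refl, ← Quotient.mk_symm, Path.refl_symm]
    show Quotient.trans (Quotient.symm (Quotient.refl (Qbase 5))) p = p
    rw [this, Quotient.refl_trans]
  mul_smul g h u := by
    obtain ⟨x, p⟩ := u
    show (⟨x, _⟩ : U) = ⟨x, _⟩
    congr 1
    show ((g * h)⁻¹ : FundamentalGroup (QSet 5) (Qbase 5)).toPath.trans p =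
      (g⁻¹).toPath.trans ((h⁻¹).toPath.trans p)
    rw [mul_inv_rev, FundamentalGroup.mul_def]
    exact Quotient.trans_assoc _ _ _

theorem smul_fst (g : FundamentalGroup (QSet 5) (Qbase 5)) (u : U) : (g • u).1 = u.1 := rfl

theorem smul_cat (g : FundamentalGroup (QSet 5) (Qbase 5)) (u : U) {a b : QSet 5} (h : u.1 = a)
    (γ : Quotient a b) : cat (g • u) h γ = g • cat u h γ := by
  subst h
  show (⟨b, _⟩ : U) = ⟨b, _⟩
  congr 1
  exact Quotient.trans_assoc _ _ _

theorem mv_smul (g : FundamentalGroup (QSet 5) (Qbase 5)) (y y' : Pt) (u : U) :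
    mv y y' (g • u) = g • mv y y' u := by
  unfold mv
  by_cases h : u.1 = Ept y ∧ Near y y'
  · rw [dif_pos h, dif_pos (show (g • u).1 = Ept y ∧ Near y y' from h), smul_cat]
  · rw [dif_neg h, dif_neg (show ¬((g • u).1 = Ept y ∧ Near y y') from h)]

theorem inv_smul_mk (g : FundamentalGroup (QSet 5) (Qbase 5)) {x : QSet 5}
    (p : Quotient (Qbase 5) x) : g⁻¹ • U.mk x p = ⟨x, g.toPath.trans p⟩ := by
  show U.mk x ((g⁻¹)⁻¹.toPath.trans p) = _
  rw [inv_inv]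

theorem smul_unique (u u' : U) (h : u.1 = u'.1) :
    ∃! g : FundamentalGroup (QSet 5) (Qbase 5), g • u = u' := by
  obtain ⟨x, p⟩ := u
  obtain ⟨x', p'⟩ := u'
  obtain rfl : x = x' := h
  refine ⟨(FundamentalGroup.fromPath (p'.trans p.symm))⁻¹, ?_, fun g hg => ?_⟩
  · dsimp only
    rw [inv_smul_mk]
    show U.mk x ((p'.trans p.symm).trans p) = _
    rw [Quotient.trans_assoc, Quotient.symm_trans, Quotient.trans_refl]
  · dsimp only at hg
    rw [← inv_inv g, inv_smul_mk, U.mk.injEq] at hg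
    have h2 : (g⁻¹).toPath.trans p = p' := eq_of_heq hg.2
    rw [eq_comm, inv_eq_iff_eq_inv]
    show p'.trans p.symm = (g⁻¹).toPath
    rw [← h2, Quotient.trans_assoc, Quotient.trans_symm, Quotient.trans_refl]

end Cfg

/-! ### The chambers of the wall complement -/

namespace Cfg

/-- The effect on positions of exchanging the points at the places `t` and `t + 1`. -/
def d1 (t p : ZMod 6) : ℤ := (if p = t then 1 else 0) - (if p = t + 1 then 1 else 0)

/-- The sextuple with coordinates `n i / 6`, displaced by a half step `f` depending on the label. -/
def half (n : Fin 6 → ℤ) (f : Fin 6 → ℤ) : Pt := fun i => (2 * n i + f i : ℝ) / 12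

/-- The integers `n` represent the places `v` up to a rotation. -/
def Rep (n : Fin 6 → ℤ) (v : Lab) : Prop := ∃ c : ZMod 6, ∀ i, (n i : ZMod 6) + c = v i

theorem Rep.sub {n : Fin 6 → ℤ} {v : Lab} (h : Rep n v) (i j : Fin 6) :
    ∃ k : ℤ, n i - n j = 6 * k + (v i - v j).val := by
  obtain ⟨c, hc⟩ := h
  have : ((n i - n j - (v i - v j).val : ℤ) : ZMod 6) = 0 := by
    push_cast
    rw [ZMod.natCast_zmod_val, ← hc, ← hc]
    ring
  rw [ZMod.intCast_zmod_eq_zero_iff_dvd] at this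
  obtain ⟨k, hk⟩ := this
  exact ⟨k, by push_cast at hk; linarith⟩

theorem Rep.dist {n : Fin 6 → ℤ} {v : Lab} (h : Rep n v) : Dist n := by
  obtain ⟨c, hc⟩ := h
  intro i j e
  apply v.injective
  rw [← hc, ← hc]
  exact congrArg (· + c) e

theorem mem_half {n : Fin 6 → ℤ} {v : Lab} (h : Rep n v) {f g : ZMod 6 → ℤ}
    (hfg : ∀ p p', p ≠ p' →
      12 * ((((p - p').val : ℤ) + g p - g p') / 6) ≤ 2 * (p - p').val + f p - f p') :
    six (fun i => n i + g (v i)) ∈ N (half n fun i => f (v i)) := by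
  intro i j
  rcases eq_or_ne i j with rfl | hij
  · simp
  obtain ⟨k, hk⟩ := h.sub i j
  have h1 := hfg (v i) (v j) (v.injective.ne hij)
  generalize ((v i - v j).val : ℤ) = d at hk h1
  have h2 : ⌊half n (fun i => f (v i)) i - half n (fun i => f (v i)) j⌋ ≥
      k + (d + g (v i) - g (v j)) / 6 := by
    rw [ge_iff_le, Int.le_floor]
    have h3 : 12 * (k + (d + g (v i) - g (v j)) / 6) ≤ 2 * (n i - n j) + f (v i) - f (v j) := by
      linarith
    have h4 : (12 * ((k + (d + g (v i) - g (v j)) / 6 : ℤ) : ℝ)) ≤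
        2 * (n i - n j) + f (v i) - f (v j) := by exact_mod_cast h3
    simp only [half]
    linarith
  have h5 : n i + g (v i) - (n j + g (v j)) <
      6 * ⌊half n (fun i => f (v i)) i - half n (fun i => f (v i)) j⌋ + 6 := by omega
  have h6 : (n i + g (v i) - (n j + g (v j)) : ℝ) <
      6 * ⌊half n (fun i => f (v i)) i - half n (fun i => f (v i)) j⌋ + 6 := by exact_mod_cast h5
  simp only [six]
  push_cast
  linarith

theorem no3_half {n : Fin 6 → ℤ} {v : Lab} (h : Rep n v) {f : ZMod 6 → ℤ}
    (hf : ∀ p p' p'', p ≠ p' → p ≠ p'' → p' ≠ p'' →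
      ¬((2 * (p - p').val + f p - f p') % 12 = 0 ∧ (2 * (p - p'').val + f p - f p'') % 12 = 0)) :
    No3 (half n fun i => f (v i)) := by
  have key : ∀ i j, (∃ m : ℤ, half n (fun i => f (v i)) i - half n (fun i => f (v i)) j = m) →
      (2 * (v i - v j).val + f (v i) - f (v j)) % 12 = 0 := by
    rintro i j ⟨m, hm⟩
    obtain ⟨k, hk⟩ := h.sub i j
    simp only [half] at hm
    have h1 : (2 * (n i - n j) + f (v i) - f (v j) : ℝ) = 12 * m := by linarith
    have h2 : 2 * (n i - n j) + f (v i) - f (v j) = 12 * m := by exact_mod_cast h1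
    omega
  rintro i j k hij hik hjk ⟨h1, h2⟩
  exact hf (v i) (v j) (v k) (v.injective.ne hij) (v.injective.ne hik) (v.injective.ne hjk)
    ⟨key i j h1, key i k h2⟩

theorem no3_half1 {n : Fin 6 → ℤ} {v : Lab} (h : Rep n v) (t : ZMod 6) :
    No3 (half n fun i => d1 t (v i)) :=
  no3_half h (by revert t; decide)

theorem mem_half1 {n : Fin 6 → ℤ} {v : Lab} (h : Rep n v) (t : ZMod 6) :
    six n ∈ N (half n fun i => d1 t (v i)) := by
  have := mem_half h (f := d1 t) (g := fun _ => 0) (by revert t; decide)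
  simpa using this

theorem mem_half1' {n : Fin 6 → ℤ} {v : Lab} (h : Rep n v) (t : ZMod 6) :
    six (fun i => n i + d1 t (v i)) ∈ N (half n fun i => d1 t (v i)) :=
  mem_half h (f := d1 t) (g := d1 t) (by revert t; decide)

theorem near_step {n : Fin 6 → ℤ} {v : Lab} (h : Rep n v) (t : ZMod 6) :
    Near (six n) (six fun i => n i + d1 t (v i)) :=
  ⟨_, no3_half1 h t, mem_half1 h t, mem_half1' h t⟩

/-- A common star for a square of two commuting exchanges. -/
theorem near_square {n : Fin 6 → ℤ} {v : Lab} (h : Rep n v) (t k : ZMod 6) (hk : k = 2 ∨ k = 3) :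
    ∃ z, No3 z ∧ six n ∈ N z ∧ (six fun i => n i + d1 t (v i)) ∈ N z ∧
      (six fun i => n i + d1 (t + k) (v i)) ∈ N z ∧
      (six fun i => n i + d1 t (v i) + d1 (t + k) (v i)) ∈ N z := by
  refine ⟨half n fun i => d1 t (v i) + d1 (t + k) (v i),
    no3_half h (f := fun p => d1 t p + d1 (t + k) p) ?_, ?_, ?_, ?_, ?_⟩
  · rcases hk with rfl | rfl <;> revert t <;> decide
  · have := mem_half h (f := fun p => d1 t p + d1 (t + k) p) (g := fun _ => 0)
      (by rcases hk with rfl | rfl <;> revert t <;> decide)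
    simpa using this
  · exact mem_half h (f := fun p => d1 t p + d1 (t + k) p) (g := d1 t)
      (by rcases hk with rfl | rfl <;> revert t <;> decide)
  · exact mem_half h (f := fun p => d1 t p + d1 (t + k) p) (g := d1 (t + k))
      (by rcases hk with rfl | rfl <;> revert t <;> decide)
  · have := mem_half h (f := fun p => d1 t p + d1 (t + k) p) (g := fun p => d1 t p + d1 (t + k) p)
      (by rcases hk with rfl | rfl <;> revert t <;> decide)
    simpa only [add_assoc] using this

/-- The standard integers representing a label. -/
def lv (v : Lab) : Fin 6 → ℤ := fun i => (v i).val

theorem rep_lv (v : Lab) : Rep (lv v) v := ⟨0, fun i => by simp [lv]⟩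

/-- The configuration of six equally spaced points arranged according to a label. -/
def P (v : Lab) : QSet 5 := Ept (six (lv v))

theorem Ept_eq {y y' : Pt} (h : No3 y) (h' : No3 y')
    (he : ∀ i, ∃ m : ℤ, (y' i - y i) - (y' 5 - y 5) = m) : Ept y' = Ept y := by
  apply Subtype.ext
  rw [Ept_val h, Ept_val h', EE_congr he]

theorem Rep.shift {n n' : Fin 6 → ℤ} {v : Lab} (h : Rep n v) (h' : Rep n' v) (i : Fin 6) :
    ∃ m : ℤ, (six n' i - six n i) - (six n' 5 - six n 5) = m := by
  obtain ⟨k, hk⟩ := h.sub i 5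
  obtain ⟨k', hk'⟩ := h'.sub i 5
  refine ⟨k' - k, ?_⟩
  have h1 : (n' i - n' 5) - (n i - n 5) = 6 * (k' - k) := by linarith
  have h2 : ((n' i - n' 5) - (n i - n 5) : ℝ) = 6 * (k' - k) := by exact_mod_cast h1
  simp only [six]
  push_cast
  linarith

theorem Ept_rep {n : Fin 6 → ℤ} {v : Lab} (h : Rep n v) : Ept (six n) = P v :=
  Ept_eq (no3_six (rep_lv v).dist) (no3_six h.dist) ((rep_lv v).shift h)

theorem swap_d1 : ∀ t p : ZMod 6, Equiv.swap t (t + 1) p = p + (d1 t p : ZMod 6) := by decide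

theorem Rep.step {n : Fin 6 → ℤ} {v : Lab} (h : Rep n v) (t : ZMod 6) :
    Rep (fun i => n i + d1 t (v i)) (labS t v) := by
  obtain ⟨c, hc⟩ := h
  refine ⟨c, fun i => ?_⟩
  show _ = Equiv.swap t (t + 1) (v i)
  rw [swap_d1]
  push_cast
  linear_combination hc i

/-- Chambers: a label together with a homotopy class of paths to the corresponding evenly spaced
configuration. -/
def V : Type := {w : Lab × U // w.2.1 = P w.1}

instance : MulAction (FundamentalGroup (QSet 5) (Qbase 5)) V where
  smul g w := ⟨(w.1.1, g • w.1.2), w.2⟩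
  one_smul _ := Subtype.ext (Prod.ext rfl (one_smul _ _))
  mul_smul g h _ := Subtype.ext (Prod.ext rfl (mul_smul g h _))

/-- Crossing the wall where the points at the places `t` and `t + 1` coincide. -/
def sV (t : ZMod 6) (w : V) : V :=
  ⟨(labS t w.1.1, mv (six (lv w.1.1)) (six fun i => lv w.1.1 i + d1 t (w.1.1 i)) w.1.2), by
    dsimp only
    rw [mv_fst (w.2.trans (Ept_rep (rep_lv w.1.1)).symm) (near_step (rep_lv w.1.1) t)]
    exact Ept_rep ((rep_lv w.1.1).step t)⟩

theorem rep_R {n : Fin 6 → ℤ} {v : Lab} (h : Rep n v) : Rep n (labR v) := by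
  obtain ⟨c, hc⟩ := h
  refine ⟨c + 1, fun i => ?_⟩
  show _ = v i + 1
  rw [← hc]
  ring

theorem P_R (v : Lab) : P (labR v) = P v := (Ept_rep (rep_R (rep_lv v))).symm

/-- Renumbering the places cyclically. -/
def rV (w : V) : V := ⟨(labR w.1.1, w.1.2), w.2.trans (P_R _).symm⟩

theorem sV_eq (t : ZMod 6) (w : V) {n : Fin 6 → ℤ} (h : Rep n w.1.1) :
    (sV t w).1.2 = mv (six n) (six fun i => n i + d1 t (w.1.1 i)) w.1.2 := by
  have hd := (rep_lv w.1.1).shift h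
  have e := mv_shift (near_step (rep_lv w.1.1) t) (d := six n - six (lv w.1.1))
    (d' := six n - six (lv w.1.1)) hd 0 (fun i => by simp) w.1.2
  have e1 : six (lv w.1.1) + (six n - six (lv w.1.1)) = six n := by abel
  have e2 : (six fun i => lv w.1.1 i + d1 t (w.1.1 i)) + (six n - six (lv w.1.1)) =
      six fun i => n i + d1 t (w.1.1 i) := by
    funext i
    simp only [six, Pi.add_apply, Pi.sub_apply]
    push_cast
    ring
  rw [e1, e2] at e
  exact e.symm

theorem V_ext {w w' : V} (h1 : w.1.1 = w'.1.1) (h2 : w.1.2 = w'.1.2) : w = w' :=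
  Subtype.ext (Prod.ext h1 h2)

theorem V_at (w : V) {n : Fin 6 → ℤ} (h : Rep n w.1.1) : w.1.2.1 = Ept (six n) :=
  w.2.trans (Ept_rep h).symm

theorem sV_sV (t : ZMod 6) (w : V) : sV t (sV t w) = w := by
  have h := rep_lv w.1.1
  refine V_ext ?_ ?_
  · show labS t (labS t w.1.1) = w.1.1
    ext i : 1
    have : ∀ t p : ZMod 6, Equiv.swap t (t + 1) (Equiv.swap t (t + 1) p) = p := by decide
    exact this t _
  · have e := sV_eq t (sV t w) (h.step t)
    have e1 : (fun i => lv w.1.1 i + d1 t (w.1.1 i) + d1 t ((sV t w).1.1 i)) = lv w.1.1 := by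
      funext i
      have : ∀ t p : ZMod 6, d1 t p + d1 t (Equiv.swap t (t + 1) p) = 0 := by decide
      have h2 : d1 t (w.1.1 i) + d1 t ((sV t w).1.1 i) = 0 := this t _
      linarith
    rw [e1, sV_eq t w h, mv_mv (no3_half1 h t) (mem_half1 h t) (mem_half1' h t) (mem_half1 h t)
      (V_at w h)] at e
    rw [e]
    exact mv_const (no3_half1 h t) (mem_half1 h t) 0 (by simp) _

theorem sV_comm (t k : ZMod 6) (hk : k = 2 ∨ k = 3) (w : V) :
    sV t (sV (t + k) w) = sV (t + k) (sV t w) := by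
  have h := rep_lv w.1.1
  obtain ⟨z, hz, h0, h1, h2, h3⟩ := near_square h t k hk
  refine V_ext ?_ ?_
  · show labS t (labS (t + k) w.1.1) = labS (t + k) (labS t w.1.1)
    ext i : 1
    have : ∀ t p : ZMod 6, Equiv.swap t (t + 1) (Equiv.swap (t + k) (t + k + 1) p) =
      Equiv.swap (t + k) (t + k + 1) (Equiv.swap t (t + 1) p) := by
      rcases hk with rfl | rfl <;> decide
    exact this t _
  · have a1 : ∀ t p : ZMod 6, d1 t (Equiv.swap (t + k) (t + k + 1) p) = d1 t p := by
      rcases hk with rfl | rfl <;> decide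
    have a2 : ∀ t p : ZMod 6, d1 (t + k) (Equiv.swap t (t + 1) p) = d1 (t + k) p := by
      rcases hk with rfl | rfl <;> decide
    have e1 := sV_eq t (sV (t + k) w) (h.step (t + k))
    have e2 := sV_eq (t + k) (sV t w) (h.step t)
    have b1 : (fun i => lv w.1.1 i + d1 (t + k) (w.1.1 i) + d1 t ((sV (t + k) w).1.1 i)) =
        fun i => lv w.1.1 i + d1 t (w.1.1 i) + d1 (t + k) (w.1.1 i) := by
      funext i
      have : d1 t ((sV (t + k) w).1.1 i) = d1 t (w.1.1 i) := a1 t _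
      rw [this]; ring
    have b2 : (fun i => lv w.1.1 i + d1 t (w.1.1 i) + d1 (t + k) ((sV t w).1.1 i)) =
        fun i => lv w.1.1 i + d1 t (w.1.1 i) + d1 (t + k) (w.1.1 i) := by
      funext i
      have : d1 (t + k) ((sV t w).1.1 i) = d1 (t + k) (w.1.1 i) := a2 t _
      rw [this]
    rw [b1, sV_eq (t + k) w h, mv_mv hz h0 h2 h3 (V_at w h)] at e1
    rw [b2, sV_eq t w h, mv_mv hz h0 h1 h3 (V_at w h)] at e2
    rw [e1, e2]

theorem rV_sV (t : ZMod 6) (w : V) : rV (sV t w) = sV (t + 1) (rV w) := by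
  have h := rep_lv w.1.1
  refine V_ext ?_ ?_
  · show labR (labS t w.1.1) = labS (t + 1) (labR w.1.1)
    ext i : 1
    have : ∀ t p : ZMod 6, Equiv.swap t (t + 1) p + 1 = Equiv.swap (t + 1) (t + 1 + 1) (p + 1) := by
      decide
    exact this t _
  · show (sV t w).1.2 = _
    have e := sV_eq (t + 1) (rV w) (n := lv w.1.1) (rep_R h)
    rw [sV_eq t w h, e]
    have : ∀ t p : ZMod 6, d1 (t + 1) (p + 1) = d1 t p := by decide
    have e2 : (fun i => lv w.1.1 i + d1 (t + 1) ((rV w).1.1 i)) =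
        fun i => lv w.1.1 i + d1 t (w.1.1 i) := by
      funext i
      have h2 : d1 (t + 1) ((rV w).1.1 i) = d1 t (w.1.1 i) := this t _
      rw [h2]
    rw [e2]
    rfl

theorem rV6 (w : V) : rV (rV (rV (rV (rV (rV w))))) = w := by
  refine V_ext ?_ rfl
  show labR (labR (labR (labR (labR (labR w.1.1))))) = w.1.1
  ext i : 1
  have : ∀ p : ZMod 6, p + 1 + 1 + 1 + 1 + 1 + 1 = p := by decide
  exact this _

theorem V_free (w w' : V) (h : w.1.1 = w'.1.1) :
    ∃! g : FundamentalGroup (QSet 5) (Qbase 5), g • w = w' := by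
  obtain ⟨g, hg, hu⟩ := smul_unique w.1.2 w'.1.2 (by rw [w.2, w'.2, h])
  exact ⟨g, V_ext h hg, fun g' hg' => hu g' (by rw [← hg']; rfl)⟩

/-- The label of the basepoint. -/
def vbase : Lab where
  toFun i := (i.val + 1 : ℕ)
  invFun p := ⟨(p - 1).val, ZMod.val_lt _⟩
  left_inv := by decide
  right_inv := by decide

theorem P_base : P vbase = Qbase 5 := by
  apply Subtype.ext
  rw [P, Ept_val (no3_six (rep_lv _).dist)]
  funext j
  show Circle.exp _ = Circle.exp (2 * π * (j.val + 1) / ((5 : ℕ) + 1))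
  rw [show 2 * π * (j.val + 1) / ((5 : ℕ) + 1) = 2 * π * ((j.val + 1 : ℝ) / 6) by push_cast; ring,
    exp_eq_iff]
  have h5 : six (lv vbase) 5 = 0 := by
    have : lv vbase 5 = 0 := by decide
    rw [six, this]; simp
  rw [h5]
  have : ∃ m : ℤ, lv vbase j - (j.val + 1) = 6 * m := by
    have : ∀ j : Fin 6, (lv vbase j - (j.val + 1)) % 6 = 0 := by decide
    exact ⟨_, (Int.mul_ediv_cancel' (Int.dvd_of_emod_eq_zero (this j))).symm⟩
  obtain ⟨m, hm⟩ := this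
  have hm' : (lv vbase j : ℝ) - (j.val + 1) = 6 * m := by exact_mod_cast hm
  exact ⟨m, by simp only [six]; linarith⟩

/-- The constant path class at the basepoint. -/
def ubase : U := ⟨Qbase 5, .refl _⟩

/-- The base chamber. -/
def wbase : V := ⟨(vbase, ubase), P_base.symm⟩

end Cfg

/-! ### Lifting paths of configurations to sextuples of real numbers -/

namespace Cfg

open Topology

/-- The coordinatewise exponential map. -/
def expPi : Pt → Fin 6 → Circle := Pi.map fun _ x => Circle.exp (2 * π * x)

theorem expPi_apply (y : Pt) (i : Fin 6) : expPi y i = Circle.exp (2 * π * y i) := rfl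

/-- The vectors with integer coordinates. -/
def lattice : AddSubgroup Pt where
  carrier := {d | ∀ i, ∃ m : ℤ, d i = m}
  zero_mem' i := ⟨0, by simp⟩
  add_mem' := fun ha hb i => by
    obtain ⟨m, hm⟩ := ha i
    obtain ⟨l, hl⟩ := hb i
    exact ⟨m + l, by simp [hm, hl]⟩
  neg_mem' := fun ha i => by
    obtain ⟨m, hm⟩ := ha i
    exact ⟨-m, by simp [hm]⟩

theorem isDiscrete_lattice : IsDiscrete (lattice : Set Pt) := by
  refine ⟨discreteTopology_subtype_iff'.mpr fun y hy => ?_⟩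
  refine ⟨{x | ∀ i, x i ∈ Set.Ioo (y i - 1) (y i + 1)}, ?_, ?_⟩
  · simp only [Set.ofPred_forall]
    exact isOpen_iInter_of_finite fun i => isOpen_Ioo.preimage (continuous_apply i)
  · ext x
    simp only [Set.mem_inter_iff, Set.mem_ofPred_eq, Set.mem_singleton_iff]
    constructor
    · rintro ⟨h, hx⟩
      funext i
      obtain ⟨m, hm⟩ := hx i
      obtain ⟨l, hl⟩ := hy i
      obtain ⟨h1, h2⟩ := h i
      rw [hm, hl] at h1 h2 ⊢
      have h1' : l - 1 < m := by exact_mod_cast h1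
      have h2' : m < l + 1 := by exact_mod_cast h2
      have : m = l := by omega
      rw [this]
    · rintro rfl
      exact ⟨fun i => ⟨by linarith, by linarith⟩, hy⟩

theorem isCoveringMap_expPi : IsCoveringMap expPi := by
  have h1 : IsOpenQuotientMap fun x : ℝ => Circle.exp (2 * π * x) := by
    have := Circle.isAddQuotientCoveringMap_exp.isOpenQuotientMap
    have h2 := (Homeomorph.mulLeft₀ (2 * π) (by positivity)).isOpenQuotientMap
    exact this.comp h2
  have h2 : IsQuotientMap expPi := (IsOpenQuotientMap.piMap fun _ => h1).isQuotientMap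
  refine (h2.isAddQuotientCoveringMap_of_addSubgroup lattice isDiscrete_lattice
    fun {a b} => ?_).isCoveringMap
  rw [eq_comm, funext_iff]
  exact forall_congr' fun i => exp_eq_iff (b i) (a i)

/-- The sextuples lying over the configuration space. -/
abbrev R0 : Type := expPi ⁻¹' QSet 5

/-- The projection to the configuration space. -/
def pR : R0 → QSet 5 := (QSet 5).restrictPreimage expPi

theorem cov : IsCoveringMap pR :=
  isCoveringMap_expPi.isCoveringMapOn.mono (Set.subset_univ _) |>.isCoveringMap_restrictPreimage

theorem R0_no3 (y : R0) : No3 y := by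
  rintro i j k hij hik hjk ⟨⟨m, hm⟩, l, hl⟩
  exact y.2.2 i j k hij hik hjk ⟨(exp_eq_iff _ _).mpr ⟨m, hm⟩, (exp_eq_iff _ _).mpr ⟨l, hl⟩⟩

theorem R0_last (y : R0) : ∃ m : ℤ, y.1 5 = m := by
  have h : Circle.exp (2 * π * y.1 5) = 1 := y.2.1
  have h2 : Circle.exp (2 * π * y.1 5) = Circle.exp (2 * π * 0) := by rw [h]; simp
  obtain ⟨m, hm⟩ := (exp_eq_iff _ _).mp h2
  exact ⟨m, by simpa using hm⟩

theorem pR_eq (y : R0) : pR y = Ept y := by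
  apply Subtype.ext
  rw [Ept_val (R0_no3 y)]
  funext i
  obtain ⟨m, hm⟩ := R0_last y
  exact (exp_eq_iff _ _).mpr ⟨m, by rw [← hm]; ring⟩

theorem mem_R0 {y : Pt} (h : No3 y) (h5 : ∃ m : ℤ, y 5 = m) : y ∈ expPi ⁻¹' QSet 5 := by
  have : expPi y = EE y := by
    funext i
    obtain ⟨m, hm⟩ := h5
    exact (exp_eq_iff _ _).mpr ⟨m, by rw [← hm]; ring⟩
  rw [Set.mem_preimage, this]
  exact EE_mem h

end Cfg

/-! ### Every chamber is reached from the base chamber -/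

namespace Cfg

/-- Moving the entry `a` one up and the entry `b` one down. -/
def bump (n : Fin 6 → ℤ) (a b : Fin 6) : Fin 6 → ℤ :=
  fun l => n l + ((if l = a then 1 else 0) - (if l = b then 1 else 0))

theorem bump_eq {n : Fin 6 → ℤ} {v : Lab} (h : Rep n v) {a b : Fin 6}
    (hab : ∃ k, n b - n a = 6 * k + 1) : (fun l => n l + d1 (v a) (v l)) = bump n a b := by
  obtain ⟨c, hc⟩ := h
  have hb : v b = v a + 1 := by
    obtain ⟨k, hk⟩ := hab
    have h1 : n b = n a + 6 * k + 1 := by linarith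
    rw [← hc, ← hc, h1]
    push_cast
    rw [show (6 : ZMod 6) = 0 from rfl]
    ring
  funext l
  simp only [d1, bump, ← hb, v.injective.eq_iff]

/-- The chambers in `S` at the position `n` with path class `u`. -/
def At (S : Set V) (n : Fin 6 → ℤ) (u : U) : Prop := ∃ w ∈ S, Rep n w.1.1 ∧ w.1.2 = u

theorem At.bump {S : Set V} (hS : ∀ t, ∀ w ∈ S, sV t w ∈ S) {z : Pt} (hz : No3 z) {n : Fin 6 → ℤ}
    {a b : Fin 6} (hab : ∃ k, n b - n a = 6 * k + 1) (h : six n ∈ N z) (h' : six (bump n a b) ∈ N z)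
    {u : U} (hu : u.1 = Ept z) (hA : At S n (mv z (six n) u)) :
    At S (bump n a b) (mv z (six (bump n a b)) u) := by
  obtain ⟨w, hw, hr, e⟩ := hA
  have hb := bump_eq hr hab
  refine ⟨sV (w.1.1 a) w, hS _ _ hw, ?_, ?_⟩
  · rw [← hb]; exact hr.step _
  · rw [sV_eq _ _ hr, hb, e, mv_mv hz (self_mem_N z) h h' hu]

theorem bump_dist {n : Fin 6 → ℤ} {a b : Fin 6} (hn : Dist n)
    (hab : ∃ k, n b - n a = 6 * k + 1) : Dist (bump n a b) := by
  have hab' : a ≠ b := by rintro rfl; obtain ⟨k, hk⟩ := hab; omega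
  have e : (fun l => (bump n a b l : ZMod 6)) = (fun l => (n l : ZMod 6)) ∘ Equiv.swap a b := by
    obtain ⟨k, hk⟩ := hab
    have h1 : n b = n a + 1 + 6 * k := by linarith
    have h6 : (6 : ZMod 6) = 0 := rfl
    funext l
    simp only [bump, Function.comp_apply]
    rcases eq_or_ne l a with rfl | hla
    · rw [Equiv.swap_apply_left, if_pos rfl, if_neg hab', h1]
      push_cast
      rw [h6]
      ring
    rcases eq_or_ne l b with rfl | hlb
    · rw [Equiv.swap_apply_right, if_pos rfl, if_neg hla, h1]
      push_cast
      rw [h6]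
      ring
    · rw [Equiv.swap_apply_of_ne_of_ne hla hlb, if_neg hla, if_neg hlb]
      simp
  show Function.Injective _
  rw [e]
  exact Function.Injective.comp hn (Equiv.injective _)

theorem sum_bump (n : Fin 6 → ℤ) (a b : Fin 6) : ∑ i, bump n a b i = ∑ i, n i := by
  simp [bump, Finset.sum_add_distrib, Finset.sum_sub_distrib]

theorem bump_mem {z : Pt} {n : Fin 6 → ℤ} (hn : Dist n) (h : six n ∈ N z) {i j : Fin 6} {m : ℤ}
    (hm : z i - z j = m) (hij : n i - n j = 6 * m - 1) : six (bump n i j) ∈ N z := by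
  have hne : i ≠ j := by rintro rfl; omega
  intro l k
  rcases eq_or_ne l k with rfl | hlk
  · simp
  have h1 := h l k
  have h2 : n l - n k < 6 * (⌊z l - z k⌋ + 1) := by
    have : (n l - n k : ℝ) < 6 * (⌊z l - z k⌋ + 1) := by simp only [six] at h1; linarith
    exact_mod_cast this
  suffices bump n i j l - bump n i j k < 6 * (⌊z l - z k⌋ + 1) by
    have : (bump n i j l - bump n i j k : ℝ) < 6 * (⌊z l - z k⌋ + 1) := by exact_mod_cast this
    simp only [six]; linarith
  simp only [bump]
  by_cases h3 : l = i
  · subst h3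
    by_cases h4 : k = j
    · subst h4
      rw [hm, Int.floor_intCast]
      simp [hne, hne.symm]
      omega
    · have := hn.ne (Ne.symm h4) (m - (⌊z l - z k⌋ + 1))
      simp only [if_true, if_neg hne, if_neg hlk.symm, if_neg h4]
      have h6 : n j - n k ≠ 6 * (⌊z l - z k⌋ + 1 - m) := hn.ne (Ne.symm h4) _
      omega
  · by_cases h4 : k = j
    · subst h4
      have h6 : n l - n i ≠ 6 * (⌊z l - z k⌋ + 1 - m) := hn.ne h3 _
      simp only [if_true, if_neg h3, if_neg hlk, if_neg hne.symm]
      omega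
    · simp only [if_neg h3, if_neg h4]
      split_ifs <;> omega

/-- Within the star of `z`, all chambers are reached from one of them. -/
theorem hub {S : Set V} (hS : ∀ t, ∀ w ∈ S, sV t w ∈ S) {z : Pt} (hz : No3 z) {u : U}
    (hu : u.1 = Ept z) : ∀ (c : ℕ) (n : Fin 6 → ℤ), Dist n → ∑ i, n i = -15 → six n ∈ N z →
    Set.ncard {p : Fin 6 × Fin 6 | Cr z (six n) p.1 p.2} = c →
    (At S n (mv z (six n) u) ↔ At S (nn z) (mv z (six (nn z)) u)) := by
  intro c
  induction c using Nat.strong_induction_on with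
  | _ c ih =>
    intro n hn hs hm hc
    by_cases hcr : ∃ i j, Cr z (six n) i j
    · obtain ⟨i, j, hij⟩ := hcr
      obtain ⟨h1, h2⟩ := nn_cr hz hm hij
      rw [nn_six hn hs] at h1 h2
      obtain ⟨hlt, m, hzm, hm'⟩ := id hij
      have h3 := nn_tie hz hlt hzm
      have hd : n i - n j = 6 * m - 1 := by omega
      have hmem := bump_mem hn hm hzm hd
      have hab : ∃ k, n j - n i = 6 * k + 1 := ⟨-m, by omega⟩
      have hdist := bump_dist hn hab
      have hbb : bump (bump n i j) j i = n := by
        funext l; simp only [bump]; ring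
      have hne : i ≠ j := hlt.ne
      have hab' : ∃ k, bump n i j i - bump n i j j = 6 * k + 1 :=
        ⟨m, by simp [bump, hne, hne.symm]; omega⟩
      have hsub : {p : Fin 6 × Fin 6 | Cr z (six (bump n i j)) p.1 p.2} ⊂
          {p : Fin 6 × Fin 6 | Cr z (six n) p.1 p.2} := by
        have hnot : ¬Cr z (six (bump n i j)) i j := by
          rintro ⟨-, m', hm1, hm2⟩
          have : m' = m := by rw [hzm] at hm1; exact_mod_cast hm1.symm
          subst this
          obtain ⟨k, hk⟩ := hab'
          have h7 : bump n i j i - bump n i j j = 6 * m' + 1 := by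
            simp [bump, hne, hne.symm]; omega
          have h8 : (bump n i j i - bump n i j j : ℝ) = 6 * m' + 1 := by exact_mod_cast h7
          simp only [six] at hm2
          linarith
        refine ⟨?_, fun h => hnot (h (show (i, j) ∈ _ from hij))⟩
        rintro ⟨a, b⟩ (hab2 : Cr z (six (bump n i j)) a b)
        show Cr z (six n) a b
        by_cases hsh : a = i ∨ a = j ∨ b = i ∨ b = j
        · obtain ⟨rfl, rfl⟩ := Cr.unique hz hij hab2 hsh
          exact hij
        · push Not at hsh
          obtain ⟨q1, m', q2, q3⟩ := hab2
          refine ⟨q1, m', q2, ?_⟩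
          simpa [six, bump, hsh.1, hsh.2.1, hsh.2.2.1, hsh.2.2.2] using q3
      have hcard := Set.ncard_lt_ncard hsub (Set.toFinite _)
      rw [← ih _ (hc ▸ hcard) _ hdist ((sum_bump _ _ _).trans hs) hmem rfl]
      refine ⟨fun h => h.bump hS hz hab hm hmem hu, fun h => ?_⟩
      have := h.bump hS hz hab' hmem (by rw [hbb]; exact hm) hu
      rwa [hbb] at this
    · push Not at hcr
      have : n = nn z := by
        rw [← nn_six hn hs]
        funext a
        exact nn_fix hm (fun b => hcr a b) fun b => hcr b a
      rw [this]

/-- A lift of a path that starts at the basepoint. -/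
theorem exists_lift {x : QSet 5} (γ : Path (Qbase 5) x) : ∃ (a b : Pt) (Y : Path a b),
    a = six (lv vbase) ∧ (∀ s, No3 (Y s)) ∧ ∀ s, γ s = Ept (Y s) := by
  have h5 : six (lv vbase) 5 = ((0 : ℤ) : ℝ) := by
    have : lv vbase 5 = 0 := by decide
    rw [six, this]; simp
  let e : R0 := ⟨six (lv vbase), mem_R0 (no3_six (rep_lv _).dist) ⟨0, h5⟩⟩
  have he : γ 0 = pR e := by
    rw [γ.source, pR_eq, ← P_base]; rfl
  let y := cov.liftPath γ e he
  have hy : ∀ s, pR (y s) = γ s := fun s => congrFun (cov.liftPath_lifts γ e he) s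
  refine ⟨_, _, ⟨⟨fun s => (y s : Pt), by fun_prop⟩, rfl, rfl⟩, ?_, fun s => R0_no3 _, fun s => ?_⟩
  · exact congrArg Subtype.val (cov.liftPath_zero γ e he)
  · rw [← hy, pR_eq]; rfl

theorem ubase_fst {x : QSet 5} (γ : Path (Qbase 5) x) : ubase.1 = γ 0 := γ.source.symm

/-- The initial piece of a path, as a path class. -/
def ini {x : QSet 5} (γ : Path (Qbase 5) x) (s : unitInterval) : U :=
  cat ubase (ubase_fst γ) (.mk (γ.subpath 0 s))

theorem ini_step {x : QSet 5} (γ : Path (Qbase 5) x) {a b : Pt} (Y : Path a b)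
    (h3 : ∀ s, No3 (Y s)) (hY : ∀ s, γ s = Ept (Y s)) (s s' : unitInterval)
    (hm : ∀ r, Y.subpath s s' r ∈ N (Y s)) : ini γ s' = mv (Y s) (Y s') (ini γ s) := by
  have hs : (ini γ s).1 = γ s := rfl
  rw [mv_path (h3 s) (Y.subpath s s') hm (fun r => (h3 s).of_mem (hm r)) _ (hs.trans (hY s))]
  rw [cat_congr (ini γ s) _ hs _ (γ.subpath s s') (fun r => (hY _).symm)]
  refine Eq.trans ?_ (cat_cat ubase (ubase_fst γ) (.mk (γ.subpath 0 s)) hs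
    (.mk (γ.subpath s s'))).symm
  rw [ini, Path.Homotopic.Quotient.cast_rfl_rfl, ← Path.Homotopic.Quotient.mk_trans]
  congr 1
  apply Path.Homotopic.Quotient.eq.mpr
  exact ⟨(Path.Homotopy.subpathTransSubpath γ 0 s s').symm⟩

theorem At.shift {S : Set V} {n n' : Fin 6 → ℤ} {u : U} (h : At S n u)
    (hn : ∀ i j, n' i - n' j = n i - n j) : At S n' u := by
  obtain ⟨w, hw, ⟨c, hc⟩, e⟩ := h
  refine ⟨w, hw, ⟨n 5 - n' 5 + c, fun i => ?_⟩, e⟩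
  rw [← hc]
  have : n' i = n i - n 5 + n' 5 := by linarith [hn i 5]
  rw [this]
  push_cast
  ring

/-- The points of a configuration that is evenly spaced are numbered by its lift, up to rotation,
as by its label. -/
theorem rep_of_Ept {y : Pt} {v : Lab} (hy : No3 y) (h : P v = Ept y) :
    Rep (nn y) v ∧ ∀ i, y i - y 5 = six (nn y) i - six (nn y) 5 := by
  have hE : EE y = EE (six (lv v)) := by
    rw [← Ept_val hy, ← Ept_val (no3_six (rep_lv v).dist), ← h]
    rfl
  have hm : ∀ i, ∃ m : ℤ, (y i - y 5) - (six (lv v) i - six (lv v) 5) = m := fun i =>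
    (exp_eq_iff _ _).mp (congrFun hE i)
  choose m hm using hm
  have hr : Rep (fun i => lv v i + 6 * m i) v := by
    obtain ⟨c, hc⟩ := rep_lv v
    refine ⟨c, fun i => ?_⟩
    rw [← hc]
    push_cast
    rw [show (6 : ZMod 6) = 0 from rfl]
    ring
  have hd5 : ∀ i, y i - y 5 = six (fun i => lv v i + 6 * m i) i -
      six (fun i => lv v i + 6 * m i) 5 := by
    intro i
    have h5 : m 5 = 0 := by
      have := hm 5
      simp only [sub_self] at this
      exact_mod_cast this.symm
    have := hm i
    simp only [six, h5] at this ⊢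
    push_cast
    linarith
  have hl := nn_lattice hr.dist (y := y) fun i j => by linarith [hd5 i, hd5 j]
  constructor
  · obtain ⟨c, hc⟩ := hr
    refine ⟨(lv v 5 + 6 * m 5 : ℤ) - nn y 5 + c, fun i => ?_⟩
    rw [← hc]
    have h2 : nn y i = (lv v i + 6 * m i) - (lv v 5 + 6 * m 5) + nn y 5 := by linarith [hl i 5]
    rw [h2]
    push_cast
    ring
  · intro i
    have h1 := hl i 5
    have h3 : (nn y i - nn y 5 : ℝ) = (lv v i + 6 * m i) - (lv v 5 + 6 * m 5) := by
      exact_mod_cast h1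
    have h2 := hd5 i
    simp only [six] at h2 ⊢
    push_cast at h2
    linarith

theorem conn (S : Set V) (h0 : wbase ∈ S) (hS : ∀ t, ∀ w ∈ S, sV t w ∈ S)
    (hR : ∀ w ∈ S, rV w ∈ S) (w : V) : w ∈ S := by
  obtain ⟨⟨v, x, p⟩, hx⟩ := w
  obtain ⟨γ, rfl⟩ := Path.Homotopic.Quotient.mk_surjective p
  obtain ⟨a, b, Y, ha, h3, hY⟩ := exists_lift γ
  let Good (s : unitInterval) : Prop :=
    At S (nn (Y s)) (mv (Y s) (six (nn (Y s))) (ini γ s))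
  have hloc : ∀ s0, ∀ᶠ s in nhds s0, (Good s ↔ Good s0) := by
    intro s0
    have hopen : ∀ᶠ s in nhds s0, ∀ r ∈ Set.univ, Y.subpath s0 s r ∈ N (Y s0) := by
      refine isCompact_univ.eventually_forall_of_forall_eventually fun r _ => ?_
      have hc : Continuous fun q : unitInterval × unitInterval => Y.subpath s0 q.1 q.2 :=
        Y.subpath_continuous_family.comp
          (continuous_const.prodMk (continuous_fst.prodMk continuous_snd))
      refine hc.continuousAt.eventually_mem ((isOpen_N _).mem_nhds ?_)
      simpa using self_mem_N (Y s0)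
    filter_upwards [hopen] with s hs
    have hYs : Y s ∈ N (Y s0) := by simpa using hs 1 trivial
    have hsix := N_subset hYs (six_nn_mem (Y s))
    show At _ _ _ ↔ At _ _ _
    have hu : (ini γ s0).1 = Ept (Y s0) := hY s0
    rw [ini_step γ Y h3 hY s0 s (fun r => hs r trivial), mv_mv (h3 s0) (self_mem_N _) hYs hsix hu]
    exact hub hS (h3 s0) hu _ _ (nn_dist _) (sum_nn _) hsix rfl
  have hclopen : IsClopen {s | Good s} := by
    refine ⟨⟨isOpen_iff_mem_nhds.mpr fun s hs => ?_⟩, isOpen_iff_mem_nhds.mpr fun s hs => ?_⟩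
    · filter_upwards [hloc s] with s' h
      exact fun h' => hs (h.mp h')
    · filter_upwards [hloc s] with s' h
      exact h.mpr hs
  have hG0 : Good 0 := by
    have hY0 : Y 0 = six (lv vbase) := by rw [Y.source, ha]
    have hr := rep_lv vbase
    have hl := nn_lattice (y := six (lv vbase)) hr.dist fun i j => rfl
    have hi : ini γ 0 = ubase := by
      rw [ini, Path.subpath_self, Path.Homotopic.Quotient.mk_refl]
      exact cat_refl _ _
    show At _ _ _
    rw [hY0, hi, mv_const (no3_six hr.dist) (self_mem_N _)
      ((nn (six (lv vbase)) 5 - lv vbase 5 : ℝ) / 6) (fun i => ?_)]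
    · exact At.shift ⟨wbase, h0, hr, rfl⟩ hl
    · have := hl i 5
      have h2 : (nn (six (lv vbase)) i - nn (six (lv vbase)) 5 : ℝ) = lv vbase i - lv vbase 5 := by
        exact_mod_cast this
      simp only [six] at h2 ⊢
      linarith
  have hG1 : Good 1 := by
    have := hclopen.eq_univ ⟨0, hG0⟩
    exact this.ge (Set.mem_univ _)
  obtain ⟨hr, hd5⟩ := rep_of_Ept (v := v) (h3 1) (by rw [← hY, γ.target]; exact hx.symm)
  have hi : ini γ 1 = ⟨x, .mk γ⟩ := by
    rw [ini]
    have e1 := cat_congr ubase (ubase_fst γ) rfl (γ.subpath 0 1) γ (fun t => by simp; rfl)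
    rw [e1]
    show U.mk x _ = _
    congr 1
    exact Path.Homotopic.Quotient.refl_trans _
  have hG1' : At S (nn (Y 1)) (mv (Y 1) (six (nn (Y 1))) (ini γ 1)) := hG1
  rw [hi, mv_const (h3 1) (self_mem_N _) ((nn (Y 1) 5 : ℝ) / 6 - Y 1 5) (fun i => ?_)] at hG1'
  · obtain ⟨w, hw, ⟨c, hc⟩, e⟩ := hG1'
    obtain ⟨c', hc'⟩ := hr
    have hiter : ∀ k : ℕ, ∃ w' ∈ S, (∀ i, w'.1.1 i = w.1.1 i + k) ∧ w'.1.2 = w.1.2 := by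
      intro k
      induction k with
      | zero => exact ⟨w, hw, by simp, rfl⟩
      | succ k ih =>
        obtain ⟨w', h1, h2, h3⟩ := ih
        refine ⟨rV w', hR _ h1, fun i => ?_, h3⟩
        show w'.1.1 i + 1 = _
        rw [h2]; push_cast; ring
    obtain ⟨w', h1, h2, h3⟩ := hiter (c' - c).val
    have : w' = ⟨(v, ⟨x, .mk γ⟩), hx⟩ := by
      refine V_ext (Equiv.ext fun i => ?_) (h3.trans e)
      rw [h2, ZMod.natCast_zmod_val, ← hc]
      show _ = v i
      rw [← hc']
      ring
    rwa [← this]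
  · have h2 := hd5 i
    simp only [six] at h2 ⊢
    linarith

end Cfg

/-! ### A local system on the space of sextuples -/

namespace Cfg

open Classical in
/-- Simultaneous firing of the places in `S`. -/
def MS (S : Set (ZMod 6)) (l : ZMod 6 → ℤ) (u : ZMod 6) : ℤ :=
  if u ∈ S then - l u else
    l u + (if u - 1 ∈ S then 2 * l (u - 1) else 0) + (if u + 1 ∈ S then 2 * l (u + 1) else 0)

/-- A set of places no two of which are adjacent. -/
def NonAdj (S : Set (ZMod 6)) : Prop := ∀ t ∈ S, t + 1 ∉ S

theorem MS_empty (l : ZMod 6 → ℤ) : MS ∅ l = l := by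
  funext u; simp [MS]

theorem MS_singleton (s : ZMod 6) (l : ZMod 6 → ℤ) : MS {s} l = fire s l := by
  funext u
  have e1 : u - 1 = s ↔ u = s + 1 := sub_eq_iff_eq_add
  have h1 : s + 1 ≠ s := (by decide : ∀ s : ZMod 6, s + 1 ≠ s) s
  have h2 : s + 1 + 1 ≠ s := (by decide : ∀ s : ZMod 6, s + 1 + 1 ≠ s) s
  simp only [MS, fire, Set.mem_singleton_iff, e1]
  by_cases hu : u = s
  · simp [hu]
  by_cases h3 : u = s + 1
  · subst h3; rw [if_neg h1, if_pos rfl, if_neg h2, if_neg h1, if_pos (.inl rfl)]; ring_nf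
  by_cases h4 : u + 1 = s
  · simp [hu, h3, h4]
  · simp [hu, h3, h4]

theorem MS_of_not {T : Set (ZMod 6)} {l : ZMod 6 → ℤ} {t : ZMod 6} (h : t ∉ T) (h1 : t - 1 ∉ T)
    (h2 : t + 1 ∉ T) : MS T l t = l t := by
  simp [MS, h, h1, h2]

theorem MS_of_mem {T : Set (ZMod 6)} {l : ZMod 6 → ℤ} {t : ZMod 6} (h : t ∈ T) :
    MS T l t = - l t := by
  simp [MS, h]

theorem NonAdj.sub {S : Set (ZMod 6)} (h : NonAdj S) {t : ZMod 6} (ht : t ∈ S) : t - 1 ∉ S :=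
  fun h' => h _ h' (by rwa [sub_add_cancel])

theorem MS_MS (S : Set (ZMod 6)) (l : ZMod 6 → ℤ) : MS S (MS S l) = l := by
  funext u
  by_cases hu : u ∈ S
  · rw [MS_of_mem hu, MS_of_mem hu, neg_neg]
  · rw [MS, if_neg hu, MS, if_neg hu]
    by_cases h1 : u - 1 ∈ S <;> by_cases h2 : u + 1 ∈ S <;> simp [h1, h2, MS_of_mem] <;> ring

theorem MS_union {S T : Set (ZMod 6)} (h : NonAdj (S ∪ T)) (hd : Disjoint S T)
    (l : ZMod 6 → ℤ) : MS (S ∪ T) l = MS S (MS T l) := by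
  have key : ∀ t ∈ S, MS T l t = l t := fun t ht =>
    MS_of_not (Set.disjoint_left.mp hd ht) (fun h' => h.sub (.inl ht) (.inr h'))
      fun h' => h t (.inl ht) (.inr h')
  funext u
  by_cases hu : u ∈ S
  · rw [MS_of_mem (Or.inl hu : u ∈ S ∪ T), MS_of_mem hu, key u hu]
  by_cases hu' : u ∈ T
  · rw [MS_of_mem (Or.inr hu' : u ∈ S ∪ T), MS_of_not hu (fun h' => h.sub (.inr hu') (.inl h'))
      (fun h' => h u (.inr hu') (.inl h')), MS_of_mem hu']
  · have h1 : u - 1 ∈ S → u - 1 ∉ T := fun h1 h2 => Set.disjoint_left.mp hd h1 h2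
    have h2 : u + 1 ∈ S → u + 1 ∉ T := fun h1 h2 => Set.disjoint_left.mp hd h1 h2
    rw [MS, if_neg (show u ∉ S ∪ T from not_or.mpr ⟨hu, hu'⟩), MS, if_neg hu, MS, if_neg hu']
    by_cases a1 : u - 1 ∈ S <;> by_cases a2 : u + 1 ∈ S <;> by_cases a3 : u - 1 ∈ T <;>
      by_cases a4 : u + 1 ∈ T <;> simp_all <;> ring

/-- The places of the pairs of points that coincide at `z` and have changed their order at `y`. -/
def Ty (z y : Pt) : Set (ZMod 6) := {t | ∃ i j, Cr z y i j ∧ (nn z j : ZMod 6) = t}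

/-- The change of the state of the numbers game between `z` and a point `y` of its star. -/
def M (z y : Pt) : (ZMod 6 → ℤ) → ZMod 6 → ℤ := MS (Ty z y)

theorem Cr.ne_type {z y : Pt} (hz : No3 z) {i j : Fin 6} (h : Cr z y i j) :
    (nn z i : ZMod 6) = nn z j + 1 := by
  obtain ⟨hij, m, hm, -⟩ := h
  rw [nn_tie hz hij hm]
  push_cast
  rw [show (6 : ZMod 6) = 0 from rfl]
  ring

theorem nonAdj_Ty {z : Pt} (hz : No3 z) (y : Pt) : NonAdj (Ty z y) := by
  rintro _ ⟨i, j, h, rfl⟩ ⟨i', j', h', e⟩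
  rw [← h.ne_type hz] at e
  have : j' = i := nn_dist z e
  obtain ⟨-, h2⟩ := Cr.unique hz h h' (.inr (.inr (.inl this)))
  exact h.1.ne (this.symm.trans h2)

theorem Ty_split {z x y : Pt} (hz : No3 z) (hx : x ∈ N z) (hy : y ∈ N x) :
    Ty z y = Ty z x ∪ Ty x y ∧ Disjoint (Ty z x) (Ty x y) := by
  have k1 : ∀ i j, Cr x y i j → ¬Cr z x i j := by
    rintro i j ⟨hij, m, hm, -⟩ ⟨-, m', hm', hlt⟩
    have := tie_of_mem hx hm
    rw [hm'] at this
    rw [this, hm] at hlt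
    exact lt_irrefl _ hlt
  have k2 : ∀ i j, Cr x y i j → nn x j = nn z j := by
    intro i j h
    have h0 : Cr z y i j := (cr_split hx hy).mpr (.inr h)
    refine nn_fix hx (fun b hb => ?_) fun b hb => ?_
    · obtain ⟨rfl, -⟩ := Cr.unique hz h0 hb (.inr (.inl rfl))
      exact h.1.ne rfl
    · obtain ⟨rfl, -⟩ := Cr.unique hz h0 hb (.inr (.inr (.inr rfl)))
      exact k1 _ _ h hb
  constructor
  · ext t
    constructor
    · rintro ⟨i, j, h, e⟩
      rcases (cr_split hx hy).mp h with h | h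
      · exact .inl ⟨i, j, h, e⟩
      · exact .inr ⟨i, j, h, by rw [k2 i j h, e]⟩
    · rintro (⟨i, j, h, e⟩ | ⟨i, j, h, e⟩)
      · exact ⟨i, j, (cr_split hx hy).mpr (.inl h), e⟩
      · exact ⟨i, j, (cr_split hx hy).mpr (.inr h), by rw [← k2 i j h, e]⟩
  · rw [Set.disjoint_left]
    rintro t ⟨i, j, h, rfl⟩ ⟨i', j', h', e⟩
    rw [k2 i' j' h'] at e
    have : j' = j := nn_dist z e
    subst this
    have h0 : Cr z y i' j' := (cr_split hx hy).mpr (.inr h')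
    obtain ⟨rfl, -⟩ := Cr.unique hz h0 h (.inr (.inr (.inr rfl)))
    exact k1 _ _ h' h

theorem M_M (z y : Pt) (l : ZMod 6 → ℤ) : M z y (M z y l) = l :=
  MS_MS _ l

theorem M_self (z : Pt) (l : ZMod 6 → ℤ) : M z z l = l := by
  have : Ty z z = ∅ := by
    rw [Set.eq_empty_iff_forall_notMem]
    rintro t ⟨i, j, ⟨-, m, hm, hlt⟩, -⟩
    exact lt_irrefl _ (hm ▸ hlt)
  rw [M, this, MS_empty]

/-- The cocycle condition for the transition functions of the local system. -/
theorem M_comp {z x y : Pt} (hz : No3 z) (hx : x ∈ N z) (hy : y ∈ N x) (l : ZMod 6 → ℤ) :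
    M z y l = M z x (M x y l) ∧ M z y l = M x y (M z x l) := by
  obtain ⟨h1, h2⟩ := Ty_split hz hx hy
  have h := nonAdj_Ty hz y
  rw [h1] at h
  constructor
  · rw [M, h1, MS_union h h2]; rfl
  · rw [M, h1, Set.union_comm, MS_union (Set.union_comm _ _ ▸ h) h2.symm]; rfl

/-- The local system of states of the numbers game over the sextuples. -/
def Z : FiberBundleCore {z : Pt // No3 z} R0 (ZMod 6 → ℤ) where
  baseSet z := {y | y.1 ∈ N z.1}
  isOpen_baseSet z := (isOpen_N z.1).preimage continuous_subtype_val
  indexAt y := ⟨y.1, R0_no3 y⟩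
  mem_baseSet_at y := self_mem_N y.1
  coordChange z z' y l := M z'.1 y.1 (M z.1 y.1 l)
  coordChange_self z _ _ l := M_M _ _ l
  continuousOn_coordChange z z' := by
    rintro ⟨y, l⟩ ⟨⟨h1, h2⟩, -⟩
    refine ContinuousAt.continuousWithinAt ?_
    have hF : ContinuousAt (fun p : R0 × (ZMod 6 → ℤ) => M z'.1 y.1 (M z.1 y.1 p.2)) (y, l) :=
      (continuous_of_discreteTopology (f := fun l => M z'.1 y.1 (M z.1 y.1 l))).continuousAt.comp
        continuousAt_snd
    refine hF.congr ?_
    have ho : ∀ᶠ p : R0 × (ZMod 6 → ℤ) in nhds (y, l), p.1.1 ∈ N y.1 :=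
      (continuous_subtype_val.comp continuous_fst).continuousAt.eventually_mem
        ((isOpen_N y.1).mem_nhds (self_mem_N y.1))
    filter_upwards [ho] with p hp
    rw [(M_comp z'.2 h2 hp _).1, (M_comp z.2 h1 hp _).2, M_M]
  coordChange_comp z z' z'' y _ l := by
    rw [M_M]

/-- The total space of the local system. -/
abbrev E : Type := Z.TotalSpace

/-- The projection of the local system. -/
def pE : E → R0 := Bundle.TotalSpace.proj

theorem covE : IsCoveringMap pE := FiberBundle.isCoveringMap (F := ZMod 6 → ℤ) (E := Z.Fiber)

/-- The points of the local system. -/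
def mkE (y : R0) (l : ZMod 6 → ℤ) : E := ⟨y, l⟩

/-- Over a star, horizontal sections are continuous. -/
theorem continuous_horizontal {X : Type} [TopologicalSpace X] {f : X → R0} (hf : Continuous f)
    {z : Pt} (hz : No3 z) (h : ∀ x, (f x).1 ∈ N z) (l : ZMod 6 → ℤ) :
    Continuous fun x => mkE (f x) (M z (f x).1 l) := by
  have h1 := (Z.localTriv ⟨z, hz⟩).continuousOn_invFun
  have h2 : Continuous fun x => (Z.localTriv ⟨z, hz⟩).toOpenPartialHomeomorph.symm (f x, l) := by
    refine h1.comp_continuous (by fun_prop) fun x => ?_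
    rw [(Z.localTriv ⟨z, hz⟩).target_eq]
    exact ⟨h x, trivial⟩
  refine h2.congr fun x => ?_
  show (⟨f x, M (f x).1 (f x).1 (M z (f x).1 l)⟩ : E) = ⟨f x, _⟩
  rw [M_self]

end Cfg

/-! ### The state of the numbers game at a chamber -/

namespace Cfg

open Path.Homotopic (Quotient)

/-- The lift of the basepoint to sextuples. -/
def e0 : R0 := ⟨six (lv vbase), mem_R0 (no3_six (rep_lv _).dist) ⟨0, by
  have : lv vbase 5 = 0 := by decide
  rw [six, this]; simp⟩⟩

theorem pR_e0 : pR e0 = Qbase 5 := by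
  rw [pR_eq, ← P_base]; rfl

/-- The point of the local system over the lifted basepoint whose state is constantly one. -/
def ε0 : E := mkE e0 fun _ => 1

theorem ubase_e0 : ubase.1 = pR (pE ε0) := pR_e0.symm

/-- The image in the configuration space of a path in the local system. -/
def down {a b : E} (Γ : Path a b) : Path (pR (pE a)) (pR (pE b)) :=
  (Γ.map covE.continuous).map cov.continuous

theorem down_apply {a b : E} (Γ : Path a b) (t : unitInterval) : down Γ t = pR (pE (Γ t)) := rfl

/-- The path class `u` lifts to a path in the local system that ends at the sextuple `y` with
state `l`. -/
def Reach (u : U) (y : R0) (l : ZMod 6 → ℤ) : Prop :=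
  ∃ Γ : Path ε0 (mkE y l), cat ubase ubase_e0 (.mk (down Γ)) = u

theorem Reach.base : Reach ubase e0 fun _ => 1 := by
  refine ⟨.refl _, ?_⟩
  conv_rhs => rw [← cat_refl ubase ubase_e0, ← Quotient.mk_refl]
  exact cat_congr _ _ _ _ _ fun t => rfl

theorem Reach.fst {u : U} {y : R0} {l : ZMod 6 → ℤ} (h : Reach u y l) : u.1 = Ept y := by
  obtain ⟨Γ, rfl⟩ := h
  exact pR_eq y

theorem exists_reach (u : U) : ∃ y l, Reach u y l := by
  obtain ⟨x, p⟩ := u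
  obtain ⟨γ, rfl⟩ := Path.Homotopic.Quotient.mk_surjective p
  have he : γ 0 = pR e0 := by rw [γ.source, pR_e0]
  let Y := cov.liftPath γ e0 he
  have hY : ∀ s, pR (Y s) = γ s := fun s => congrFun (cov.liftPath_lifts γ e0 he) s
  have he' : Y 0 = pE ε0 := cov.liftPath_zero γ e0 he
  let Λ := covE.liftPath Y ε0 he'
  have hΛ : ∀ s, pE (Λ s) = Y s := fun s => congrFun (covE.liftPath_lifts Y ε0 he') s
  let Γ : Path ε0 (mkE (Λ 1).1 (Λ 1).2) := ⟨Λ, covE.liftPath_zero Y ε0 he', rfl⟩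
  refine ⟨_, _, Γ, ?_⟩
  rw [cat_congr ubase ubase_e0 rfl (down Γ) γ fun t => (congrArg pR (hΛ t)).trans (hY t)]
  show U.mk x _ = _
  congr 1
  exact Path.Homotopic.Quotient.refl_trans _

theorem homotopic_of_cat {u : U} {a b a' b' : QSet 5} {h : u.1 = a} {h' : u.1 = a'}
    {γ : Path a b} {γ' : Path a' b'} (e : cat u h (.mk γ) = cat u h' (.mk γ')) :
    ContinuousMap.HomotopicRel (γ : C(unitInterval, QSet 5)) γ' {0, 1} := by
  subst h h'
  obtain rfl : b = b' := congrArg U.fst e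
  have e2 : u.2.trans (.mk γ) = u.2.trans (.mk γ') := eq_of_heq (U.mk.inj e).2
  have e3 := congrArg u.2.symm.trans e2
  rw [← Quotient.trans_assoc, ← Quotient.trans_assoc, Quotient.symm_trans, Quotient.refl_trans,
    Quotient.refl_trans] at e3
  exact Path.Homotopic.Quotient.eq.mp e3

theorem Reach.unique {u : U} {y y' : R0} {l l' : ZMod 6 → ℤ} (h : Reach u y l)
    (h' : Reach u y' l') : y = y' ∧ l = l' := by
  obtain ⟨Γ, rfl⟩ := h
  obtain ⟨Γ', e⟩ := h'
  have h1 := homotopic_of_cat e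
  have h2 := (cov.homotopicRel_iff_comp (f₀ := (Γ'.map covE.continuous : C(unitInterval, R0)))
    (f₁ := (Γ.map covE.continuous : C(unitInterval, R0))) ⟨0, .inl rfl, by simp⟩).mpr h1
  have h3 := (covE.homotopicRel_iff_comp (f₀ := (Γ' : C(unitInterval, E)))
    (f₁ := (Γ : C(unitInterval, E))) ⟨0, .inl rfl, by simp⟩).mpr h2
  obtain ⟨H⟩ := h3
  have h4 : Γ' 1 = Γ 1 := (H.eq_fst 0 (.inr rfl)).symm.trans (H.eq_snd 0 (.inr rfl))
  rw [Γ.target, Γ'.target] at h4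
  injection h4 with h5 h6
  exact ⟨h5.symm, h6.symm⟩

/-- Inside the star of `z` a lift is continued horizontally. -/
theorem Reach.step {u : U} {y y' : R0} {l : ZMod 6 → ℤ} (h : Reach u y l) {z : Pt} (hz : No3 z)
    (hy : y.1 ∈ N z) (hy' : y'.1 ∈ N z) (h5 : y'.1 5 = y.1 5) :
    Reach (mv y y' u) y' (M z y' (M z y l)) := by
  have hu := h.fst
  obtain ⟨Γ, hΓ⟩ := h
  have hs : ∀ t, Path.segment y.1 y'.1 t ∈ N z := segment_mem hy hy'
  have hR : ∀ t, Path.segment y.1 y'.1 t ∈ expPi ⁻¹' QSet 5 := fun t => by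
    refine mem_R0 (hz.of_mem (hs t)) ?_
    obtain ⟨m, hm⟩ := R0_last y
    refine ⟨m, ?_⟩
    rw [Path.segment_apply]
    simp [AffineMap.lineMap_apply, h5, hm]
  let Δ : Path (mkE y l) (mkE y' (M z y' (M z y l))) :=
    { toFun := fun t => mkE ⟨_, hR t⟩ (M z (Path.segment y.1 y'.1 t) (M z y l))
      continuous_toFun := continuous_horizontal (f := fun t => ⟨_, hR t⟩) (by fun_prop) hz hs _
      source' := by
        have : (⟨Path.segment y.1 y'.1 0, hR 0⟩ : R0) = y := Subtype.ext (by simp)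
        rw [this, Path.source, M_M]
      target' := by
        have : (⟨Path.segment y.1 y'.1 1, hR 1⟩ : R0) = y' := Subtype.ext (by simp)
        rw [this, Path.target] }
  refine ⟨Γ.trans Δ, ?_⟩
  rw [mv_path hz (Path.segment y.1 y'.1) hs (fun t => hz.of_mem (hs t)) u hu]
  subst hΓ
  have hb : (cat ubase ubase_e0 (.mk (down Γ))).1 = pR (pE (mkE y l)) := rfl
  have e := cat_congr _ hb hu (down Δ) (epath (Path.segment y.1 y'.1) fun t => hz.of_mem (hs t))
    fun t => pR_eq ⟨_, hR t⟩
  rw [← e]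
  refine Eq.trans ?_ (cat_cat ubase ubase_e0 (.mk (down Γ)) hb (.mk (down Δ))).symm
  rw [Quotient.cast_rfl_rfl, ← Quotient.mk_trans]
  refine cat_congr _ _ _ _ _ fun t => ?_
  rw [down_apply, Path.trans_apply, Path.trans_apply]
  split_ifs <;> rfl

/-- The end of the lift of a path class. -/
def yU (u : U) : R0 := (exists_reach u).choose

/-- The state at the end of the lift of a path class. -/
def lU (u : U) : ZMod 6 → ℤ := (exists_reach u).choose_spec.choose

theorem reach_U (u : U) : Reach u (yU u) (lU u) := (exists_reach u).choose_spec.choose_spec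

theorem Reach.eq {u : U} {y : R0} {l : ZMod 6 → ℤ} (h : Reach u y l) : yU u = y ∧ lU u = l :=
  (reach_U u).unique h

/-- The rotation comparing the label of a chamber to the order of its lift. -/
def cV (w : V) : ZMod 6 := w.1.1 0 - (nn (yU w.1.2) 0 : ZMod 6)

/-- The state of the numbers game at a chamber. -/
def lev (w : V) (t : ZMod 6) : ℤ := lU w.1.2 (t - cV w)

theorem rep_V (w : V) : Rep (nn (yU w.1.2)) w.1.1 ∧
    ∀ i, (yU w.1.2).1 i - (yU w.1.2).1 5 = six (nn (yU w.1.2)) i - six (nn (yU w.1.2)) 5 :=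
  rep_of_Ept (R0_no3 _) (w.2.symm.trans (reach_U _).fst)

theorem cV_eq {w : V} {n : Fin 6 → ℤ} {c : ZMod 6} (hn : nn (yU w.1.2) = n)
    (h : ∀ i, (n i : ZMod 6) + c = w.1.1 i) : cV w = c := by
  rw [cV, hn, ← h]; ring

theorem lev_base (t : ZMod 6) : lev wbase t = 1 := by
  have : lU ubase = fun _ => 1 := Reach.base.eq.2
  show lU ubase _ = 1
  rw [this]

theorem lev_rot (w : V) (t : ZMod 6) : lev (rV w) (t + 1) = lev w t := by
  have : cV (rV w) = cV w + 1 := by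
    show w.1.1 0 + 1 - _ = w.1.1 0 - _ + 1
    exact add_sub_right_comm _ _ _
  rw [lev, this, add_sub_add_right_eq_sub]
  rfl

theorem half_tie {n : Fin 6 → ℤ} {v : Lab} (h : Rep n v) (t : ZMod 6) {i j : Fin 6} (hij : i ≠ j)
    {m : ℤ} (hm : half n (fun i => d1 t (v i)) i - half n (fun i => d1 t (v i)) j = m) :
    (v i = t ∧ v j = t + 1 ∧ n i - n j = 6 * m - 1) ∨
      (v i = t + 1 ∧ v j = t ∧ n i - n j = 6 * m + 1) := by
  obtain ⟨k, hk⟩ := h.sub i j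
  simp only [half] at hm
  have h1 : (2 * (n i - n j) + d1 t (v i) - d1 t (v j) : ℝ) = 12 * m := by linarith
  have h2 : 2 * (n i - n j) + d1 t (v i) - d1 t (v j) = 12 * m := by exact_mod_cast h1
  have h3 : (2 * (v i - v j).val + d1 t (v i) - d1 t (v j)) % 12 = 0 := by omega
  have h4 : ∀ t p p' : ZMod 6, p ≠ p' → (2 * (p - p').val + d1 t p - d1 t p') % 12 = 0 →
      (p = t ∧ p' = t + 1 ∧ d1 t p - d1 t p' = 2) ∨
        (p = t + 1 ∧ p' = t ∧ d1 t p - d1 t p' = -2) := by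
    decide
  rcases h4 t _ _ (v.injective.ne hij) h3 with ⟨a, b, c⟩ | ⟨a, b, c⟩
  · exact .inl ⟨a, b, by omega⟩
  · exact .inr ⟨a, b, by omega⟩

/-- Crossing a wall fires the place of the pair that is exchanged. -/
theorem M_half {y y' : Pt} {n : Fin 6 → ℤ} {v : Lab} {c t : ZMod 6}
    (hc : ∀ i, (n i : ZMod 6) + c = v i) (hn : nn y = n) (hn' : nn y' = fun i => n i + d1 t (v i))
    (hy : ∀ i j, y i - y j = six n i - six n j)
    (hy' : ∀ i j, y' i - y' j = six (fun i => n i + d1 t (v i)) i -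
      six (fun i => n i + d1 t (v i)) j)
    (hm : y ∈ N (half n fun i => d1 t (v i))) (hm' : y' ∈ N (half n fun i => d1 t (v i)))
    (l : ZMod 6 → ℤ) : M (half n fun i => d1 t (v i)) y' (M (half n fun i => d1 t (v i)) y l) =
      fire (t - c) l := by
  have hr : Rep n v := ⟨c, hc⟩
  have hz := no3_half1 hr t
  obtain ⟨a, rfl⟩ := v.surjective t
  obtain ⟨b, hb⟩ := v.surjective (v a + 1)
  have hab : a ≠ b := by
    rintro rfl
    exact (by decide : ∀ s : ZMod 6, s ≠ s + 1) _ hb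
  have hd : d1 (v a) (v a) = 1 ∧ d1 (v a) (v a + 1) = -1 :=
    (by decide : ∀ s : ZMod 6, d1 s s = 1 ∧ d1 s (s + 1) = -1) _
  have hna : (n a : ZMod 6) = v a - c := eq_sub_of_add_eq (hc a)
  have hnb : (n b : ZMod 6) = v a - c + 1 := by
    rw [eq_sub_of_add_eq (hc b), hb]; ring
  obtain ⟨k, hk⟩ : ∃ k : ℤ, n a - n b = 6 * k - 1 := by
    have : ((n a - n b + 1 : ℤ) : ZMod 6) = 0 := by push_cast; rw [hna, hnb]; ring
    rw [ZMod.intCast_zmod_eq_zero_iff_dvd] at this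
    obtain ⟨k, hk⟩ := this
    exact ⟨k, by push_cast at hk; linarith⟩
  have hkR : (n a - n b : ℝ) = 6 * k - 1 := by exact_mod_cast hk
  have hzk : half n (fun i => d1 (v a) (v i)) a - half n (fun i => d1 (v a) (v i)) b = k := by
    simp only [half, hb, hd.1, hd.2]
    push_cast
    linarith
  have hya : y a - y b < k := by
    rw [hy]; simp only [six]; linarith
  have hya' : k < y' a - y' b := by
    rw [hy']; simp only [six, hb, hd.1, hd.2]; push_cast; linarith
  generalize hzz : (half n fun i => d1 (v a) (v i)) = z at *
  have key : ∀ {i j}, i ≠ j → ∀ m : ℤ, z i - z j = m → (i = a ∧ j = b) ∨ (i = b ∧ j = a) := by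
    intro i j hij m hm
    rw [← hzz] at hm
    rcases half_tie hr (v a) hij hm with ⟨h1, h2, -⟩ | ⟨h1, h2, -⟩
    · exact .inl ⟨v.injective h1, v.injective (h2.trans hb.symm)⟩
    · exact .inr ⟨v.injective (h1.trans hb.symm), v.injective h2⟩
  have hz' : z b - z a = ((-k : ℤ) : ℝ) := by push_cast; linarith
  rcases hab.lt_or_gt with hlt | hlt
  · have hcr : Cr z y a b := ⟨hlt, k, hzk, hya⟩
    have e1 : Ty z y' = ∅ := by
      rw [Set.eq_empty_iff_forall_notMem]
      rintro s ⟨i, j, ⟨hij, m, h1, h2⟩, -⟩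
      rcases key hij.ne m h1 with ⟨rfl, rfl⟩ | ⟨rfl, rfl⟩
      · rw [← h1, hzk] at h2; exact lt_asymm h2 hya'
      · exact lt_asymm hij hlt
    have e2 : Ty z y = {v a - c} := by
      have hs : (nn z b : ZMod 6) = v a - c := by
        have h3 := (nn_cr hz hm hcr).2
        rw [hn] at h3
        have h4 : nn z b = n b - 1 := by omega
        rw [h4]; push_cast; rw [hnb]; ring
      ext s
      constructor
      · rintro ⟨i, j, ⟨hij, m, h1, h2⟩, rfl⟩
        rcases key hij.ne m h1 with ⟨rfl, rfl⟩ | ⟨rfl, rfl⟩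
        · exact hs
        · exact absurd hij (lt_asymm hlt)
      · rintro rfl
        exact ⟨a, b, hcr, hs⟩
    rw [M, M, e1, e2, MS_empty, MS_singleton]
  · have hcr : Cr z y' b a := ⟨hlt, -k, hz', by push_cast; linarith⟩
    have e1 : Ty z y = ∅ := by
      rw [Set.eq_empty_iff_forall_notMem]
      rintro s ⟨i, j, ⟨hij, m, h1, h2⟩, -⟩
      rcases key hij.ne m h1 with ⟨rfl, rfl⟩ | ⟨rfl, rfl⟩
      · exact lt_asymm hij hlt
      · rw [← h1, hz'] at h2; push_cast at h2; linarith
    have e2 : Ty z y' = {v a - c} := by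
      have hs : (nn z a : ZMod 6) = v a - c := by
        have h3 := (nn_cr hz hm' hcr).2
        rw [hn'] at h3
        simp only [hd.1] at h3
        have h4 : nn z a = n a := by omega
        rw [h4, hna]
      ext s
      constructor
      · rintro ⟨i, j, ⟨hij, m, h1, h2⟩, rfl⟩
        rcases key hij.ne m h1 with ⟨rfl, rfl⟩ | ⟨rfl, rfl⟩
        · exact absurd hij (lt_asymm hlt)
        · exact hs
      · rintro rfl
        exact ⟨b, a, hcr, hs⟩
    rw [M, M, e1, e2, MS_empty, MS_singleton]

theorem sum_d1 (v : Lab) (t : ZMod 6) : ∑ i, d1 t (v i) = 0 := by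
  rw [Equiv.sum_comp v (d1 t)]
  revert t
  decide

theorem lev_s (t : ZMod 6) (w : V) : lev (sV t w) = fire t (lev w) := by
  obtain ⟨hr, h5⟩ := rep_V w
  set Y := yU w.1.2 with hY
  set n := nn Y.1 with hn
  obtain ⟨c, hc⟩ := id hr
  set n' : Fin 6 → ℤ := fun i => n i + d1 t (w.1.1 i) with hn'
  set z : Pt := half n fun i => d1 t (w.1.1 i) with hzdef
  have hz : No3 z := no3_half1 hr t
  -- the lift of the neighbouring chamber, with the same last coordinate
  let k : ℝ := Y.1 5 - six n 5
  let k' : ℝ := Y.1 5 - six n' 5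
  have e1 : Y.1 = fun i => six n i + k := by
    funext i; have := h5 i; simp only [k]; linarith
  have hm : Y.1 ∈ N z := by rw [e1]; exact mem_N_const (mem_half1 hr t) k
  have hm' : (fun i => six n' i + k') ∈ N z := mem_N_const (mem_half1' hr t) k'
  have hlast : six n' 5 + k' = Y.1 5 := by simp [k']
  let Y' : R0 := ⟨fun i => six n' i + k', mem_R0 (hz.of_mem hm') (by
    obtain ⟨m, hm⟩ := R0_last Y
    exact ⟨m, hlast.trans hm⟩)⟩
  have hstep := (reach_U w.1.2).step (y' := Y') hz hm hm' hlast
  have hmv : mv Y Y' w.1.2 = (sV t w).1.2 := by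
    rw [sV_eq t w hr]
    have := mv_shift (near_step hr t) (d := fun _ => k) (d' := fun _ => k')
      (fun i => ⟨0, by simp⟩) (k' - k) (fun i => by ring) w.1.2
    rw [← this, e1]
    rfl
  rw [← hY, hmv] at hstep
  have hnY' : nn Y'.1 = n' := by
    rw [nn_congr (y := six n') fun i j => by simp [Y']]
    refine nn_six (hr.step t).dist ?_
    rw [hn', Finset.sum_add_distrib, sum_d1, hn, sum_nn, add_zero]
  rw [M_half hc hn.symm hnY' (fun i j => by linarith [h5 i, h5 j])
    (fun i j => by simp [Y', n']) hm hm'] at hstep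
  obtain ⟨q1, q2⟩ := hstep.eq
  have hcw : cV w = c := cV_eq hn.symm hc
  have hcw' : cV (sV t w) = c := by
    refine cV_eq (n := n') (by rw [q1, hnY']) fun i => ?_
    show _ = Equiv.swap t (t + 1) (w.1.1 i)
    rw [swap_d1, hn']
    push_cast
    linear_combination hc i
  funext u
  rw [lev, hcw', q2]
  have := fire_shift t c (u - c) (lev w)
  rw [sub_add_cancel] at this
  rw [this]
  congr 1
  funext s
  rw [lev, hcw, add_sub_cancel_right]

end Cfg

namespace Cfg

/-- The twin system of the configuration space. -/
def system : TwinSystem (FundamentalGroup (QSet 5) (Qbase 5)) V where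
  s := sV
  rot := rV
  lab w := w.1.1
  lev := lev
  base := wbase
  s_s := sV_sV
  s_comm2 t w := sV_comm t 2 (.inl rfl) w
  s_comm3 t w := sV_comm t 3 (.inr rfl) w
  rot_s := rV_sV
  rot6 := rV6
  s_smul _ g _ := V_ext rfl (mv_smul g _ _ _)
  rot_smul _ _ := rfl
  lab_smul _ _ := rfl
  lab_s _ _ := rfl
  lab_rot _ := rfl
  free := V_free
  lev_s := lev_s
  lev_rot t w := lev_rot w t
  lev_base := funext lev_base
  conn := conn

end Cfg

/-- The second group homology of the pure round twin group `Π₆ = π₁(Q₆, q₀)`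
with coefficients in the trivial module `ℤ` is a free abelian group of rank 14:
`H₂(Π₆; ℤ) ≅ ℤ¹⁴`. (Here `Q₆ = QSet 5`.) -/
theorem second_homology_pure_round_twin_six :
    Nonempty (GroupHomology2 (FundamentalGroup (QSet 5) (Qbase 5)) ≃+ (Fin 14 → ℤ)) := by
  obtain ⟨e⟩ := TwinSystem.homology Cfg.system
  obtain ⟨f⟩ := Z2_equiv
  exact ⟨e.trans f⟩
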